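/- arXiv:2008.07213 — 2 statements merged into one kernel-verified Lean document; each statement's English description precedes it below -/
import Mathlib

section
/- Let ℓ be a prime and e, r positive integers with r | e | (ℓ−1). Then |Irr(G(e,r,ℓ))| − z(k G(e,r,ℓ)) = eℓ/r, where z denotes the number of ℓ-defect-zero irreducible characters. -/
open CategoryTheory

/-- `χ : G → ℂ` is the character of an irreducible complex representation of `G`. -/
def IsIrrChar (G : Type) [Group G] (χ : G → ℂ) : Prop :=
  ∃ V : FDRep ℂ G, Simple V ∧ χ = fun g => FDRep.character V g

/-- `χ` is an irreducible character of `G` of `ℓ`-defect zero, i.e. `ℓ ∤ |G|/χ(1)`. -/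
def IsDefectZeroChar (ℓ : ℕ) (G : Type) [Group G] (χ : G → ℂ) : Prop :=
  IsIrrChar G χ ∧ ∃ d : ℕ, χ 1 = (d : ℂ) ∧ ¬ (ℓ ∣ Nat.card G / d)

/-- The number of irreducible complex characters of `G`. -/
noncomputable def numIrr (G : Type) [Group G] : ℕ :=
  Nat.card {χ : G → ℂ // IsIrrChar G χ}

/-- The number of irreducible complex characters of `G` of `ℓ`-defect zero. -/
noncomputable def numDefectZero (ℓ : ℕ) (G : Type) [Group G] : ℕ :=
  Nat.card {χ : G → ℂ // IsDefectZeroChar ℓ G χ}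

/-- The action of `S_n` on the base group `Fin n → A` of a wreath product. -/
def wreathAct (n : ℕ) (A : Type) [Group A] :
    Equiv.Perm (Fin n) →* MulAut (Fin n → A) where
  toFun σ :=
    { toFun := fun f => f ∘ σ.symm
      invFun := fun f => f ∘ σ
      left_inv := fun f => by ext i; simp
      right_inv := fun f => by ext i; simp
      map_mul' := fun f g => rfl }
  map_one' := by ext f i; rfl
  map_mul' := fun σ τ => by ext f i; rfl

/-- The wreath product `A ≀ S_n`. -/
abbrev Wreath (A : Type) [Group A] (n : ℕ) : Type :=
  (Fin n → A) ⋊[wreathAct n A] Equiv.Perm (Fin n)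

/-- The imprimitive complex reflection group `G(e,r,n)`, realised as the group of
monomial `n × n` matrices (encoded as pairs of a diagonal part and a permutation)
whose nonzero entries are `e`-th roots of unity with product an `(e/r)`-th root of
unity. -/
def Gerr (A : Type) [CommGroup A] (e r n : ℕ) : Subgroup (Wreath A n) where
  carrier := {x | (∀ i, x.left i ^ e = 1) ∧ (∏ i, x.left i) ^ (e / r) = 1}
  one_mem' := by
    constructor
    · intro i; simp [SemidirectProduct.one_left]
    · simp [SemidirectProduct.one_left]
  mul_mem' := by
    rintro x y ⟨hx1, hx2⟩ ⟨hy1, hy2⟩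
    have hl : (x * y).left = fun i => x.left i * y.left (x.right.symm i) := rfl
    constructor
    · intro i
      rw [hl]
      simp only [mul_pow, hx1 i, hy1 _, mul_one]
    · rw [hl]
      rw [Finset.prod_mul_distrib]
      have : (∏ i, y.left (x.right.symm i)) = ∏ i, y.left i :=
        Equiv.prod_comp x.right.symm y.left
      rw [this, mul_pow, hx2, hy2, mul_one]
  inv_mem' := by
    rintro x ⟨hx1, hx2⟩
    constructor
    · intro i
      have h : (x⁻¹).left i = (x.left (x.right i))⁻¹ := rfl
      rw [h, inv_pow, hx1, inv_one]
    · have hb : (∏ i, (x⁻¹).left i) = ∏ i, (x.left (x.right i))⁻¹ :=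
        Finset.prod_congr rfl fun i _ => rfl
      have hc : (∏ i, (x.left (x.right i))⁻¹) = (∏ i, x.left i)⁻¹ := by
        rw [Equiv.prod_comp x.right fun i => (x.left i)⁻¹, ← Finset.prod_inv_distrib]
      rw [hb, hc, inv_pow, hx2, inv_one]

/-!
Let `x` be an `ℓ`-cycle in `G = G(e,r,ℓ)`. As `x` is conjugate to all its nontrivial powers, every
irreducible character satisfies `χ(1) ≡ χ(x)` modulo `ℓ` as soon as `χ(x)` is an integer; and as
`ℓ²` does not divide `|G|`, `χ` has defect zero if and only if `ℓ` divides `χ(1)`. The exterior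
powers `⋀ᵏ V`, `k < ℓ`, of the standard representation `V` of `S_ℓ`, inflated to `G` and multiplied
by the `e/r` powers of the product-of-entries character, give `ℓ(e/r)` distinct irreducible
characters with values `±1` at `x`. The centralizer of `x` has order at most `ℓ(e/r)`, so column
orthogonality forces every other irreducible character to vanish at `x`.

The representations `⋀ᵏ V` are irreducible because the permutation representation `P = V ⊕ 1`
satisfies `⋀ᵏ⁺¹ P = ⋀ᵏ⁺¹ V ⊕ ⋀ᵏ V`, and the character of `⋀ᵏ⁺¹ P`, computed as a sum of minors of
permutation matrices, has norm at most `2`.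
-/

open Finset
open scoped ComplexConjugate

theorem exists_eigenbasis_of_pow_eq_one {V : Type*} [AddCommGroup V] [Module ℂ V]
    [FiniteDimensional ℂ V] {f : Module.End ℂ V} {n : ℕ} (hn : n ≠ 0) (hf : f ^ n = 1) :
    ∃ (ι : Type) (_ : Fintype ι) (b : Module.Basis ι ℂ V) (μ : ι → ℂ),
      (∀ i, μ i ^ n = 1) ∧ ∀ i, f (b i) = μ i • b i := by
  classical
  have hsep : Squarefree (Polynomial.X ^ n - 1 : Polynomial ℂ) :=
    (Polynomial.separable_X_pow_sub_C 1 (by exact_mod_cast hn) one_ne_zero).squarefree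
  have hss : f.IsSemisimple :=
    Module.End.isSemisimple_of_squarefree_aeval_eq_zero hsep (by simp [hf])
  have hint : DirectSum.IsInternal f.eigenspace :=
    DirectSum.isInternal_submodule_of_iSupIndep_of_iSup_eq_top
      f.eigenspaces_iSupIndep hss.iSup_eigenspace_eq_top
  let b := hint.collectedBasis fun μ => Module.finBasis ℂ (f.eigenspace μ)
  have hb (i) : f.HasEigenvector i.1 (b i) := ⟨hint.collectedBasis_mem _ i, b.ne_zero i⟩
  refine ⟨_, FiniteDimensional.fintypeBasisIndex b, b, Sigma.fst, fun i => ?_,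
    fun i => (hb i).apply_eq_smul⟩
  have hpow : (i.1 ^ n) • b i = (1 : ℂ) • b i := by
    rw [← (hb i).pow_apply, hf, one_smul, Module.End.one_apply]
  exact smul_left_injective ℂ (b.ne_zero i) hpow

theorem trace_eq_sum_of_apply_basis_eq_smul {R M ι : Type*} [CommRing R] [AddCommGroup M]
    [Module R M] [Fintype ι] (b : Module.Basis ι R M) {f : M →ₗ[R] M} {μ : ι → R}
    (h : ∀ i, f (b i) = μ i • b i) : LinearMap.trace R M f = ∑ i, μ i := by
  classical
  rw [LinearMap.trace_eq_matrix_trace R b]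
  exact Finset.sum_congr rfl fun i _ => by simp [LinearMap.toMatrix_apply, h]

section Character

variable {G : Type} [Group G]

theorem exists_eigenbasis [Finite G] (V : FDRep ℂ G) (g : G) :
    ∃ (ι : Type) (_ : Fintype ι) (b : Module.Basis ι ℂ V) (μ : ι → ℂ),
      (∀ i, μ i ^ Nat.card G = 1) ∧ ∀ i, V.ρ g (b i) = μ i • b i :=
  exists_eigenbasis_of_pow_eq_one Nat.card_pos.ne' (by rw [← map_pow, pow_card_eq_one', map_one])

theorem character_isIntegral [Finite G] (V : FDRep ℂ G) (g : G) :
    IsIntegral ℤ (V.character g) := by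
  obtain ⟨ι, _, b, μ, hμ, hb⟩ := exists_eigenbasis V g
  have htr : V.character g = ∑ i, μ i := trace_eq_sum_of_apply_basis_eq_smul b hb
  rw [htr]
  exact IsIntegral.sum _ fun i _ =>
    IsIntegral.of_pow Nat.card_pos (by rw [hμ i]; exact isIntegral_one)

theorem character_inv [Finite G] (V : FDRep ℂ G) (g : G) :
    V.character g⁻¹ = conj (V.character g) := by
  obtain ⟨ι, _, b, μ, hμ, hb⟩ := exists_eigenbasis V g
  have hnorm (i : ι) : ‖μ i‖ = 1 := Complex.norm_eq_one_of_pow_eq_one (hμ i) Nat.card_pos.ne'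
  have hμ0 (i : ι) : μ i ≠ 0 := fun h => by simpa [h] using hnorm i
  have hb_inv (i : ι) : V.ρ g⁻¹ (b i) = (μ i)⁻¹ • b i := by
    rw [eq_inv_smul_iff₀ (hμ0 i), ← map_smul, ← hb i, Representation.inv_self_apply]
  have htr : V.character g = ∑ i, μ i := trace_eq_sum_of_apply_basis_eq_smul b hb
  have htr_inv : V.character g⁻¹ = ∑ i, (μ i)⁻¹ := trace_eq_sum_of_apply_basis_eq_smul b hb_inv
  rw [htr, htr_inv, map_sum]
  exact Finset.sum_congr rfl fun i _ => Complex.inv_eq_conj (hnorm i)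

theorem sum_character_mul_conj [Fintype G] (V W : FDRep ℂ G) :
    ∑ g, W.character g * conj (V.character g) =
      (Fintype.card G * Module.finrank ℂ (V ⟶ W) : ℂ) := by
  have hG : (Nat.card G : ℂ) ≠ 0 := Nat.cast_ne_zero.mpr Nat.card_pos.ne'
  have := invertibleOfNonzero hG
  rw [← FDRep.scalar_product_char_eq_finrank_equivariant, Fintype.card_eq_nat_card,
    mul_inv_cancel_left₀ hG]
  simp_rw [character_inv]

theorem sum_mul_eq_card_mul_finrank [Fintype G] {φ ψ : G → ℤ}
    {V V' W W' : FDRep ℂ G} (hφ : ∀ g, (φ g : ℂ) = V.character g + V'.character g)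
    (hψ : ∀ g, (ψ g : ℂ) = W.character g + W'.character g) :
    ∑ g, ψ g * φ g = Fintype.card G *
      (Module.finrank ℂ (V ⟶ W) + Module.finrank ℂ (V ⟶ W') +
        Module.finrank ℂ (V' ⟶ W) + Module.finrank ℂ (V' ⟶ W') : ℤ) := by
  have hterm (g : G) : (ψ g * φ g : ℂ) =
      W.character g * conj (V.character g) + W'.character g * conj (V.character g) +
        W.character g * conj (V'.character g) + W'.character g * conj (V'.character g) := by
    rw [← map_intCast (starRingEnd ℂ) (φ g), hφ, hψ, map_add]
    ring
  rw [← Int.cast_inj (α := ℂ)]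
  push_cast
  simp only [hterm, sum_add_distrib, sum_character_mul_conj, mul_add]

theorem simple_iff_finrank_end_eq_one [Finite G] (V : FDRep ℂ G) :
    Simple V ↔ Module.finrank ℂ (V ⟶ V) = 1 := by
  have : NeZero (Nat.card G : ℂ) := ⟨Nat.cast_ne_zero.mpr Nat.card_pos.ne'⟩
  exact FDRep.simple_iff_end_is_rank_one V

theorem simple_iff_sum_character_mul_conj [Fintype G] (V : FDRep ℂ G) :
    Simple V ↔ ∑ g, V.character g * conj (V.character g) = (Fintype.card G : ℂ) := by
  rw [simple_iff_finrank_end_eq_one, sum_character_mul_conj, mul_eq_left₀ (by simp)]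
  norm_cast

theorem IsIrrChar.conj_invariant {χ : G → ℂ} (hχ : IsIrrChar G χ) {g h : G} (hgh : IsConj g h) :
    χ g = χ h := by
  obtain ⟨V, -, rfl⟩ := hχ
  obtain ⟨x, rfl⟩ := isConj_iff.mp hgh
  exact (V.char_conj g x).symm

theorem IsIrrChar.sum_mul_conj_self [Fintype G] {χ : G → ℂ} (hχ : IsIrrChar G χ) :
    ∑ g, χ g * conj (χ g) = (Fintype.card G : ℂ) := by
  obtain ⟨V, hV, rfl⟩ := hχ
  exact (simple_iff_sum_character_mul_conj V).mp hV

theorem IsIrrChar.sum_mul_conj_of_ne [Fintype G] {χ φ : G → ℂ} (hχ : IsIrrChar G χ)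
    (hφ : IsIrrChar G φ) (h : χ ≠ φ) : ∑ g, χ g * conj (φ g) = 0 := by
  obtain ⟨V, hV, rfl⟩ := hχ
  obtain ⟨W, hW, rfl⟩ := hφ
  have hWV : ¬ Nonempty (W ≅ V) := fun ⟨i⟩ => h (FDRep.char_iso i).symm
  rw [sum_character_mul_conj, FDRep.finrank_hom_simple_simple, if_neg hWV, Nat.cast_zero,
    mul_zero]

theorem ncard_isConj_mul_card_centralizer (c : G) :
    {g | IsConj c g}.ncard * Nat.card (Subgroup.centralizer {c}) = Nat.card G := by
  have horbit : {g | IsConj c g} = MulAction.orbit (ConjAct G) c :=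
    Set.ext fun g => by rw [ConjAct.mem_orbit_conjAct, isConj_comm]; rfl
  rw [Subgroup.nat_card_centralizer_nat_card_stabilizer, horbit, ← MulAction.index_stabilizer]
  exact Subgroup.index_mul_card _

theorem sum_norm_sq_sum_smul [Fintype G] {T : Finset (G → ℂ)} (hT : ∀ χ ∈ T, IsIrrChar G χ)
    (a : (G → ℂ) → ℂ) :
    ∑ g, ‖∑ χ ∈ T, a χ * χ g‖ ^ 2 = Fintype.card G * ∑ χ ∈ T, ‖a χ‖ ^ 2 := by
  have horth (χ) (hχ : χ ∈ T) (φ) (hφ : φ ∈ T) : ∑ g, (a χ * χ g) * conj (a φ * φ g) =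
      if χ = φ then (Fintype.card G * ‖a χ‖ ^ 2 : ℂ) else 0 := by
    have hpull : ∑ g, (a χ * χ g) * conj (a φ * φ g) =
        a χ * conj (a φ) * ∑ g, χ g * conj (φ g) := by
      simp_rw [mul_sum, map_mul, mul_mul_mul_comm]
    rw [hpull]
    split_ifs with h
    · subst h
      rw [(hT χ hχ).sum_mul_conj_self, Complex.mul_conj', mul_comm]
    · rw [(hT χ hχ).sum_mul_conj_of_ne (hT φ hφ) h, mul_zero]
  apply Complex.ofReal_injective
  push_cast
  simp_rw [← Complex.mul_conj', map_sum, sum_mul_sum]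
  rw [sum_comm, mul_sum]
  refine sum_congr rfl fun χ hχ => ?_
  rw [sum_comm, sum_congr rfl (horth χ hχ), sum_ite_eq, if_pos hχ, Complex.mul_conj']

/-- Pairing the class function `∑ conj (χ c) • χ` with itself and keeping only its values
on the class of `c` bounds the square of the left-hand side. -/
theorem sum_norm_sq_le_card_centralizer [Finite G] {T : Finset (G → ℂ)}
    (hT : ∀ χ ∈ T, IsIrrChar G χ) (c : G) :
    ∑ χ ∈ T, ‖χ c‖ ^ 2 ≤ Nat.card (Subgroup.centralizer {c}) := by
  classical
  have := Fintype.ofFinite G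
  set S : ℝ := ∑ χ ∈ T, ‖χ c‖ ^ 2
  let u (g : G) : ℂ := ∑ χ ∈ T, conj (χ c) * χ g
  let C : Finset G := {g | IsConj c g}
  have hu (g) (hg : g ∈ C) : ‖u g‖ = S := by
    have hcg : IsConj c g := by simpa [C] using hg
    have : u g = S := by
      simp only [u, S, Complex.ofReal_sum]
      refine sum_congr rfl fun χ hχ => ?_
      rw [← (hT χ hχ).conj_invariant hcg, Complex.conj_mul', Complex.ofReal_pow]
    rw [this, Complex.norm_real, Real.norm_of_nonneg (by positivity)]
  have hle : #C * S ^ 2 ≤ Fintype.card G * S := calc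
    #C * S ^ 2 = ∑ g ∈ C, ‖u g‖ ^ 2 := by
      rw [sum_congr rfl fun g hg => by rw [hu g hg], sum_const, nsmul_eq_mul]
    _ ≤ ∑ g, ‖u g‖ ^ 2 := sum_le_univ_sum_of_nonneg fun g => by positivity
    _ = Fintype.card G * S := by simp [u, S, sum_norm_sq_sum_smul hT]
  have hC : (#C * Nat.card (Subgroup.centralizer {c}) : ℝ) = Fintype.card G := by
    rw [Fintype.card_eq_nat_card, ← ncard_isConj_mul_card_centralizer c, ← Set.ncard_coe_finset,
      coe_filter_univ, Nat.cast_mul]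
  have hCpos : (0 : ℝ) < #C := by
    exact_mod_cast card_pos.mpr ⟨c, mem_filter_univ c |>.mpr (IsConj.refl c)⟩
  rcases (show 0 ≤ S by positivity).eq_or_lt with hS | hS
  · rw [← hS]; positivity
  · rw [← hC] at hle
    have : #C * S * S ≤ #C * S * Nat.card (Subgroup.centralizer {c}) := by linarith
    exact le_of_mul_le_mul_left this (by positivity)

theorem exists_eq_smul_id_of_commute (V : FDRep ℂ G) [Simple V] {f : V →ₗ[ℂ] V}
    (hf : ∀ g, f ∘ₗ V.ρ g = V.ρ g ∘ₗ f) : ∃ c : ℂ, f = c • LinearMap.id := by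
  let F : V ⟶ V := ⟨InducedCategory.homMk (ModuleCat.ofHom f), fun g => by ext1; exact hf g⟩
  obtain ⟨c, hc⟩ := (finrank_eq_one_iff_of_nonzero' (𝟙 V) (id_nonzero V)).mp
    (finrank_endomorphism_simple_eq_one ℂ V) F
  exact ⟨c, (congrArg (fun q : V ⟶ V => q.hom.hom.hom) hc).symm⟩

theorem sum_character_inv_smul_eq (V : FDRep ℂ G) [Fintype G] [Simple V] :
    ∃ c : ℂ, ∑ g, V.character g⁻¹ • V.ρ g = c • LinearMap.id ∧
      c * Module.finrank ℂ V = Fintype.card G := by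
  have hcomm (h : G) : (∑ g, V.character g⁻¹ • V.ρ g) * V.ρ h =
      V.ρ h * ∑ g, V.character g⁻¹ • V.ρ g := by
    rw [sum_mul, mul_sum]
    refine Fintype.sum_equiv (MulAut.conj h⁻¹).toEquiv _ _ fun g => ?_
    have hchar : V.character (h⁻¹ * (g⁻¹ * h)) = V.character g⁻¹ := by
      simpa [mul_assoc] using V.char_conj g⁻¹ h⁻¹
    rw [smul_mul_assoc, mul_smul_comm, ← map_mul, ← map_mul]
    simp [hchar, mul_assoc]
  obtain ⟨c, hc⟩ := exists_eq_smul_id_of_commute V hcomm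
  refine ⟨c, hc, ?_⟩
  have htr := congrArg (LinearMap.trace ℂ V) hc
  rw [map_smul, LinearMap.trace_id, smul_eq_mul, map_sum] at htr
  rw [← htr, ← (simple_iff_sum_character_mul_conj V).mp inferInstance]
  refine sum_congr rfl fun g _ => ?_
  rw [map_smul, smul_eq_mul, character_inv, mul_comm]
  rfl

theorem isIntegral_of_sum_smul_eq_smul_id [Fintype G] {V : Type*} [AddCommGroup V] [Module ℂ V]
    [Nontrivial V] (ρ : Representation ℂ G V) {a : G → ℂ} (ha : ∀ g, IsIntegral ℤ (a g)) {c : ℂ}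
    (hc : ∑ g, a g • ρ g = c • LinearMap.id) : IsIntegral ℤ c := by
  let A := integralClosure ℤ ℂ
  let L : MonoidAlgebra A G →ₐ[A] Module.End ℂ V := MonoidAlgebra.lift A _ G ρ
  let z : MonoidAlgebra A G := ∑ g, MonoidAlgebra.single g ⟨a g, ha g⟩
  have hLz : L z = algebraMap ℂ (Module.End ℂ V) c := by
    simp only [L, z, map_sum, MonoidAlgebra.lift_single]
    exact hc
  have hint : IsIntegral A (algebraMap ℂ (Module.End ℂ V) c) :=
    hLz ▸ (IsIntegral.of_finite A z).map L
  exact isIntegral_trans (A := A) c <| (isIntegral_algebraMap_iff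
    (FaithfulSMul.algebraMap_injective ℂ (Module.End ℂ V))).mp hint

theorem natCast_dvd_natCast_of_isIntegral {c : ℂ} (hc : IsIntegral ℤ c) {d n : ℕ}
    (hn : n ≠ 0) (h : c * d = n) : d ∣ n := by
  have hd : (d : ℂ) ≠ 0 := by
    intro hd
    rw [hd, mul_zero] at h
    exact hn (by exact_mod_cast h.symm)
  have hcq : c = algebraMap ℚ ℂ (n / d) := by
    rw [map_div₀, map_natCast, map_natCast, eq_div_iff hd, h]
  rw [hcq, isIntegral_algebraMap_iff (algebraMap ℚ ℂ).injective] at hc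
  obtain ⟨m, hm⟩ := IsIntegrallyClosed.isIntegral_iff.mp hc
  have hmul : (m * d : ℤ) = n := by
    rw [eq_intCast, eq_div_iff (by exact_mod_cast hd)] at hm
    exact_mod_cast hm
  exact Int.natCast_dvd_natCast.mp ⟨m, by rw [← hmul, mul_comm]⟩

theorem finrank_dvd_card [Finite G] (V : FDRep ℂ G) [Simple V] :
    Module.finrank ℂ V ∣ Nat.card G := by
  have := Fintype.ofFinite G
  obtain ⟨c, hc, hmul⟩ := sum_character_inv_smul_eq V
  rw [Fintype.card_eq_nat_card] at hmul
  have hG : (Nat.card G : ℂ) ≠ 0 := Nat.cast_ne_zero.mpr Nat.card_pos.ne'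
  have hV : Module.finrank ℂ V ≠ 0 := fun h => hG (by rw [← hmul, h, Nat.cast_zero, mul_zero])
  have := Module.nontrivial_of_finrank_pos (R := ℂ) (Nat.pos_of_ne_zero hV)
  have hint := isIntegral_of_sum_smul_eq_smul_id V.ρ (fun g => character_isIntegral V g⁻¹) hc
  exact natCast_dvd_natCast_of_isIntegral hint Nat.card_pos.ne' hmul

theorem IsIrrChar.exists_map_one_eq [Finite G] {χ : G → ℂ} (hχ : IsIrrChar G χ) :
    ∃ d : ℕ, χ 1 = d ∧ d ∣ Nat.card G := by
  obtain ⟨V, hV, rfl⟩ := hχ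
  exact ⟨Module.finrank ℂ V, V.char_one, finrank_dvd_card V⟩

theorem finite_setOf_isIrrChar [Finite G] : {χ | IsIrrChar G χ}.Finite := by
  by_contra hinf
  obtain ⟨T, hT, hcard⟩ := Set.Infinite.exists_subset_card_eq hinf
    (Nat.card (Subgroup.centralizer {(1 : G)}) + 1)
  have hle := sum_norm_sq_le_card_centralizer (fun χ hχ => hT hχ) 1
  have hone (χ) (hχ : χ ∈ T) : 1 ≤ ‖χ 1‖ ^ 2 := by
    obtain ⟨d, hd, hdvd⟩ := IsIrrChar.exists_map_one_eq (hT hχ)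
    have hpos : (1 : ℝ) ≤ d := by exact_mod_cast Nat.pos_of_dvd_of_pos hdvd Nat.card_pos
    rw [hd, Complex.norm_natCast]
    exact one_le_pow₀ hpos
  have hcard_le := card_nsmul_le_sum T _ 1 hone
  rw [hcard, nsmul_one] at hcard_le
  have := hcard_le.trans hle
  norm_cast at this
  omega

end Character

section DefectZero

variable {G : Type} [Group G] [Finite G] {ℓ : ℕ} {χ : G → ℂ}

theorem IsIrrChar.exists_sum_zpowers_eq {x : G} (hχ : IsIrrChar G χ)
    [Fintype (Subgroup.zpowers x)] : ∃ k : ℕ, ∑ g : Subgroup.zpowers x, χ g = orderOf x * k := by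
  obtain ⟨V, -, rfl⟩ := hχ
  let ρ : Representation ℂ (Subgroup.zpowers x) V := V.ρ.comp (Subgroup.zpowers x).subtype
  have hcard : (Nat.card (Subgroup.zpowers x) : ℂ) ≠ 0 :=
    Nat.cast_ne_zero.mpr Nat.card_pos.ne'
  have := invertibleOfNonzero hcard
  refine ⟨Module.finrank ℂ (Representation.invariants ρ), ?_⟩
  rw [← ρ.card_inv_mul_sum_char_eq_finrank, ← Nat.card_zpowers, mul_inv_cancel_left₀ hcard]
  rfl

/-- `χ` takes the single value `χ x` on the nontrivial powers of `x`, so the multiplicity of the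
trivial character in the restriction of `χ` to `⟨x⟩` is `(χ 1 + (n - 1) χ x) / n`. -/
theorem IsIrrChar.degree_modEq {x : G} (hχ : IsIrrChar G χ)
    (hx : ∀ i, 0 < i → i < orderOf x → IsConj x (x ^ i)) {d : ℕ} (hd : χ 1 = d) {a : ℤ}
    (ha : χ x = a) : d ≡ a [ZMOD orderOf x] := by
  classical
  have := Fintype.ofFinite (Subgroup.zpowers x)
  have hval (g : Subgroup.zpowers x) (hg : g ∈ univ.erase 1) : χ g = a := by
    obtain ⟨i, hi, hig⟩ := mem_image.mp (mem_zpowers_iff_mem_range_orderOf.mp g.2)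
    have hi0 : i ≠ 0 := by
      rintro rfl
      exact ne_of_mem_erase hg (Subtype.ext (by rw [← hig, pow_zero]; rfl))
    rw [← hig, ← ha]
    exact (hχ.conj_invariant (hx i (Nat.pos_of_ne_zero hi0) (mem_range.mp hi))).symm
  have hpos := orderOf_pos x
  obtain ⟨k, hk⟩ := hχ.exists_sum_zpowers_eq (x := x)
  rw [← add_sum_erase univ _ (mem_univ 1), sum_congr rfl hval, sum_const,
    card_erase_of_mem (mem_univ 1), card_univ, Fintype.card_eq_nat_card, Nat.card_zpowers,
    OneMemClass.coe_one, hd, nsmul_eq_mul, Nat.cast_sub hpos] at hk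
  have hk' : (d : ℤ) + (orderOf x - 1) * a = orderOf x * k := by exact_mod_cast hk
  exact Int.modEq_iff_dvd.mpr ⟨a - k, by linear_combination -hk'⟩

theorem IsIrrChar.not_orderOf_dvd_degree {x : G} (hχ : IsIrrChar G χ)
    (hx : ∀ i, 0 < i → i < orderOf x → IsConj x (x ^ i)) (hx1 : orderOf x ≠ 1) {d : ℕ}
    (hd : χ 1 = d) {u : ℤˣ} (hu : χ x = (u : ℤ)) : ¬ orderOf x ∣ d := by
  intro h
  have hdvd : (orderOf x : ℤ) ∣ u :=
    (hχ.degree_modEq hx hd hu).dvd_iff.mp (Int.natCast_dvd_natCast.mpr h)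
  exact hx1 (Nat.isUnit_iff.mp (Int.ofNat_isUnit.mp (isUnit_of_dvd_unit hdvd u.isUnit)))

theorem IsIrrChar.isDefectZeroChar_iff (hχ : IsIrrChar G χ) (hℓ : ℓ.Prime)
    (hdvd : ℓ ∣ Nat.card G) (hsq : ¬ ℓ ^ 2 ∣ Nat.card G) {d : ℕ} (hd : χ 1 = d) :
    IsDefectZeroChar ℓ G χ ↔ ℓ ∣ d := by
  obtain ⟨d', hd', q, hq⟩ := hχ.exists_map_one_eq
  obtain rfl : d = d' := by exact_mod_cast hd.symm.trans hd'
  have hquot : Nat.card G / d = q :=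
    Nat.div_eq_of_eq_mul_right (Nat.pos_of_dvd_of_pos ⟨q, hq⟩ Nat.card_pos) hq
  have hiff : ¬ ℓ ∣ q ↔ ℓ ∣ d := by
    rw [hq] at hdvd hsq
    refine ⟨(hℓ.dvd_mul.mp hdvd).resolve_right, fun hd hq => hsq ?_⟩
    rw [pow_two]
    exact mul_dvd_mul hd hq
  constructor
  · rintro ⟨-, d'', hd'', hndvd⟩
    obtain rfl : d = d'' := by exact_mod_cast hd.symm.trans hd''
    exact hiff.mp (hquot ▸ hndvd)
  · exact fun h => ⟨hχ, d, hd, hquot.symm ▸ hiff.mpr h⟩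

theorem IsIrrChar.eq_zero_of_card_centralizer_le {ι : Type*} [Fintype ι] {ψ : ι → G → ℂ}
    (hinj : Function.Injective ψ) (hψ : ∀ i, IsIrrChar G (ψ i)) {x : G}
    (hx : ∀ i, ‖ψ i x‖ = 1) (hcent : Nat.card (Subgroup.centralizer {x}) ≤ Fintype.card ι)
    (hχ : IsIrrChar G χ) (hne : χ ∉ Set.range ψ) : χ x = 0 := by
  classical
  have hnot : χ ∉ univ.image ψ := by simpa using hne
  have hle := sum_norm_sq_le_card_centralizer (T := insert χ (univ.image ψ))
    (by simpa [hχ] using hψ) x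
  rw [sum_insert hnot, sum_image hinj.injOn, sum_congr rfl fun i _ => by rw [hx i, one_pow],
    sum_const, nsmul_one, card_univ] at hle
  have : (Nat.card (Subgroup.centralizer {x}) : ℝ) ≤ Fintype.card ι := by exact_mod_cast hcent
  have hsq : ‖χ x‖ ^ 2 = 0 := le_antisymm (by linarith) (by positivity)
  simpa using hsq

theorem numIrr_eq_numDefectZero_add_card (hℓ : ℓ.Prime) (hsq : ¬ ℓ ^ 2 ∣ Nat.card G) {x : G}
    (hx : orderOf x = ℓ) (hconj : ∀ i, 0 < i → i < ℓ → IsConj x (x ^ i)) {ι : Type*} [Fintype ι]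
    {ψ : ι → G → ℂ} (hinj : Function.Injective ψ) (hψ : ∀ i, IsIrrChar G (ψ i))
    (hval : ∀ i, ∃ u : ℤˣ, ψ i x = (u : ℤ))
    (hcent : Nat.card (Subgroup.centralizer {x}) ≤ Fintype.card ι) :
    numIrr G = numDefectZero ℓ G + Fintype.card ι := by
  subst hx
  have hdvd : orderOf x ∣ Nat.card G := orderOf_dvd_natCard x
  have hnorm (i) : ‖ψ i x‖ = 1 := by
    obtain ⟨u, hu⟩ := hval i
    rcases Int.units_eq_one_or u with rfl | rfl <;> simp [hu]
  have hψ_not (i) : ¬ IsDefectZeroChar (orderOf x) G (ψ i) := by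
    obtain ⟨d, hd, -⟩ := (hψ i).exists_map_one_eq
    obtain ⟨u, hu⟩ := hval i
    rw [(hψ i).isDefectZeroChar_iff hℓ hdvd hsq hd]
    exact (hψ i).not_orderOf_dvd_degree hconj hℓ.ne_one hd hu
  have hother (χ) (hχ : IsIrrChar G χ) (hne : χ ∉ Set.range ψ) :
      IsDefectZeroChar (orderOf x) G χ := by
    obtain ⟨d, hd, -⟩ := hχ.exists_map_one_eq
    have hzero := hχ.eq_zero_of_card_centralizer_le hinj hψ hnorm hcent hne
    have hmod := hχ.degree_modEq hconj hd (a := 0) (by rw [hzero, Int.cast_zero])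
    rw [hχ.isDefectZeroChar_iff hℓ hdvd hsq hd]
    exact_mod_cast Int.modEq_zero_iff_dvd.mp hmod
  have hunion : {χ | IsIrrChar G χ} = {χ | IsDefectZeroChar (orderOf x) G χ} ∪ Set.range ψ := by
    refine Set.ext fun χ => ⟨fun hχ => or_iff_not_imp_right.mpr (hother χ hχ), ?_⟩
    rintro (h | ⟨i, rfl⟩)
    exacts [h.1, hψ i]
  have hdisj : Disjoint {χ | IsDefectZeroChar (orderOf x) G χ} (Set.range ψ) := by
    rw [Set.disjoint_left]
    rintro _ h ⟨i, rfl⟩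
    exact hψ_not i h
  change Set.ncard {χ | IsIrrChar G χ} = Set.ncard {χ | IsDefectZeroChar (orderOf x) G χ} + _
  rw [hunion, Set.ncard_union_eq hdisj (finite_setOf_isIrrChar.subset fun χ hχ => hχ.1),
    ← Nat.card_coe_set_eq (Set.range ψ), Nat.card_range_of_injective hinj,
    Nat.card_eq_fintype_card]

end DefectZero

section Inflation

variable {G K : Type} [Group G] [Group K]

theorem sum_comp_mul_card [Fintype G] [Fintype K] {π : G →* K} (hπ : Function.Surjective π)
    {R : Type*} [CommSemiring R] (F : K → R) :
    (∑ x, F (π x)) * Fintype.card K = Fintype.card G * ∑ y, F y := by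
  classical
  have hfiber (y : K) : #{x | π x = y} = #{x | π x = 1} :=
    MonoidHom.card_fiber_eq_of_mem_range π (hπ y) (hπ 1)
  have hcard : Fintype.card G = Fintype.card K * #{x | π x = 1} := by
    rw [← card_univ, card_eq_sum_card_fiberwise (f := π) (t := univ) fun _ _ => mem_univ _]
    simp [hfiber]
  have hsum : ∑ x, F (π x) = #{x | π x = 1} * ∑ y, F y := by
    rw [← sum_fiberwise' univ π F, mul_sum]
    exact sum_congr rfl fun y _ => by rw [sum_const, hfiber, nsmul_eq_mul]
  rw [hsum, hcard]
  push_cast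
  ring

/-- The representation `V` of `K`, inflated along `π` and tensored with the linear
character `δ`. -/
noncomputable def twistedInflation (π : G →* K) (δ : G →* ℂˣ) (V : FDRep ℂ K) : FDRep ℂ G :=
  FDRep.of (V := V)
    { toFun := fun x => (δ x : ℂ) • V.ρ (π x)
      map_one' := by simp
      map_mul' := fun x y => by
        rw [map_mul, map_mul, map_mul, Units.val_mul, smul_mul_smul_comm] }

theorem character_twistedInflation (π : G →* K) (δ : G →* ℂˣ) (V : FDRep ℂ K) (x : G) :
    (twistedInflation π δ V).character x = V.character (π x) * δ x :=
  ((LinearMap.trace ℂ V).map_smul (δ x : ℂ) (V.ρ (π x))).trans (mul_comm _ _)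

variable [Finite K] {π : G →* K}

theorem IsIrrChar.comp_mul [Finite G] (hπ : Function.Surjective π) (δ : G →* ℂˣ) {χ : K → ℂ}
    (hχ : IsIrrChar K χ) : IsIrrChar G fun x => χ (π x) * δ x := by
  have := Fintype.ofFinite G
  have := Fintype.ofFinite K
  have hnorm := hχ.sum_mul_conj_self
  obtain ⟨V, _, rfl⟩ := hχ
  refine ⟨twistedInflation π δ V, (simple_iff_sum_character_mul_conj _).mpr ?_,
    funext fun x => (character_twistedInflation π δ V x).symm⟩
  have hδ (x : G) : (δ x * conj (δ x : ℂ) : ℂ) = 1 := by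
    have hpow : (δ x : ℂ) ^ Nat.card G = 1 := by
      rw [← Units.val_pow_eq_pow_val, ← map_pow, pow_card_eq_one', map_one, Units.val_one]
    rw [Complex.mul_conj', Complex.norm_eq_one_of_pow_eq_one hpow Nat.card_pos.ne']
    norm_num
  have hterm (x : G) : (twistedInflation π δ V).character x *
      conj ((twistedInflation π δ V).character x) =
        V.character (π x) * conj (V.character (π x)) := by
    rw [character_twistedInflation, map_mul, mul_mul_mul_comm, hδ, mul_one]
  have hsum := sum_comp_mul_card hπ fun y => V.character y * conj (V.character y)
  rw [hnorm] at hsum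
  rw [sum_congr rfl fun x _ => hterm x]
  exact mul_right_cancel₀ (Nat.cast_ne_zero.mpr Fintype.card_ne_zero) hsum

theorem injective_comp_mul_pow (hπ : Function.Surjective π) (δ : G →* ℂˣ) {z : G}
    (hz : π z = 1) {m : ℕ} (hδz : IsPrimitiveRoot (δ z) m) {κ : Type*} {ψ : κ → K → ℂ}
    (hinj : Function.Injective ψ) (hψ : ∀ k, IsIrrChar K (ψ k)) :
    Function.Injective fun (p : κ × Fin m) (x : G) =>
      ψ p.1 (π x) * ((δ ^ (p.2 : ℕ)) x : ℂˣ) := by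
  rintro ⟨k, i⟩ ⟨k', j⟩ h
  have hval (x : G) : ψ k (π x) * (δ x ^ (i : ℕ) : ℂˣ) = ψ k' (π x) * (δ x ^ (j : ℕ) : ℂˣ) :=
    congrFun h x
  have hone : ψ k 1 = ψ k' 1 := by simpa using hval 1
  have hne : ψ k 1 ≠ 0 := by
    obtain ⟨d, hd, hdvd⟩ := (hψ k).exists_map_one_eq
    rw [hd]
    exact Nat.cast_ne_zero.mpr (Nat.pos_of_dvd_of_pos hdvd Nat.card_pos).ne'
  obtain rfl : i = j := by
    have hzval := hval z
    rw [hz, ← hone] at hzval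
    exact Fin.ext (hδz.pow_inj i.2 j.2 (Units.ext (mul_left_cancel₀ hne hzval)))
  obtain rfl : k = k' := by
    refine hinj (funext fun y => ?_)
    obtain ⟨x, rfl⟩ := hπ y
    exact mul_right_cancel₀ (Units.ne_zero _) (hval x)
  rfl

end Inflation

section ExteriorPower

open LinearMap Module Polynomial

section CommRing

variable {R M : Type*} [CommRing R] [AddCommGroup M] [Module R M]

theorem trace_exteriorPower_map_eq_sum_minors {ι : Type*} [Fintype ι] [LinearOrder ι]
    (b : Basis ι R M) (f : M →ₗ[R] M) (k : ℕ) :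
    trace R (⋀[R]^k M) (exteriorPower.map k f) = ∑ s ∈ univ.powersetCard k,
      ((toMatrix b b f).submatrix (Subtype.val : s → ι) (Subtype.val : s → ι)).det := by
  classical
  have hdiag (s : Set.powersetCard ι k) :
      toMatrix (b.exteriorPower k) (b.exteriorPower k) (exteriorPower.map k f) s s =
        ((toMatrix b b f).submatrix (Subtype.val : s.val → ι) (Subtype.val : s.val → ι)).det := by
    rw [toMatrix_apply, exteriorPower.basis_repr_apply, exteriorPower.basis_apply,
      exteriorPower.map_apply_ιMulti_family, exteriorPower.ιMulti_family,
      exteriorPower.ιMultiDual_apply_ιMulti, ← Matrix.det_transpose,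
      ← Matrix.det_submatrix_equiv_self (s.val.orderIsoOfFin s.prop).toEquiv]
    congr 1
    ext i j
    simp only [Matrix.transpose_apply, Matrix.of_apply, Function.comp_apply, Basis.coord_apply,
      Matrix.submatrix_apply, toMatrix_apply]
    rfl
  rw [trace_eq_matrix_trace R (b.exteriorPower k), Matrix.trace]
  rw [sum_subtype (p := (· ∈ Set.powersetCard ι k)) _ fun s => by simp [Set.powersetCard.mem_iff]]
  exact sum_congr rfl fun s _ => hdiag s

variable [StrongRankCondition R] [Module.Free R M] [Module.Finite R M]

theorem trace_exteriorPower_map_eq_charpoly_coeff (f : M →ₗ[R] M) {k : ℕ}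
    (hk : k ≤ finrank R M) :
    trace R (⋀[R]^k M) (exteriorPower.map k f) =
      (-1) ^ k * f.charpoly.coeff (finrank R M - k) := by
  have hcoeff := (toMatrix (finBasis R M) (finBasis R M) f).charpoly_coeff_eq_sum_minors k
    (by rwa [Fintype.card_fin])
  rw [Fintype.card_fin, charpoly_toMatrix] at hcoeff
  rw [hcoeff, ← mul_assoc, ← mul_pow, neg_one_mul, neg_neg, one_pow, one_mul,
    trace_exteriorPower_map_eq_sum_minors (finBasis R M)]

end CommRing

variable {K V : Type*} [Field K] [AddCommGroup V] [Module K V] [Module.Finite K V]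

theorem charpoly_eq_mul_charpoly_restrict {p q : Submodule K V} (hpq : IsCompl p q)
    {f : V →ₗ[K] V} (hp : ∀ x ∈ p, f x ∈ p) (hq : ∀ x ∈ q, f x ∈ q) :
    f.charpoly = (f.restrict hp).charpoly * (f.restrict hq).charpoly := by
  have hconj : (f.restrict hp).prodMap (f.restrict hq) =
      (Submodule.prodEquivOfIsCompl p q hpq).symm.conj f := by
    apply LinearMap.ext
    rintro ⟨x, y⟩
    rw [LinearEquiv.conj_apply_apply, LinearEquiv.eq_symm_apply]
    simp
  rw [← LinearEquiv.charpoly_conj (Submodule.prodEquivOfIsCompl p q hpq).symm, ← hconj,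
    charpoly_prodMap]

-- `⋀ᵏ⁺¹(H ⊕ K) = ⋀ᵏ⁺¹H ⊕ ⋀ᵏH` on the level of traces.
theorem trace_exteriorPower_map_eq_add {H : Submodule K V} {v : V} (hv : v ≠ 0)
    (hH : IsCompl H (K ∙ v)) {f : V →ₗ[K] V} (hfH : ∀ x ∈ H, f x ∈ H) (hfv : f v = v)
    {k : ℕ} (hk : k < finrank K H) :
    trace K (⋀[K]^(k + 1) V) (exteriorPower.map (k + 1) f) =
      trace K (⋀[K]^(k + 1) H) (exteriorPower.map (k + 1) (f.restrict hfH)) +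
        trace K (⋀[K]^k H) (exteriorPower.map k (f.restrict hfH)) := by
  have hfspan : ∀ x ∈ K ∙ v, f x = x := by
    intro x hx
    obtain ⟨a, rfl⟩ := Submodule.mem_span_singleton.mp hx
    rw [map_smul, hfv]
  have hspan_stable : ∀ x ∈ K ∙ v, f x ∈ K ∙ v := fun x hx => (hfspan x hx).symm ▸ hx
  have hrestrict : f.restrict hspan_stable = 1 :=
    LinearMap.ext fun x => Subtype.ext (hfspan x x.2)
  have hrank : finrank K V = finrank K H + 1 := by
    rw [← Submodule.finrank_add_eq_of_isCompl hH, finrank_span_singleton hv]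
  have hcharpoly : f.charpoly = (f.restrict hfH).charpoly * (X - 1) := by
    rw [charpoly_eq_mul_charpoly_restrict hH hfH hspan_stable, hrestrict, charpoly_one,
      finrank_span_singleton hv, pow_one]
  obtain ⟨m, hm⟩ := Nat.exists_eq_add_of_lt hk
  rw [trace_exteriorPower_map_eq_charpoly_coeff f (by lia),
    trace_exteriorPower_map_eq_charpoly_coeff _ hk,
    trace_exteriorPower_map_eq_charpoly_coeff _ hk.le, hcharpoly, hrank,
    show finrank K H + 1 - (k + 1) = m + 1 by lia, show finrank K H - (k + 1) = m by lia,
    show finrank K H - k = m + 1 by lia, mul_sub, mul_one, coeff_sub, coeff_mul_X, pow_succ]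
  ring

end ExteriorPower

section PermMinor

open Equiv Pointwise

variable {α : Type*} [DecidableEq α]

/-- The principal minor, on the rows and columns in `I`, of the permutation matrix of `g`: the
sign of `g` on `I` if `g` stabilises `I`, and `0` otherwise. -/
def permMinor (I : Finset α) (g : Perm α) : ℤ :=
  ((g.permMatrix ℤ).submatrix (Subtype.val : I → α) (Subtype.val : I → α)).det

theorem permMatrix_apply (g : Perm α) (i j : α) :
    g.permMatrix ℤ i j = if g i = j then 1 else 0 := by
  simp [PEquiv.toMatrix_apply]

theorem permMinor_inv (I : Finset α) (g : Perm α) : permMinor I g⁻¹ = permMinor I g := by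
  rw [permMinor, permMinor, ← Matrix.transpose_permMatrix, ← Matrix.transpose_submatrix,
    Matrix.det_transpose]

theorem permMinor_empty (g : Perm α) : permMinor ∅ g = 1 := Matrix.det_isEmpty

theorem permMinor_mul_of_forall_apply_eq {I : Finset α} {g h : Perm α} (hh : ∀ x ∈ I, h x = x) :
    permMinor I (g * h) = permMinor I g := by
  rw [permMinor, permMinor]
  congr 1
  ext i j
  simp only [Matrix.submatrix_apply, permMatrix_apply, Perm.mul_apply, hh i i.2]

theorem permMinor_mul_swap {I : Finset α} {a b : α} (ha : a ∈ I) (hb : b ∈ I) (hab : a ≠ b)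
    (g : Perm α) : permMinor I (g * swap a b) = -permMinor I g := by
  have hrows : ((g * swap a b).permMatrix ℤ).submatrix (Subtype.val : I → α)
      (Subtype.val : I → α) = ((g.permMatrix ℤ).submatrix (Subtype.val : I → α)
        (Subtype.val : I → α)).submatrix (swap ⟨a, ha⟩ ⟨b, hb⟩) id := by
    ext i j
    have hswap : ((swap (⟨a, ha⟩ : I) ⟨b, hb⟩ i : I) : α) = swap a b i :=
      (Subtype.val_injective.swap_apply _ _ _).symm
    rw [Matrix.submatrix_apply, Matrix.submatrix_apply, Matrix.submatrix_apply, permMatrix_apply,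
      permMatrix_apply, hswap, Perm.mul_apply, id]
  rw [permMinor, permMinor, hrows, Matrix.det_permute,
    Perm.sign_swap (Subtype.coe_ne_coe.mp hab)]
  simp

theorem permMinor_eq_zero {I : Finset α} {g : Perm α} (hg : g • I ≠ I) : permMinor I g = 0 := by
  obtain ⟨x, hx, hgx⟩ : ∃ x ∈ I, g x ∉ I := by
    by_contra! hI
    refine hg (eq_of_subset_of_card_le ?_ (card_smul_finset g I).ge)
    exact smul_finset_subset_iff.mpr fun x hx => mem_inv_smul_finset_iff.mpr (hI x hx)
  refine Matrix.det_eq_zero_of_row_eq_zero ⟨x, hx⟩ fun j => ?_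
  rw [Matrix.submatrix_apply, permMatrix_apply,
    if_neg (ne_of_mem_of_not_mem j.2 hgx).symm]

theorem abs_permMinor_le_one (I : Finset α) (g : Perm α) : |permMinor I g| ≤ 1 := by
  by_cases hg : g • I = I
  · have hI (x : α) : g x ∈ I ↔ x ∈ I := by
      conv_lhs => rw [← hg]
      exact smul_mem_smul_finset_iff g
    have hsub : (g.permMatrix ℤ).submatrix (Subtype.val : I → α) (Subtype.val : I → α) =
        (g.subtypePerm hI).permMatrix ℤ := by
      ext i j
      simp only [Matrix.submatrix_apply, permMatrix_apply, Subtype.ext_iff, Perm.subtypePerm_apply]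
    rw [permMinor, hsub, Matrix.det_permutation, Int.cast_id,
      Int.isUnit_iff_abs_eq.mp (Units.isUnit _)]
  · simp [permMinor_eq_zero hg]

variable [Fintype α]

theorem sum_permMinor_mul_eq_zero {I J : Finset α} (h : 1 < #(I \ J)) :
    ∑ g : Perm α, permMinor I g * permMinor J g = 0 := by
  obtain ⟨a, ha, b, hb, hab⟩ := one_lt_card.mp h
  rw [mem_sdiff] at ha hb
  have hfix : ∀ x ∈ J, swap a b x = x := fun x hx =>
    swap_apply_of_ne_of_ne (ne_of_mem_of_not_mem hx ha.2) (ne_of_mem_of_not_mem hx hb.2)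
  have hneg : ∑ g : Perm α, permMinor I g * permMinor J g =
      ∑ g : Perm α, -(permMinor I g * permMinor J g) :=
    (Fintype.sum_equiv (Equiv.mulRight (swap a b)) _ _ fun g => by
      rw [Equiv.coe_mulRight, permMinor_mul_swap ha.1 hb.1 hab,
        permMinor_mul_of_forall_apply_eq hfix, neg_mul]).symm
  rw [sum_neg_distrib] at hneg
  exact self_eq_neg.mp hneg

theorem sum_permMinor_mul_le_card_stabilizer (I J : Finset α) :
    ∑ g : Perm α, permMinor I g * permMinor J g ≤
      Nat.card (MulAction.stabilizer (Perm α) (I, J)) := by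
  classical
  rw [Nat.card_eq_fintype_card, Fintype.card_subtype, card_filter, Nat.cast_sum]
  refine sum_le_sum fun g _ => ?_
  split_ifs with hg
  · calc permMinor I g * permMinor J g ≤ |permMinor I g| * |permMinor J g| := by
          rw [← abs_mul]
          exact le_abs_self _
      _ ≤ (1 : ℕ) := by
          rw [Nat.cast_one]
          exact mul_le_one₀ (abs_permMinor_le_one I g) (abs_nonneg _) (abs_permMinor_le_one J g)
  · rw [MulAction.mem_stabilizer_iff, Prod.smul_mk, Prod.mk_inj, not_and_or] at hg
    rcases hg with hI | hJ
    · rw [permMinor_eq_zero hI, zero_mul, Nat.cast_zero]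
    · rw [permMinor_eq_zero hJ, mul_zero, Nat.cast_zero]

end PermMinor

section PairCounting

open Equiv MulAction Pointwise

theorem sum_card_stabilizer_le {G X : Type*} [Group G] [Finite G] [MulAction G X] {S : Finset X}
    (hS : ∀ x ∈ S, ∀ y ∈ S, y ∈ orbit G x) :
    ∑ x ∈ S, Nat.card (stabilizer G x) ≤ Nat.card G := by
  obtain rfl | ⟨x, hx⟩ := S.eq_empty_or_nonempty
  · simp
  have hcard (y : X) : Nat.card (stabilizer G y) * (orbit G y).ncard = Nat.card G := by
    rw [← index_stabilizer, Subgroup.card_mul_index]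
  have horbit_pos : 0 < (orbit G x).ncard :=
    Nat.pos_of_mul_pos_left (hcard x ▸ Nat.card_pos : 0 < _)
  have hconst : ∀ y ∈ S, Nat.card (stabilizer G y) = Nat.card (stabilizer G x) := fun y hy =>
    Nat.eq_of_mul_eq_mul_right horbit_pos <| by
      rw [hcard x, ← orbit_eq_iff.mpr (hS x hx y hy), hcard y]
  have hle : #S ≤ (orbit G x).ncard := by
    rw [← Set.ncard_coe_finset]
    exact Set.ncard_le_ncard (hS x hx) (Set.finite_of_ncard_pos horbit_pos)
  rw [sum_congr rfl hconst, sum_const, smul_eq_mul, ← hcard x, mul_comm]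
  exact Nat.mul_le_mul_left _ hle

variable {α : Type*}

theorem exists_perm_apply_eq_of_card_fiber_eq [Fintype α] {β : Type*} [DecidableEq β] {c d : α → β}
    (h : ∀ b, #{x | c x = b} = #{x | d x = b}) : ∃ g : Perm α, ∀ x, d (g x) = c x := by
  have hfiber (b : β) : Nonempty ({x // c x = b} ≃ {x // d x = b}) :=
    ⟨Fintype.equivOfCardEq (by rw [Fintype.card_subtype, Fintype.card_subtype, h])⟩
  exact ⟨Equiv.ofFiberEquiv fun b => (hfiber b).some, Equiv.ofFiberEquiv_map _⟩

variable [DecidableEq α]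

theorem mem_orbit_prod_of_card_eq [Finite α] {I J I' J' : Finset α} (hI : #I = #I') (hJ : #J = #J')
    (hIJ : #(I \ J) = #(I' \ J')) : (I', J') ∈ orbit (Perm α) (I, J) := by
  have := Fintype.ofFinite α
  have hfiber (b : Bool × Bool) : #{x | (decide (x ∈ I), decide (x ∈ J)) = b} =
      #{x | (decide (x ∈ I'), decide (x ∈ J')) = b} := by
    have hinter : #(I ∩ J) = #(I' ∩ J') := by
      have := card_sdiff_add_card_inter I J
      have := card_sdiff_add_card_inter I' J'
      lia
    have hsdiff : #(J \ I) = #(J' \ I') := by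
      have := inter_comm I J ▸ card_sdiff_add_card_inter J I
      have := inter_comm I' J' ▸ card_sdiff_add_card_inter J' I'
      lia
    have hcompl : #(I ∪ J)ᶜ = #(I' ∪ J')ᶜ := by
      have := card_union_add_card_inter I J
      have := card_union_add_card_inter I' J'
      rw [card_compl, card_compl]
      lia
    rcases b with ⟨_ | _, _ | _⟩
    · convert hcompl using 2 <;> ext <;> simp
    · convert hsdiff using 2 <;> ext <;> simp [and_comm]
    · convert hIJ using 2 <;> ext <;> simp
    · convert hinter using 2 <;> ext <;> simp
  obtain ⟨g, hg⟩ := exists_perm_apply_eq_of_card_fiber_eq hfiber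
  simp only [Prod.mk.injEq, decide_eq_decide] at hg
  have hsmul {A B : Finset α} (h : ∀ x, g x ∈ B ↔ x ∈ A) : g • A = B := by
    ext y
    rw [← inv_smul_mem_iff, ← h, ← Perm.smul_def, smul_inv_smul]
  exact ⟨g, Prod.ext (hsmul fun x => (hg x).1) (hsmul fun x => (hg x).2)⟩

variable [Fintype α]

/-- The character of the `k`-th exterior power of the permutation representation. -/
def permExteriorChar (k : ℕ) (g : Perm α) : ℤ :=
  ∑ I ∈ univ.powersetCard k, permMinor I g

theorem sum_permExteriorChar_mul (i j : ℕ) :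
    ∑ g : Perm α, permExteriorChar i g * permExteriorChar j g =
      ∑ p ∈ univ.powersetCard i ×ˢ univ.powersetCard j,
        ∑ g : Perm α, permMinor p.1 g * permMinor p.2 g := by
  rw [sum_comm]
  exact sum_congr rfl fun g _ => (sum_mul_sum _ _ _ _).trans (sum_product' _ _ _).symm

theorem sum_permExteriorChar_mul_eq_zero {i j : ℕ} (hij : j + 1 < i) :
    ∑ g : Perm α, permExteriorChar i g * permExteriorChar j g = 0 := by
  rw [sum_permExteriorChar_mul]
  refine sum_eq_zero fun p hp => sum_permMinor_mul_eq_zero ?_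
  have hsdiff := le_card_sdiff p.2 p.1
  rw [mem_product, mem_powersetCard_univ, mem_powersetCard_univ] at hp
  lia

-- `Sₙ` is transitive on the pairs `(I, J)` of `k`-subsets with `|I \ J| = 0`, and on those with
-- `|I \ J| = 1`; each of these two orbits contributes at most `|Sₙ|`, and no other pair
-- contributes.
theorem sum_permExteriorChar_mul_self_le (k : ℕ) :
    ∑ g : Perm α, permExteriorChar k g * permExteriorChar k g ≤ 2 * Fintype.card (Perm α) := by
  let pairs (a : ℕ) : Finset (Finset α × Finset α) :=
    {p ∈ univ.powersetCard k ×ˢ univ.powersetCard k | #(p.1 \ p.2) = a}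
  have hmem {a : ℕ} {p : Finset α × Finset α} :
      p ∈ pairs a ↔ (#p.1 = k ∧ #p.2 = k) ∧ #(p.1 \ p.2) = a := by
    simp only [pairs, mem_filter, mem_product, mem_powersetCard_univ]
  have hpairs (a : ℕ) : ∑ p ∈ pairs a, ∑ g : Perm α, permMinor p.1 g * permMinor p.2 g ≤
      Fintype.card (Perm α) := by
    refine (sum_le_sum fun p _ => sum_permMinor_mul_le_card_stabilizer p.1 p.2).trans ?_
    rw [← Nat.cast_sum, ← Nat.card_eq_fintype_card, Nat.cast_le]
    refine sum_card_stabilizer_le fun p hp q hq => ?_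
    rw [hmem] at hp hq
    exact mem_orbit_prod_of_card_eq (hp.1.1.trans hq.1.1.symm) (hp.1.2.trans hq.1.2.symm)
      (hp.2.trans hq.2.symm)
  have hdisj : Disjoint (pairs 0) (pairs 1) :=
    disjoint_left.mpr fun p hp hq => zero_ne_one ((hmem.mp hp).2.symm.trans (hmem.mp hq).2)
  have hsum : ∑ g : Perm α, permExteriorChar k g * permExteriorChar k g =
      ∑ p ∈ pairs 0 ∪ pairs 1, ∑ g : Perm α, permMinor p.1 g * permMinor p.2 g := by
    rw [sum_permExteriorChar_mul]
    refine (sum_subset (union_subset (filter_subset _ _) (filter_subset _ _))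
      fun p hp hp' => sum_permMinor_mul_eq_zero ?_).symm
    simp only [mem_union, mem_filter, hp, true_and, not_or] at hp'
    lia
  rw [hsum, sum_union hdisj, two_mul]
  exact add_le_add (hpairs 0) (hpairs 1)

theorem permExteriorChar_zero (g : Perm α) : permExteriorChar 0 g = 1 := by
  rw [permExteriorChar, powersetCard_zero, sum_singleton, permMinor_empty]

theorem permExteriorChar_eq_zero_of_isCycleOn {c : Perm α} (hc : c.IsCycleOn Set.univ) {k : ℕ}
    (hk : k ≠ 0) (hkα : k < Fintype.card α) : permExteriorChar k c = 0 := by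
  refine sum_eq_zero fun I hI => permMinor_eq_zero fun hcI => ?_
  rw [mem_powersetCard_univ] at hI
  obtain ⟨x, hx⟩ : I.Nonempty := card_pos.mp (by lia)
  have huniv : I = univ := eq_univ_of_forall fun y => by
    obtain ⟨i, rfl⟩ := hc.2 (Set.mem_univ x) (Set.mem_univ y)
    have hstab : (c ^ i) • I = I := zpow_mem (mem_stabilizer_iff.mpr hcI : c ∈ stabilizer _ I) i
    exact hstab ▸ smul_mem_smul_finset hx
  rw [← hI, huniv, card_univ] at hkα
  exact hkα.false

end PairCounting

section HookCharacters

open LinearMap Equiv Module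

/-- The `k`-th exterior power of a representation. -/
noncomputable def exteriorPowerRep {R G M : Type*} [CommRing R] [Monoid G] [AddCommGroup M]
    [Module R M] (ρ : Representation R G M) (k : ℕ) : Representation R G (⋀[R]^k M) where
  toFun g := exteriorPower.map k (ρ g)
  map_one' := by rw [map_one]; exact exteriorPower.map_id
  map_mul' g h := by rw [map_mul]; exact exteriorPower.map_comp _ _

/-- The permutation representation of `Perm α` on `α → ℂ`. -/
def permRep (α : Type) : Representation ℂ (Perm α) (α → ℂ) where
  toFun g := funLeft ℂ ℂ g.symm
  map_one' := rfl
  map_mul' _ _ := rfl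

/-- The sum of the coordinates of a vector, as a linear form. -/
def coordSum (α : Type) [Fintype α] : Dual ℂ (α → ℂ) := ∑ i, proj i

variable {α : Type} [Fintype α]

theorem coordSum_apply (v : α → ℂ) : coordSum α v = ∑ i, v i := by
  simp [coordSum]

theorem permRep_mem_ker_coordSum (g : Perm α) :
    ∀ v ∈ ker (coordSum α), permRep α g v ∈ ker (coordSum α) := by
  intro v hv
  rw [mem_ker, coordSum_apply] at hv ⊢
  exact (Equiv.sum_comp g.symm v).trans hv

variable (α) in
/-- The standard representation of `Perm α`, on the vectors with coordinate sum zero. -/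
noncomputable def standardRep : Representation ℂ (Perm α) (ker (coordSum α)) :=
  (permRep α).subrepresentation (ker (coordSum α)) permRep_mem_ker_coordSum

variable (α) in
/-- The `k`-th exterior power of the standard representation of `Sₙ`. It is the irreducible
representation labelled by the hook partition `(n - k, 1ᵏ)`. -/
noncomputable def hookRep (k : ℕ) : FDRep ℂ (Perm α) :=
  FDRep.of (exteriorPowerRep (standardRep α) k)

theorem character_hookRep_zero (g : Perm α) : (hookRep α 0).character g = 1 := by
  have htrace := trace_exteriorPower_map_eq_charpoly_coeff (standardRep α g) (Nat.zero_le _)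
  rw [pow_zero, one_mul, Nat.sub_zero, ← charpoly_natDegree (standardRep α g),
    (charpoly_monic _).coeff_natDegree] at htrace
  exact htrace

section Nonempty

variable [Nonempty α]

theorem isCompl_ker_coordSum : IsCompl (ker (coordSum α)) (ℂ ∙ (1 : α → ℂ)) := by
  have hone : coordSum α 1 ≠ 0 := by simp [coordSum_apply]
  refine Dual.isCompl_ker_of_disjoint_of_ne_bot (fun h => hone (by rw [h, LinearMap.zero_apply]))
    ((Submodule.disjoint_span_singleton' one_ne_zero).mpr hone) ?_
  exact Submodule.span_singleton_eq_bot.not.mpr one_ne_zero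

theorem finrank_ker_coordSum : finrank ℂ (ker (coordSum α)) + 1 = Fintype.card α := by
  rw [← finrank_fintype_fun_eq_card ℂ, ← Submodule.finrank_add_eq_of_isCompl isCompl_ker_coordSum,
    finrank_span_singleton one_ne_zero]

theorem character_hookRep_one {k : ℕ} (hk : k < Fintype.card α) :
    (hookRep α k).character 1 ≠ 0 := by
  have hrank : finrank ℂ (ker (coordSum α)) + 1 = Fintype.card α := finrank_ker_coordSum
  rw [FDRep.char_one, Nat.cast_ne_zero]
  change finrank ℂ (⋀[ℂ]^k (ker (coordSum α))) ≠ 0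
  rw [exteriorPower.finrank_eq]
  exact (Nat.choose_pos (by lia)).ne'

end Nonempty

theorem finrank_hookRep_end_pos {k : ℕ} (hk : k < Fintype.card α) :
    0 < finrank ℂ (hookRep α k ⟶ hookRep α k) := by
  have : Nonempty α := Fintype.card_pos_iff.mp (by lia)
  have hid : 𝟙 (hookRep α k) ≠ 0 := fun h => character_hookRep_one hk <| by
    have hlin : (LinearMap.id : hookRep α k →ₗ[ℂ] hookRep α k) = 0 :=
      congrArg (fun q : hookRep α k ⟶ hookRep α k => q.hom.hom.hom) h
    rw [FDRep.character, map_one]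
    exact (congrArg (trace ℂ (hookRep α k)) hlin).trans (map_zero _)
  exact finrank_pos_iff_exists_ne_zero.mpr ⟨_, hid⟩

variable [LinearOrder α]

theorem trace_exteriorPower_map_permRep (k : ℕ) (g : Perm α) :
    trace ℂ _ (exteriorPower.map k (permRep α g)) = permExteriorChar k g := by
  have hmatrix : toMatrix (Pi.basisFun ℂ α) (Pi.basisFun ℂ α) (permRep α g) =
      (g⁻¹.permMatrix ℤ).map (Int.castRingHom ℂ) := by
    ext i j
    rw [toMatrix_eq_toMatrix', toMatrix'_apply, Matrix.map_apply, permMatrix_apply]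
    change (Pi.single j 1 : α → ℂ) (g⁻¹ i) = _
    simp [Pi.single_apply, eq_comm]
  rw [trace_exteriorPower_map_eq_sum_minors (Pi.basisFun ℂ α), permExteriorChar, Int.cast_sum,
    hmatrix]
  refine sum_congr rfl fun I _ => ?_
  rw [Matrix.submatrix_map, ← RingHom.mapMatrix_apply, ← RingHom.map_det, ← permMinor,
    permMinor_inv, eq_intCast]

theorem permExteriorChar_succ_eq_add [Nonempty α] {k : ℕ} (hk : k + 1 < Fintype.card α)
    (g : Perm α) :
    (permExteriorChar (k + 1) g : ℂ) =
      (hookRep α (k + 1)).character g + (hookRep α k).character g := by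
  have hrank : finrank ℂ (ker (coordSum α)) + 1 = Fintype.card α := finrank_ker_coordSum
  rw [← trace_exteriorPower_map_permRep]
  exact trace_exteriorPower_map_eq_add one_ne_zero isCompl_ker_coordSum
    (permRep_mem_ker_coordSum g) rfl (by lia)

theorem exists_permExteriorChar_eq_add {k : ℕ} (hk : k < Fintype.card α) :
    ∃ U : FDRep ℂ (Perm α), ∀ g : Perm α,
      (permExteriorChar k g : ℂ) = (hookRep α k).character g + U.character g := by
  have : Nonempty α := Fintype.card_pos_iff.mp (by lia)
  cases k with
  | zero =>
    let Z : Representation ℂ (Perm α) PUnit := 1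
    refine ⟨FDRep.of Z, fun g => ?_⟩
    have hzero : trace ℂ PUnit (Z g) = 0 := by rw [Subsingleton.elim (Z g) 0, map_zero]
    rw [permExteriorChar_zero, Int.cast_one, character_hookRep_zero, left_eq_add]
    exact hzero
  | succ k => exact ⟨hookRep α k, permExteriorChar_succ_eq_add hk⟩

theorem finrank_hookRep_hom_succ_le {k : ℕ} (hk : k + 1 < Fintype.card α) :
    finrank ℂ (hookRep α (k + 1) ⟶ hookRep α (k + 1)) +
      finrank ℂ (hookRep α (k + 1) ⟶ hookRep α k) +
        finrank ℂ (hookRep α k ⟶ hookRep α (k + 1)) +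
          finrank ℂ (hookRep α k ⟶ hookRep α k) ≤ 2 := by
  have : Nonempty α := Fintype.card_pos_iff.mp (by lia)
  have hle := sum_permExteriorChar_mul_self_le (α := α) (k + 1)
  rw [sum_mul_eq_card_mul_finrank (permExteriorChar_succ_eq_add hk)
    (permExteriorChar_succ_eq_add hk), mul_comm 2] at hle
  exact_mod_cast le_of_mul_le_mul_left hle (Nat.cast_pos.mpr Fintype.card_pos)

theorem simple_hookRep {k : ℕ} (hk : k < Fintype.card α) : Simple (hookRep α k) := by
  cases k with
  | zero => simp [simple_iff_sum_character_mul_conj, character_hookRep_zero]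
  | succ k =>
    have hpos := finrank_hookRep_end_pos hk
    have hpos' := finrank_hookRep_end_pos (Nat.lt_of_succ_lt hk)
    have hle := finrank_hookRep_hom_succ_le hk
    exact (simple_iff_finrank_end_eq_one _).mpr (by lia)

theorem finrank_hookRep_hom_eq_zero {i j : ℕ} (hij : j < i) (hi : i < Fintype.card α) :
    finrank ℂ (hookRep α j ⟶ hookRep α i) = 0 := by
  obtain rfl | hij' : i = j + 1 ∨ j + 1 < i := by lia
  · have hpos := finrank_hookRep_end_pos hi
    have hpos' := finrank_hookRep_end_pos (Nat.lt_of_succ_lt hi)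
    have hle := finrank_hookRep_hom_succ_le hi
    lia
  · obtain ⟨U, hU⟩ := exists_permExteriorChar_eq_add hi
    obtain ⟨U', hU'⟩ := exists_permExteriorChar_eq_add (hij.trans hi)
    have hsum := sum_mul_eq_card_mul_finrank hU' hU
    rw [sum_permExteriorChar_mul_eq_zero hij', zero_eq_mul] at hsum
    have hcard : (Fintype.card (Perm α) : ℤ) ≠ 0 := Nat.cast_ne_zero.mpr Fintype.card_ne_zero
    have := hsum.resolve_left hcard
    lia

theorem character_hookRep_ne {i j : ℕ} (hij : j < i) (hi : i < Fintype.card α) :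
    (hookRep α i).character ≠ (hookRep α j).character := by
  intro heq
  have hsum := sum_character_mul_conj (hookRep α j) (hookRep α i)
  rw [heq, sum_character_mul_conj, finrank_hookRep_hom_eq_zero hij hi] at hsum
  simp [(finrank_hookRep_end_pos (hij.trans hi)).ne'] at hsum

theorem injective_character_hookRep :
    Function.Injective fun k : Fin (Fintype.card α) => (hookRep α k).character := by
  intro i j heq
  rcases lt_trichotomy i j with hij | rfl | hij
  · exact absurd heq.symm (character_hookRep_ne hij j.2)
  · rfl
  · exact absurd heq (character_hookRep_ne hij i.2)

theorem character_hookRep_of_isCycleOn {c : Perm α} (hc : c.IsCycleOn Set.univ) {k : ℕ}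
    (hk : k < Fintype.card α) : (hookRep α k).character c = (-1) ^ k := by
  have : Nonempty α := Fintype.card_pos_iff.mp (by lia)
  induction k with
  | zero => rw [character_hookRep_zero, pow_zero]
  | succ k ih =>
    have hadd := permExteriorChar_succ_eq_add hk c
    rw [permExteriorChar_eq_zero_of_isCycleOn hc k.succ_ne_zero hk, Int.cast_zero,
      ih (Nat.lt_of_succ_lt hk)] at hadd
    rw [pow_succ, mul_neg_one]
    exact eq_neg_of_add_eq_zero_left hadd.symm

end HookCharacters

section ReflectionGroup

open Equiv Function

theorem isConj_pow_of_isCycle {α : Type*} [Finite α] {c : Perm α}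
    (hc : c.IsCycle) (hp : (orderOf c).Prime) {i : ℕ} (hi : 0 < i) (hic : i < orderOf c) :
    IsConj c (c ^ i) := by
  classical
  have := Fintype.ofFinite α
  rw [hc.isConj_iff (hc.isCycle_pow_pos_of_lt_prime_order hp i hi hic),
    hc.support_pow_of_pos_of_lt_orderOf hi hic]

theorem exists_isCycleOn_univ_orderOf_eq {ℓ : ℕ} (hℓ : ℓ.Prime) :
    ∃ c : Perm (Fin ℓ), c.IsCycleOn Set.univ ∧ orderOf c = ℓ ∧
      ∀ i, 0 < i → i < ℓ → IsConj c (c ^ i) := by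
  have hc : (finRotate ℓ).IsCycle := isCycle_finRotate_of_le hℓ.two_le
  have hsupp : (finRotate ℓ).support = univ := support_finRotate_of_le hℓ.two_le
  have horder : orderOf (finRotate ℓ) = ℓ := by rw [hc.orderOf, hsupp, card_univ, Fintype.card_fin]
  refine ⟨finRotate ℓ, ?_, horder, fun i hi hiℓ => ?_⟩
  · rw [← coe_univ, ← hsupp, Perm.coe_support_eq_set_support]
    exact hc.isCycleOn
  · exact isConj_pow_of_isCycle hc (horder.symm ▸ hℓ) hi (hiℓ.trans_eq horder.symm)

namespace Gerr

variable {A : Type} [CommGroup A] {e r n : ℕ}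

theorem inr_mem (σ : Perm (Fin n)) : (SemidirectProduct.inr σ : Wreath A n) ∈ Gerr A e r n := by
  constructor <;> simp [SemidirectProduct.left_inr]

/-- The permutation underlying a monomial matrix. -/
def toPerm : Gerr A e r n →* Perm (Fin n) :=
  SemidirectProduct.rightHom.comp (Gerr A e r n).subtype

/-- The permutation matrices, as elements of `G(e, r, n)`. -/
def ofPerm : Perm (Fin n) →* Gerr A e r n :=
  SemidirectProduct.inr.codRestrict _ inr_mem

/-- The linear character of `G(e, r, n)` given by the product of the nonzero entries. -/
def prodEntries : Gerr A e r n →* A where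
  toFun x := ∏ i, x.1.left i
  map_one' := prod_const_one
  map_mul' x y := by
    rw [← Equiv.prod_comp x.1.right.symm y.1.left, ← prod_mul_distrib]
    rfl

theorem toPerm_ofPerm (σ : Perm (Fin n)) : toPerm (ofPerm σ : Gerr A e r n) = σ := rfl

theorem toPerm_surjective : Surjective (toPerm : Gerr A e r n →* Perm (Fin n)) :=
  fun σ => ⟨ofPerm σ, toPerm_ofPerm σ⟩

theorem ofPerm_injective : Injective (ofPerm : Perm (Fin n) →* Gerr A e r n) :=
  LeftInverse.injective toPerm_ofPerm

theorem prodEntries_ofPerm (σ : Perm (Fin n)) : prodEntries (ofPerm σ : Gerr A e r n) = 1 :=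
  (prod_const_one : ∏ _i : Fin n, (1 : A) = 1)

theorem ext_left_right {x y : Gerr A e r n} (hleft : x.1.left = y.1.left)
    (hright : x.1.right = y.1.right) : x = y :=
  Subtype.ext (SemidirectProduct.ext hleft hright)

theorem finite (he : e ≠ 0) : Finite (Gerr ℂˣ e r n) := by
  have : NeZero e := ⟨he⟩
  let f (x : Gerr ℂˣ e r n) : (Fin n → rootsOfUnity e ℂ) × Perm (Fin n) :=
    (fun i => ⟨x.1.left i, x.2.1 i⟩, x.1.right)
  exact Finite.of_injective f fun x y h =>
    ext_left_right (funext fun i => congrArg (fun p => (p.1 i : ℂˣ)) h) (congrArg Prod.snd h)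

theorem exists_toPerm_eq_one_prodEntries_eq [NeZero n] (hre : r ∣ e) {a : A}
    (ha : a ^ (e / r) = 1) : ∃ z : Gerr A e r n, toPerm z = 1 ∧ prodEntries z = a := by
  have hprod : ∏ i, (Pi.mulSingle 0 a : Fin n → A) i = a := by
    simp [prod_pi_mulSingle']
  have hae : a ^ e = 1 :=
    orderOf_dvd_iff_pow_eq_one.mp ((orderOf_dvd_of_pow_eq_one ha).trans (Nat.div_dvd_of_dvd hre))
  refine ⟨⟨SemidirectProduct.inl (Pi.mulSingle 0 a), fun i => ?_, ?_⟩, rfl, hprod⟩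
  · rw [SemidirectProduct.left_inl, ← Pi.pow_apply, ← Pi.mulSingle_pow, hae, Pi.mulSingle_one,
      Pi.one_apply]
  · rw [SemidirectProduct.left_inl, hprod, ha]

theorem pow_eq_one_of_toPerm_eq_one {x : Gerr A e r n} (hx : toPerm x = 1) : x ^ e = 1 := by
  have hinl : x.1 = SemidirectProduct.inl x.1.left := SemidirectProduct.ext rfl hx
  have hleft : x.1.left ^ e = 1 := funext x.2.1
  refine Subtype.ext ?_
  rw [Subgroup.coe_pow, hinl, ← map_pow, hleft, map_one, Subgroup.coe_one]

theorem not_sq_dvd_card {ℓ : ℕ} (hℓ : ℓ.Prime) [Finite (Gerr A e r ℓ)] (heℓ : ¬ ℓ ∣ e) :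
    ¬ ℓ ^ 2 ∣ Nat.card (Gerr A e r ℓ) := by
  have : Fact ℓ.Prime := ⟨hℓ⟩
  have hker : ¬ ℓ ∣ Nat.card (toPerm : Gerr A e r ℓ →* _).ker := fun hdvd => by
    obtain ⟨x, hx⟩ := exists_prime_orderOf_dvd_card' ℓ hdvd
    have hpow : x ^ e = 1 := Subtype.ext (pow_eq_one_of_toPerm_eq_one x.2)
    exact heℓ (hx ▸ orderOf_dvd_of_pow_eq_one hpow)
  have hcard : Nat.card (toPerm : Gerr A e r ℓ →* _).ker * ℓ.factorial =
      Nat.card (Gerr A e r ℓ) := by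
    rw [← Subgroup.card_mul_index (toPerm : Gerr A e r ℓ →* _).ker, Subgroup.index_ker,
      MonoidHom.range_eq_top.mpr toPerm_surjective, Subgroup.card_top, Nat.card_perm, Nat.card_fin]
  rw [← hcard, ← Nat.mul_factorial_pred hℓ.ne_zero, mul_left_comm, pow_two,
    Nat.mul_dvd_mul_iff_left hℓ.pos, hℓ.dvd_mul, hℓ.dvd_factorial, not_or]
  exact ⟨hker, by have := hℓ.pos; lia⟩

variable {x y : Gerr A e r n}

theorem left_apply_perm_apply {σ : Perm (Fin n)} (h : Commute x (ofPerm σ)) (i : Fin n) :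
    x.1.left (σ i) = x.1.left i := by
  have hleft : x.1.left (σ i) * 1 = 1 * x.1.left (σ.symm (σ i)) :=
    congrFun (congrArg SemidirectProduct.left (congrArg Subtype.val h.eq)) (σ i)
  rwa [mul_one, one_mul, σ.symm_apply_apply] at hleft

theorem right_apply_perm_apply {σ : Perm (Fin n)} (h : Commute x (ofPerm σ)) (i : Fin n) :
    x.1.right (σ i) = σ (x.1.right i) :=
  DFunLike.congr_fun (congrArg SemidirectProduct.right (congrArg Subtype.val h.eq)) i

section Centralizer

variable {c : Perm (Fin n)}

theorem commute_ofPerm_zpow (hx : Commute x (ofPerm c)) (k : ℤ) : Commute x (ofPerm (c ^ k)) := by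
  rw [map_zpow]
  exact hx.zpow_right k

theorem left_apply_eq (hc : c.IsCycleOn Set.univ) (hx : Commute x (ofPerm c)) (i j : Fin n) :
    x.1.left i = x.1.left j := by
  obtain ⟨k, rfl⟩ := hc.2 (Set.mem_univ j) (Set.mem_univ i)
  exact left_apply_perm_apply (commute_ofPerm_zpow hx k) j

theorem eq_of_commute_ofPerm (hc : c.IsCycleOn Set.univ) (hx : Commute x (ofPerm c))
    (hy : Commute y (ofPerm c)) (i : Fin n) (hleft : x.1.left i = y.1.left i)
    (hright : x.1.right i = y.1.right i) : x = y := by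
  refine ext_left_right (funext fun j => ?_) (Equiv.ext fun j => ?_)
  · rw [left_apply_eq hc hx j i, left_apply_eq hc hy j i, hleft]
  · obtain ⟨k, rfl⟩ := hc.2 (Set.mem_univ i) (Set.mem_univ j)
    rw [right_apply_perm_apply (commute_ofPerm_zpow hx k),
      right_apply_perm_apply (commute_ofPerm_zpow hy k), hright]

theorem left_apply_pow_eq_one (hc : c.IsCycleOn Set.univ) (hx : Commute x (ofPerm c))
    (hen : e ∣ n - 1) (i : Fin n) : x.1.left i ^ (e / r) = 1 := by
  have hpow : x.1.left i ^ n = x.1.left i := by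
    obtain ⟨q, hq⟩ := hen
    obtain rfl : n = e * q + 1 := by have := i.pos; lia
    rw [pow_succ, pow_mul, x.2.1 i, one_pow, one_mul]
  have hprod : ∏ j, x.1.left j = x.1.left i := by
    rw [prod_congr rfl fun j _ => left_apply_eq hc hx j i, prod_const, card_univ,
      Fintype.card_fin, hpow]
  exact hprod ▸ x.2.2

theorem card_centralizer_ofPerm_le [NeZero n] {c : Perm (Fin n)} (hc : c.IsCycleOn Set.univ)
    (hm : e / r ≠ 0) (hen : e ∣ n - 1) :
    Nat.card (Subgroup.centralizer {(ofPerm c : Gerr ℂˣ e r n)}) ≤ n * (e / r) := by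
  have : NeZero (e / r) := ⟨hm⟩
  have hcomm (x : Subgroup.centralizer {(ofPerm c : Gerr ℂˣ e r n)}) : Commute x.1 (ofPerm c) :=
    Subgroup.mem_centralizer_singleton_iff.mp x.2
  let f (x : Subgroup.centralizer {(ofPerm c : Gerr ℂˣ e r n)}) :
      Fin n × rootsOfUnity (e / r) ℂ :=
    (x.1.1.right 0, ⟨x.1.1.left 0, left_apply_pow_eq_one hc (hcomm x) hen 0⟩)
  have hf : Injective f := fun x y h =>
    Subtype.ext (eq_of_commute_ofPerm hc (hcomm x) (hcomm y) 0
      (congrArg (fun p => p.2.1) h) (congrArg Prod.fst h))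
  calc Nat.card (Subgroup.centralizer {(ofPerm c : Gerr ℂˣ e r n)})
      ≤ Nat.card (Fin n × rootsOfUnity (e / r) ℂ) := Nat.card_le_card_of_injective f hf
    _ = n * (e / r) := by rw [Nat.card_prod, Nat.card_fin, Complex.card_rootsOfUnity]

end Centralizer

end Gerr

end ReflectionGroup

/-- For a prime `ℓ` and positive integers `e, r` with `r ∣ e ∣ (ℓ - 1)`, the number of
irreducible complex characters of `G(e,r,ℓ)` exceeds the number of those of `ℓ`-defect
zero by exactly `eℓ/r`. -/
theorem numIrr_Gerr_sub_defect_zero (ℓ e r : ℕ) (hℓ : ℓ.Prime)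
    (he : 0 < e) (hr : 0 < r) (hre : r ∣ e) (heℓ : e ∣ ℓ - 1) :
    numIrr (Gerr ℂˣ e r ℓ) = numDefectZero ℓ (Gerr ℂˣ e r ℓ) + e * ℓ / r := by
  have hm : e / r ≠ 0 := (Nat.div_pos (Nat.le_of_dvd he hre) hr).ne'
  have hndvd : ¬ ℓ ∣ e := fun h => Nat.not_dvd_of_pos_of_lt (Nat.sub_pos_of_lt hℓ.one_lt)
    (Nat.sub_lt hℓ.pos one_pos) (h.trans heℓ)
  have : NeZero ℓ := ⟨hℓ.ne_zero⟩
  have := Gerr.finite (r := r) (n := ℓ) he.ne'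
  have hcard : Fintype.card (Fin (Fintype.card (Fin ℓ)) × Fin (e / r)) = ℓ * (e / r) := by simp
  have hζ := (Complex.isPrimitiveRoot_exp (e / r) hm).isUnit_unit hm
  obtain ⟨z, hz, hδz⟩ := Gerr.exists_toPerm_eq_one_prodEntries_eq (n := ℓ) hre hζ.pow_eq_one
  obtain ⟨c, hc, horder, hconj⟩ := exists_isCycleOn_univ_orderOf_eq hℓ
  have hhook (k : Fin (Fintype.card (Fin ℓ))) : IsIrrChar _ (hookRep (Fin ℓ) k).character :=
    ⟨_, simple_hookRep k.2, rfl⟩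
  rw [mul_comm e, Nat.mul_div_assoc ℓ hre, ← hcard]
  refine numIrr_eq_numDefectZero_add_card hℓ (Gerr.not_sq_dvd_card hℓ hndvd)
    ((orderOf_injective _ Gerr.ofPerm_injective c).trans horder) (fun i hi hiℓ => ?_)
    (injective_comp_mul_pow Gerr.toPerm_surjective Gerr.prodEntries hz (hδz ▸ hζ)
      injective_character_hookRep hhook)
    (fun p => (hhook p.1).comp_mul Gerr.toPerm_surjective _) (fun p => ?_) ?_
  · rw [← map_pow]
    exact Gerr.ofPerm.map_isConj (hconj i hi hiℓ)
  · refine ⟨(-1) ^ (p.1 : ℕ), ?_⟩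
    simp [Gerr.toPerm_ofPerm, Gerr.prodEntries_ofPerm, character_hookRep_of_isCycleOn hc p.1.2]
  · rw [hcard]
    exact Gerr.card_centralizer_ofPerm_le hc hm heℓ
end

section
/- Let G = N ≀ S_n be a wreath product of a finite group N with the symmetric group S_n, and ℓ a prime. There is a bijection between the set Irr^0(G) of ℓ-defect-zero irreducible complex characters of G and the set of functions w : Irr^0(N) → {ℓ-core partitions} satisfying Σ_{φ ∈ Irr^0(N)} |w(φ)| = n. -/
open CategoryTheory

/-- The hook length of the cell `(i, j)` of a Young diagram. -/
def hookLength (Y : YoungDiagram) (i j : ℕ) : ℕ :=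
  Y.rowLen i + Y.colLen j - i - j - 1

/-- A Young diagram (partition) is an `ℓ`-core if it has no hook of length `ℓ`. -/
def IsLCore (ℓ : ℕ) (Y : YoungDiagram) : Prop :=
  ∀ c ∈ Y.cells, hookLength Y c.1 c.2 ≠ ℓ

/-!
All irreducible characters of `N ≀ S_n` are produced at once, rather than one Clifford orbit at a
time. For each `φ ∈ Irr N` take `k` copies of a representation affording `φ`, and grade the `i`-th
copy by a variable `x_{φ,i}`. The `n`-th tensor power of the sum of all these representations is a
graded representation of `N ≀ S_n`; multiply its graded character by the product over `φ` of the
Vandermonde determinants in `x_{φ,·}`. The coefficients of the product at exponents strictly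
increasing in `i` for each `φ` are virtual characters, the Frobenius characters.

* They are orthogonal with norm `|N ≀ S_n|`, by the Cauchy identity in its determinantal form.
* The Jacobi–Trudi determinant gives their degrees. In terms of the partitions `w φ` whose
  beta-numbers are the exponents, `|N ≀ S_n| / χ(1) = ∏ φ, (|N| / φ(1)) ^ |w φ| * h(w φ)`, where
  `h` is the product of the hook lengths. The degrees are positive, so the Frobenius characters are
  irreducible.
* A class function orthogonal to all of them vanishes at `1`, since the graded character is
  symmetric in the variables of each `φ`, and since the regular representation of `N ≀ S_n` occurs
  in it for `k = n`. So every irreducible character is a Frobenius character.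

As `ℓ` is prime, it does not divide the product above iff every `w φ ≠ ∅` belongs to a `φ` of defect
zero and no `h(w φ)` is divisible by `ℓ`. The latter means that `w φ` is an `ℓ`-core: the
hook lengths in a row are the `x` for which `β - x` is a gap in the set of beta-numbers, where `β`
is the beta-number of the row, so if `ℓ` is not a hook length, then neither is any multiple of `ℓ`.
-/

/-! ### Characters and virtual characters -/

section Irreducibility

open Representation Module

universe u

variable {k G V : Type u} [Field k] [Group G] [AddCommGroup V] [Module k V] [FiniteDimensional k V]

lemma isIrreducible_of_simple (ρ : Representation k G V) [Simple (FDRep.of ρ)] :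
    ρ.IsIrreducible := by
  have hV : Nontrivial V := by
    by_contra! h
    exact id_nonzero (FDRep.of ρ) (by ext x; exact Subsingleton.elim (α := V) _ _)
  have : Nontrivial (Subrepresentation ρ) :=
    ⟨⊥, ⊤, fun h ↦ bot_ne_top (α := Submodule k V) (congrArg Subrepresentation.toSubmodule h)⟩
  refine ⟨fun a ↦ ?_⟩
  let ι : FDRep.of a.toRepresentation ⟶ FDRep.of ρ :=
    ⟨FGModuleCat.ofHom a.toSubmodule.subtype, fun _ ↦ by rfl⟩
  have : Mono ι := ConcreteCategory.mono_of_injective ι Subtype.val_injective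
  by_cases hι : ι = 0
  · left
    refine Subrepresentation.toSubmodule_injective ((Submodule.eq_bot_iff _).mpr fun x hx ↦ ?_)
    exact congr($hι ⟨x, hx⟩)
  · right
    have := isIso_of_mono_of_nonzero hι
    have hsurj : Function.Surjective ι := (ConcreteCategory.bijective_of_isIso ι).2
    refine Subrepresentation.toSubmodule_injective (Submodule.eq_top_iff'.mpr fun x ↦ ?_)
    obtain ⟨y, rfl⟩ := hsurj x
    exact y.2

lemma isIrreducible_iff_sum_character_mul_character_inv [IsAlgClosed k] [CharZero k] [Fintype G]
    (ρ : Representation k G V) :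
    ρ.IsIrreducible ↔ ∑ g, ρ.character g * ρ.character g⁻¹ = Nat.card G := by
  constructor
  · intro _
    have hG : (Nat.card G : k) ≠ 0 := by simp
    have := invertibleOfNonzero hG
    have := char_orthonormal ρ ρ
    rwa [if_pos ⟨.refl ρ⟩, inv_mul_eq_one₀ hG, eq_comm] at this
  · intro h
    have : Simple (FDRep.of ρ) := (FDRep.simple_iff_char_is_norm_one _).mpr h
    exact isIrreducible_of_simple ρ

lemma isIrrChar_character {G V : Type} [Group G] [Finite G] [AddCommGroup V] [Module ℂ V]
    [FiniteDimensional ℂ V] (ρ : Representation ℂ G V) [hρ : ρ.IsIrreducible] :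
    IsIrrChar G ρ.character := by
  have := Fintype.ofFinite G
  exact ⟨FDRep.of ρ, (FDRep.simple_iff_char_is_norm_one _).mpr
    ((isIrreducible_iff_sum_character_mul_character_inv ρ).mp hρ), rfl⟩

end Irreducibility

section CharacterOfSum

open Representation Module

variable {k G V : Type*} [Field k] [Group G] [AddCommGroup V] [Module k V]
  {ρ : Representation k G V}

lemma isCompl_toSubmodule {a b : Subrepresentation ρ} (hab : IsCompl a b) :
    IsCompl a.toSubmodule b.toSubmodule where
  disjoint := disjoint_iff.mpr (congrArg Subrepresentation.toSubmodule hab.inf_eq_bot)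
  codisjoint := codisjoint_iff.mpr (congrArg Subrepresentation.toSubmodule hab.sup_eq_top)

variable [FiniteDimensional k V]

lemma character_eq_add_of_isCompl {a b : Subrepresentation ρ} (hab : IsCompl a b) :
    ρ.character = a.toRepresentation.character + b.toRepresentation.character := by
  ext g
  let p (i : Bool) : Submodule k V := cond i a.toSubmodule b.toSubmodule
  have hp : DirectSum.IsInternal p := by
    rw [DirectSum.isInternal_submodule_iff_isCompl p (i := true) (j := false) (by simp)]
    · exact isCompl_toSubmodule hab
    · ext i; cases i <;> simp
  have hmaps : ∀ i, Set.MapsTo (ρ g) (p i) (p i)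
    | true => fun _ hx ↦ a.apply_mem_toSubmodule g hx
    | false => fun _ hx ↦ b.apply_mem_toSubmodule g hx
  exact (LinearMap.trace_eq_sum_trace_restrict hp hmaps).trans (Fintype.sum_bool _)

lemma exists_isCompl_finrank_lt [IsSemisimpleRepresentation ρ] [Nontrivial V]
    (hρ : ¬ ρ.IsIrreducible) :
    ∃ a b : Subrepresentation ρ, IsCompl a b ∧
      finrank k a.toSubmodule < finrank k V ∧ finrank k b.toSubmodule < finrank k V := by
  have : Nontrivial (Subrepresentation ρ) :=
    ⟨⊥, ⊤, fun h ↦ bot_ne_top (α := Submodule k V) (congrArg Subrepresentation.toSubmodule h)⟩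
  obtain ⟨a, ha_bot, ha_top⟩ : ∃ a : Subrepresentation ρ, a ≠ ⊥ ∧ a ≠ ⊤ := by
    by_contra! h
    exact hρ ⟨fun a ↦ or_iff_not_imp_left.mpr (h a)⟩
  obtain ⟨b, hab⟩ := exists_isCompl a
  have hb_top : b ≠ ⊤ := fun h ↦ ha_bot (eq_bot_of_isCompl_top (h ▸ hab))
  exact ⟨a, b, hab,
    Submodule.finrank_lt fun h ↦ ha_top (Subrepresentation.toSubmodule_injective h),
    Submodule.finrank_lt fun h ↦ hb_top (Subrepresentation.toSubmodule_injective h)⟩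

end CharacterOfSum

section VirtualCharacters

open Representation Module

/-- The set `Irr(G)` of irreducible complex characters, as a type. -/
abbrev Irr (G : Type) [Group G] : Type := {χ : G → ℂ // IsIrrChar G χ}

/-- The ring `ℤ Irr(G)` of virtual characters, as an additive group of functions. -/
def virtualChars (G : Type) [Group G] : AddSubgroup (G → ℂ) :=
  AddSubgroup.closure {χ | IsIrrChar G χ}

/-- The character pairing `∑ g, f g * h g⁻¹`. It is bilinear rather than hermitian, and it is not
divided by `|G|`, so irreducible characters have norm `|G|`. -/
def charPairing (G : Type) [Group G] [Fintype G] : (G → ℂ) →ₗ[ℂ] (G → ℂ) →ₗ[ℂ] ℂ :=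
  LinearMap.mk₂ ℂ (fun f h ↦ ∑ g, f g * h g⁻¹)
    (fun _ _ _ ↦ by simp [add_mul, Finset.sum_add_distrib])
    (fun _ _ _ ↦ by simp [mul_assoc, Finset.mul_sum])
    (fun _ _ _ ↦ by simp [mul_add, Finset.sum_add_distrib])
    (fun _ _ _ ↦ by simp [mul_left_comm, Finset.mul_sum])

variable {G : Type} [Group G]

lemma charPairing_apply [Fintype G] (f h : G → ℂ) : charPairing G f h = ∑ g, f g * h g⁻¹ := rfl

open scoped Classical in
lemma IsIrrChar.charPairing_eq_ite [Fintype G] {χ ψ : G → ℂ} (hχ : IsIrrChar G χ)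
    (hψ : IsIrrChar G ψ) : charPairing G χ ψ = if χ = ψ then (Nat.card G : ℂ) else 0 := by
  obtain ⟨V, _, rfl⟩ := hχ
  obtain ⟨W, _, rfl⟩ := hψ
  have hG : (Nat.card G : ℂ) ≠ 0 := by simp
  have := invertibleOfNonzero hG
  have hVW := FDRep.char_orthonormal V W
  have hW := FDRep.char_orthonormal W W
  rw [charPairing_apply]
  by_cases h : Nonempty (V ≅ W)
  · rw [if_pos (FDRep.char_iso h.some)]
    rwa [if_pos h, inv_mul_eq_one₀ hG, eq_comm] at hVW
  · have hne : V.character ≠ W.character := by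
      rintro hVW'
      rw [hVW', hW, if_pos ⟨Iso.refl W⟩, if_neg h] at hVW
      exact one_ne_zero hVW
    rw [if_neg hne]
    rw [if_neg h] at hVW
    exact (mul_eq_zero.mp hVW).resolve_left (inv_ne_zero hG)

lemma IsIrrChar.exists_nat_apply_one {χ : G → ℂ} (hχ : IsIrrChar G χ) :
    ∃ d : ℕ, 0 < d ∧ χ 1 = d := by
  obtain ⟨V, hV, rfl⟩ := hχ
  refine ⟨finrank ℂ V, Nat.pos_of_ne_zero fun h ↦ ?_, FDRep.char_one V⟩
  have : Subsingleton V := finrank_zero_iff.mp h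
  exact id_nonzero V (by ext x; exact Subsingleton.elim (α := V) _ _)

instance [Finite G] : Finite (Irr G) := by
  classical
  have := Fintype.ofFinite G
  have hli : LinearIndependent ℂ (fun χ : Irr G ↦ (χ : G → ℂ)) := by
    refine linearIndependent_iff'.mpr fun s c hc χ hχ ↦ ?_
    have h : charPairing G (∑ i ∈ s, c i • (i : G → ℂ)) χ = 0 := by rw [hc]; simp
    have hpair (ψ : Irr G) : charPairing G ψ χ = if ψ = χ then (Nat.card G : ℂ) else 0 := by
      simp only [ψ.2.charPairing_eq_ite χ.2, Subtype.ext_iff]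
    simpa [hpair, hχ] using h
  exact hli.finite

noncomputable instance [Finite G] : Fintype (Irr G) := Fintype.ofFinite _

lemma character_mem_virtualChars [Finite G] {V : Type} [AddCommGroup V] [Module ℂ V]
    [FiniteDimensional ℂ V] (ρ : Representation ℂ G V) : ρ.character ∈ virtualChars G := by
  induction hm : finrank ℂ V using Nat.strong_induction_on generalizing V with
  | _ m ih =>
  subst hm
  by_cases hirr : ρ.IsIrreducible
  · exact AddSubgroup.subset_closure (isIrrChar_character ρ)
  rcases subsingleton_or_nontrivial V with hV | hV
  · have : ρ.character = 0 := by
      ext g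
      simp [Representation.character, Subsingleton.elim (ρ g) 0]
    exact this ▸ zero_mem _
  have : NeZero (Nat.card G : ℂ) := ⟨Nat.cast_ne_zero.mpr Nat.card_pos.ne'⟩
  obtain ⟨a, b, hab, ha, hb⟩ := exists_isCompl_finrank_lt hirr
  rw [character_eq_add_of_isCompl hab]
  exact add_mem (ih _ ha _ rfl) (ih _ hb _ rfl)

lemma exists_int_eq_sum_of_mem_virtualChars [Finite G] {f : G → ℂ} (hf : f ∈ virtualChars G) :
    ∃ c : Irr G → ℤ, f = ∑ χ, (c χ : ℂ) • (χ : G → ℂ) := by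
  classical
  induction hf using AddSubgroup.closure_induction with
  | mem χ hχ =>
    refine ⟨Pi.single ⟨χ, hχ⟩ 1, ?_⟩
    simp [Pi.single_apply]
  | zero => exact ⟨0, by simp⟩
  | add _ _ _ _ hf hh =>
    obtain ⟨c, rfl⟩ := hf
    obtain ⟨c', rfl⟩ := hh
    exact ⟨c + c', by simp [add_smul, Finset.sum_add_distrib]⟩
  | neg _ _ hf =>
    obtain ⟨c, rfl⟩ := hf
    exact ⟨-c, by simp⟩

variable [Fintype G]

lemma charPairing_sum_smul_irr (c : Irr G → ℂ) (χ : Irr G) :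
    charPairing G (∑ ψ, c ψ • (ψ : G → ℂ)) χ = c χ * Nat.card G := by
  classical
  have hpair (ψ : Irr G) : charPairing G ψ χ = if ψ = χ then (Nat.card G : ℂ) else 0 := by
    simp only [ψ.2.charPairing_eq_ite χ.2, Subtype.ext_iff]
  simp [hpair]

lemma card_smul_eq_sum_charPairing_smul {f : G → ℂ} (hf : f ∈ virtualChars G) :
    (Nat.card G : ℂ) • f = ∑ χ : Irr G, charPairing G f χ • (χ : G → ℂ) := by
  obtain ⟨c, rfl⟩ := exists_int_eq_sum_of_mem_virtualChars hf
  simp only [charPairing_sum_smul_irr, Finset.smul_sum, smul_smul, mul_comm]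

lemma charPairing_self_sum_smul_irr (c : Irr G → ℂ) :
    charPairing G (∑ ψ, c ψ • (ψ : G → ℂ)) (∑ ψ, c ψ • (ψ : G → ℂ)) =
      Nat.card G * ∑ χ, c χ ^ 2 := by
  rw [map_sum, Finset.mul_sum]
  refine Finset.sum_congr rfl fun χ _ ↦ ?_
  rw [map_smul, charPairing_sum_smul_irr, smul_eq_mul]
  ring

lemma exists_eq_irr_or_eq_neg_irr_of_charPairing_self {f : G → ℂ} (hf : f ∈ virtualChars G)
    (hnorm : charPairing G f f = Nat.card G) :
    ∃ χ : Irr G, f = χ ∨ f = -(χ : G → ℂ) := by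
  classical
  obtain ⟨c, rfl⟩ := exists_int_eq_sum_of_mem_virtualChars hf
  have hsq : ∑ χ, c χ ^ 2 = 1 := by
    rw [charPairing_self_sum_smul_irr] at hnorm
    exact_mod_cast (mul_eq_left₀ (by simp)).mp hnorm
  obtain ⟨χ, hχ⟩ : ∃ χ, c χ ≠ 0 := by
    by_contra! h
    simp [h] at hsq
  have hrest := Finset.add_sum_erase Finset.univ (fun ψ ↦ c ψ ^ 2) (Finset.mem_univ χ)
  have hrest_nonneg := Finset.sum_nonneg fun ψ (_ : ψ ∈ Finset.univ.erase χ) ↦ sq_nonneg (c ψ)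
  have hχ_pos : 0 < c χ ^ 2 := by positivity
  have hzero : ∀ ψ ≠ χ, c ψ = 0 := fun ψ hψ ↦ by
    have hsum : ∑ ψ ∈ Finset.univ.erase χ, c ψ ^ 2 = 0 := by omega
    rw [Finset.sum_eq_zero_iff_of_nonneg fun _ _ ↦ sq_nonneg _] at hsum
    simpa using hsum ψ (by simp [hψ])
  have hf : ∑ ψ, (c ψ : ℂ) • (ψ : G → ℂ) = (c χ : ℂ) • (χ : G → ℂ) :=
    Finset.sum_eq_single χ (fun ψ _ hψ ↦ by simp [hzero ψ hψ]) (by simp)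
  have hunit : c χ = 1 ∨ c χ = -1 := sq_eq_one_iff.mp (by omega)
  refine ⟨χ, hunit.imp (fun h ↦ ?_) fun h ↦ ?_⟩ <;> rw [hf, h] <;> simp

lemma isIrrChar_of_mem_virtualChars {f : G → ℂ} (hf : f ∈ virtualChars G)
    (hnorm : charPairing G f f = Nat.card G) {d : ℕ} (hd : f 1 = d) : IsIrrChar G f := by
  obtain ⟨χ, rfl | rfl⟩ := exists_eq_irr_or_eq_neg_irr_of_charPairing_self hf hnorm
  · exact χ.2
  · obtain ⟨e, he, heq⟩ := χ.2.exists_nat_apply_one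
    have : (d + e : ℂ) = 0 := by rw [← hd, ← heq]; simp
    have : d + e = 0 := by exact_mod_cast this
    omega

end VirtualCharacters

/-! ### Matrix representations and Schur orthogonality -/

section MatrixRep

open Representation Module

/-- The representation on column vectors given by matrices `R g`. -/
def matrixRep {k G m : Type*} [Field k] [Monoid G] [Fintype m] [DecidableEq m]
    (R : G →* Matrix m m k) : Representation k G (m → k) :=
  (Matrix.toLinAlgEquiv' : Matrix m m k ≃ₐ[k] _).toMulEquiv.toMonoidHom.comp R

lemma character_matrixRep {k G m : Type*} [Field k] [Monoid G] [Fintype m] [DecidableEq m]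
    (R : G →* Matrix m m k) (g : G) : (matrixRep R).character g = (R g).trace :=
  Matrix.trace_toLin'_eq (R g)

variable {G m m' : Type} [Group G] [Fintype m] [DecidableEq m] [Fintype m'] [DecidableEq m']
  {R : G →* Matrix m m ℂ} {R' : G →* Matrix m' m' ℂ}

lemma trace_mem_virtualChars [Finite G] (R : G →* Matrix m m ℂ) :
    (fun g ↦ (R g).trace) ∈ virtualChars G := by
  simpa only [← character_matrixRep] using character_mem_virtualChars (matrixRep R)

lemma IsIrrChar.exists_matrixRep [Finite G] {χ : G → ℂ} (hχ : IsIrrChar G χ) :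
    ∃ (d : ℕ) (R : G →* Matrix (Fin d) (Fin d) ℂ),
      (matrixRep R).IsIrreducible ∧ ∀ g, χ g = (R g).trace := by
  have := Fintype.ofFinite G
  obtain ⟨V, hV, rfl⟩ := hχ
  let b := finBasis ℂ V
  let R := (LinearMap.toMatrixAlgEquiv b).toMulEquiv.toMonoidHom.comp V.ρ
  have htrace (g : G) : V.character g = (R g).trace := LinearMap.trace_eq_matrix_trace ℂ b _
  refine ⟨_, R, ?_, htrace⟩
  simp only [isIrreducible_iff_sum_character_mul_character_inv, character_matrixRep, ← htrace]
  exact (FDRep.simple_iff_char_is_norm_one V).mp hV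

/-- The intertwining map between matrix representations given by a matrix. -/
def matrixIntertwiningMap (E : Matrix m m' ℂ) (hE : ∀ g, R g * E = E * R' g) :
    IntertwiningMap (matrixRep R') (matrixRep R) :=
  ⟨Matrix.toLin' E, fun g ↦ by
    simp only [matrixRep, MonoidHom.coe_comp, Function.comp_apply]
    exact (Matrix.toLin'_mul E (R' g)).symm.trans
      ((congrArg _ (hE g)).symm.trans (Matrix.toLin'_mul (R g) E))⟩

lemma eq_zero_of_mul_eq_mul (hR : (matrixRep R).IsIrreducible) (hR' : (matrixRep R').IsIrreducible)
    (hne : (matrixRep R).character ≠ (matrixRep R').character) {E : Matrix m m' ℂ}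
    (hE : ∀ g, R g * E = E * R' g) : E = 0 := by
  rcases IsIrreducible.bijective_or_eq_zero (matrixIntertwiningMap E hE) with h | h
  · exact absurd (char_iso (IntertwiningMap.ofBijective _ h)).symm hne
  · exact Matrix.toLin'.map_eq_zero_iff.mp (congrArg IntertwiningMap.toLinearMap h)

lemma exists_eq_smul_one_of_mul_eq_mul (hR : (matrixRep R).IsIrreducible) {E : Matrix m m ℂ}
    (hE : ∀ g, R g * E = E * R g) : ∃ c : ℂ, E = c • 1 := by
  obtain ⟨c, hc⟩ := (IsIrreducible.algebraMap_intertwiningMap_bijective_of_isAlgClosed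
    (ρ := matrixRep R)).2 (matrixIntertwiningMap E hE)
  refine ⟨c, Matrix.toLin'.injective ?_⟩
  rw [map_smul, Matrix.toLin'_one]
  exact (congrArg IntertwiningMap.toLinearMap hc).symm

lemma card_ne_zero_of_isIrreducible (hR : (matrixRep R).IsIrreducible) :
    Fintype.card m ≠ 0 := fun h ↦ by
  have := Fintype.card_eq_zero_iff.mp h
  obtain ⟨a, b, hab⟩ := hR.toNontrivial
  exact hab (Subrepresentation.toSubmodule_injective (Subsingleton.elim _ _))

variable [Fintype G]

lemma mul_sum_conj (R : G →* Matrix m m ℂ) (R' : G →* Matrix m' m' ℂ) (S : Matrix m m' ℂ) (s : G) :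
    R s * ∑ t, R t * S * R' t⁻¹ = (∑ t, R t * S * R' t⁻¹) * R' s := by
  rw [Matrix.mul_sum, Matrix.sum_mul,
    ← Equiv.sum_comp (Equiv.mulLeft s) fun t ↦ R t * S * R' t⁻¹ * R' s]
  refine Finset.sum_congr rfl fun t _ ↦ ?_
  rw [Equiv.coe_mulLeft, Matrix.mul_assoc (R (s * t) * S), ← map_mul R', map_mul R]
  simp [Matrix.mul_assoc]

lemma sum_conj_single_apply (R : G →* Matrix m m ℂ) (R' : G →* Matrix m' m' ℂ) (i j : m)
    (i' j' : m') :
    (∑ t, R t * Matrix.single j i' (1 : ℂ) * R' t⁻¹) i j' = ∑ t, R t i j * R' t⁻¹ i' j' := by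
  simp [Matrix.sum_apply, Matrix.mul_apply, Matrix.single_apply, ite_and]

lemma sum_mul_inv_eq_zero (hR : (matrixRep R).IsIrreducible) (hR' : (matrixRep R').IsIrreducible)
    (hne : (matrixRep R).character ≠ (matrixRep R').character) (i j : m) (i' j' : m') :
    ∑ t, R t i j * R' t⁻¹ i' j' = 0 := by
  rw [← sum_conj_single_apply, eq_zero_of_mul_eq_mul hR hR' hne (mul_sum_conj R R' _)]
  rfl

lemma sum_mul_inv_eq_ite (hR : (matrixRep R).IsIrreducible) (i j i' j' : m) :
    ∑ t, R t i j * R t⁻¹ i' j' =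
      if i = j' ∧ j = i' then (Nat.card G : ℂ) / Fintype.card m else 0 := by
  obtain ⟨c, hc⟩ := exists_eq_smul_one_of_mul_eq_mul hR (mul_sum_conj R R (Matrix.single j i' 1))
  have hm : (Fintype.card m : ℂ) ≠ 0 := Nat.cast_ne_zero.mpr (card_ne_zero_of_isIrreducible hR)
  have htrace : c * Fintype.card m = if j = i' then (Nat.card G : ℂ) else 0 := by
    have hconj (t : G) : (R t * Matrix.single j i' 1 * R t⁻¹).trace = if j = i' then 1 else 0 := by
      rw [Matrix.trace_mul_comm, ← Matrix.mul_assoc, ← map_mul, inv_mul_cancel, map_one,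
        Matrix.one_mul]
      split_ifs with h
      · subst h; simp
      · exact Matrix.trace_single_eq_of_ne _ _ _ h
    have := congrArg Matrix.trace hc
    rw [Matrix.trace_sum, Matrix.trace_smul, Matrix.trace_one] at this
    simpa [hconj, apply_ite] using this.symm
  rw [← sum_conj_single_apply, hc, (eq_div_iff hm).mpr htrace, Matrix.smul_apply, Matrix.one_apply]
  by_cases hi : i = j' <;> by_cases hj : j = i' <;> simp [hi, hj]

lemma sum_commutator_eq_smul_one (hR : (matrixRep R).IsIrreducible) :
    ∑ g, ∑ h, R (g * h * g⁻¹ * h⁻¹) =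
      ((Nat.card G : ℂ) / Fintype.card m) ^ 2 • (1 : Matrix m m ℂ) := by
  ext i j
  have hentry (g h : G) : R (g * h * g⁻¹ * h⁻¹) i j =
      ∑ a, ∑ b, ∑ c, R g i c * R g⁻¹ b a * (R h c b * R h⁻¹ a j) := by
    simp only [map_mul, Matrix.mul_apply, Finset.sum_mul]
    refine Finset.sum_congr rfl fun a _ ↦ Finset.sum_congr rfl fun b _ ↦
      Finset.sum_congr rfl fun c _ ↦ by ring
  simp only [Matrix.sum_apply, hentry]
  calc ∑ g, ∑ h, ∑ a, ∑ b, ∑ c, R g i c * R g⁻¹ b a * (R h c b * R h⁻¹ a j)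
      = ∑ a, ∑ b, ∑ c, (∑ g, R g i c * R g⁻¹ b a) * ∑ h, R h c b * R h⁻¹ a j := by
        simp only [Finset.sum_mul_sum]
        simp only [Finset.sum_comm (s := (Finset.univ : Finset G)) (t := (Finset.univ : Finset m))]
    _ = _ := by
        simp only [sum_mul_inv_eq_ite hR, Matrix.smul_apply, Matrix.one_apply]
        rw [Finset.sum_eq_single i, Finset.sum_eq_single i, Finset.sum_eq_single i]
        all_goals simp +contextual [sq, eq_comm]

omit [Fintype G] in
-- The eigenvalue `(|G| / d) ^ 2` of an element of `ℤ[G]` is an algebraic integer.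
lemma card_dvd_card_of_isIrreducible [Finite G] (hR : (matrixRep R).IsIrreducible) :
    Fintype.card m ∣ Nat.card G := by
  have := Fintype.ofFinite G
  have hm : (Fintype.card m : ℚ) ≠ 0 := Nat.cast_ne_zero.mpr (card_ne_zero_of_isIrreducible hR)
  have : Nonempty m := Fintype.card_pos_iff.mp (card_ne_zero_of_isIrreducible hR).pos
  let e : MonoidAlgebra ℤ G := ∑ g, ∑ h, MonoidAlgebra.single (g * h * g⁻¹ * h⁻¹) 1
  have he : MonoidAlgebra.lift ℤ (Matrix m m ℂ) G R e =
      algebraMap ℚ (Matrix m m ℂ) (((Nat.card G : ℚ) / Fintype.card m) ^ 2) := by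
    simp only [e, map_sum, MonoidAlgebra.lift_single, one_smul, sum_commutator_eq_smul_one hR]
    rw [IsScalarTower.algebraMap_apply ℚ ℂ, Algebra.algebraMap_eq_smul_one]
    simp
  have hint : IsIntegral ℤ (((Nat.card G : ℚ) / Fintype.card m) ^ 2) := by
    rw [← isIntegral_algebraMap_iff (algebraMap ℚ (Matrix m m ℂ)).injective, ← he]
    exact (IsIntegral.of_finite ℤ e).map _
  obtain ⟨z, hz⟩ := IsIntegrallyClosed.isIntegral_iff.mp (IsIntegral.of_pow two_pos hint)
  rw [eq_div_iff hm, eq_intCast] at hz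
  refine Int.natCast_dvd_natCast.mp ⟨z, ?_⟩
  rw [mul_comm]
  exact_mod_cast hz.symm

end MatrixRep

section CompleteSystem

open Representation Module

variable {G : Type} [Group G] [Fintype G]

/-- The degree `χ(1)` as a natural number. -/
noncomputable def irrDeg (χ : Irr G) : ℕ := χ.2.exists_matrixRep.choose

/-- A chosen matrix representation affording `χ`. -/
noncomputable def irrRep (χ : Irr G) : G →* Matrix (Fin (irrDeg χ)) (Fin (irrDeg χ)) ℂ :=
  χ.2.exists_matrixRep.choose_spec.choose

lemma isIrreducible_irrRep (χ : Irr G) : (matrixRep (irrRep χ)).IsIrreducible :=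
  χ.2.exists_matrixRep.choose_spec.choose_spec.1

lemma trace_irrRep (χ : Irr G) (g : G) : (irrRep χ g).trace = χ.1 g :=
  (χ.2.exists_matrixRep.choose_spec.choose_spec.2 g).symm

lemma irr_apply_one (χ : Irr G) : χ.1 1 = irrDeg χ := by simp [← trace_irrRep]

lemma irrDeg_ne_zero (χ : Irr G) : irrDeg χ ≠ 0 := by
  simpa using card_ne_zero_of_isIrreducible (isIrreducible_irrRep χ)

lemma irrDeg_dvd_card (χ : Irr G) : irrDeg χ ∣ Nat.card G := by
  simpa using card_dvd_card_of_isIrreducible (isIrreducible_irrRep χ)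

/-- The index set of the matrices of `sumIrrRep`: a coordinate of one of the `irrRep χ`. -/
abbrev IrrIndex (G : Type) [Group G] [Fintype G] : Type := Σ χ : Irr G, Fin (irrDeg χ)

open scoped Classical in
/-- The direct sum of the representations `irrRep χ`, each taken once. -/
noncomputable def sumIrrRep (G : Type) [Group G] [Fintype G] :
    G →* Matrix (IrrIndex G) (IrrIndex G) ℂ where
  toFun t := Matrix.blockDiagonal' fun χ ↦ irrRep χ t
  map_one' := by simp [Matrix.blockDiagonal'_one, ← Pi.one_def]
  map_mul' s t := by simp [← Matrix.blockDiagonal'_mul]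

lemma sumIrrRep_apply_eq (χ : Irr G) (t : G) (i j : Fin (irrDeg χ)) :
    sumIrrRep G t ⟨χ, i⟩ ⟨χ, j⟩ = irrRep χ t i j := by
  classical exact Matrix.blockDiagonal'_apply_eq (fun χ ↦ irrRep χ t) χ i j

lemma sumIrrRep_apply_ne (t : G) {u v : IrrIndex G} (h : u.1 ≠ v.1) : sumIrrRep G t u v = 0 := by
  classical exact Matrix.blockDiagonal'_apply_ne (fun χ ↦ irrRep χ t) u.2 v.2 h

lemma character_irrRep_injective :
    Function.Injective fun χ : Irr G ↦ (matrixRep (irrRep χ)).character := fun χ ψ h ↦ by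
  ext g
  simpa only [character_matrixRep, trace_irrRep] using congrFun h g

open scoped Classical in
lemma sum_sumIrrRep_mul_sumIrrRep_inv (u u' v' v : IrrIndex G) :
    ∑ t, sumIrrRep G t u u' * sumIrrRep G t⁻¹ v' v =
      if u.1 = u'.1 ∧ u = v ∧ u' = v' then (Nat.card G : ℂ) / irrDeg u.1 else 0 := by
  by_cases hu : u.1 = u'.1
  swap
  · simp [sumIrrRep_apply_ne _ hu, hu]
  by_cases hv : v'.1 = v.1
  swap
  · rw [if_neg (by rintro ⟨_, rfl, rfl⟩; exact hv hu.symm)]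
    simp [sumIrrRep_apply_ne _ hv]
  obtain ⟨χ, i⟩ := u
  obtain ⟨_, j⟩ := u'
  obtain ⟨ψ, i'⟩ := v'
  obtain ⟨_, j'⟩ := v
  cases hu
  cases hv
  simp only [sumIrrRep_apply_eq]
  by_cases h : χ = ψ
  · subst h
    simp [sum_mul_inv_eq_ite (isIrreducible_irrRep χ)]
  · rw [sum_mul_inv_eq_zero (isIrreducible_irrRep χ) (isIrreducible_irrRep ψ)
      (character_irrRep_injective.ne h), if_neg]
    exact fun h' ↦ h (congrArg Sigma.fst h'.2.1)

lemma sum_sumIrrRep_diag {M : Type*} [AddCommMonoid M] [Module ℂ M] (c : Irr G → M) (t : G) :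
    ∑ u : IrrIndex G, sumIrrRep G t u u • c u.1 = ∑ χ : Irr G, χ.1 t • c χ := by
  simp only [Fintype.sum_sigma, sumIrrRep_apply_eq, ← Finset.sum_smul, ← trace_irrRep]
  rfl

open scoped Classical in
lemma sum_irrDeg_mul_sumIrrRep_diag (t : G) :
    ∑ u : IrrIndex G, (irrDeg u.1 : ℂ) * sumIrrRep G t u u =
      if t = 1 then (Nat.card G : ℂ) else 0 := by
  let L : G →* Matrix G G ℂ :=
    { toFun g := Matrix.of fun a b ↦ if a = g * b then 1 else 0
      map_one' := by ext; simp [Matrix.one_apply]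
      map_mul' := by intros; ext; simp [Matrix.mul_apply, mul_assoc] }
  have htrace : (fun g ↦ (L g).trace) = fun g ↦ if g = 1 then (Nat.card G : ℂ) else 0 := by
    ext g
    by_cases hg : g = 1 <;> simp [Matrix.trace, L, hg]
  have hpair (χ : Irr G) : charPairing G (fun g ↦ (L g).trace) χ = Nat.card G * irrDeg χ := by
    simp [htrace, charPairing_apply, irr_apply_one]
  have hexpand := congrFun (card_smul_eq_sum_charPairing_smul (trace_mem_virtualChars L)) t
  simp only [hpair, mul_smul, ← Finset.smul_sum, Pi.smul_apply, Finset.sum_apply] at hexpand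
  have hG : (Nat.card G : ℂ) ≠ 0 := Nat.cast_ne_zero.mpr Nat.card_pos.ne'
  rw [← congrFun htrace t, smul_right_injective ℂ hG hexpand]
  simpa [mul_comm] using sum_sumIrrRep_diag (fun χ : Irr G ↦ (irrDeg χ : ℂ)) t

end CompleteSystem

/-! ### Tensor powers as representations of wreath products -/

section TensorPower

open MvPolynomial

variable {J ι : Type*} [Fintype J]

/-- The content of a tuple `s`: the number of times each value is taken. -/
noncomputable def content (s : J → ι) : ι →₀ ℕ := ∑ j, Finsupp.single (s j) 1

lemma content_apply [DecidableEq ι] (s : J → ι) (a : ι) :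
    content s a = Fintype.card {j // s j = a} := by
  rw [content, Finsupp.finsetSum_apply, Fintype.card_subtype, Finset.card_filter]
  exact Finset.sum_congr rfl fun j _ ↦ Finsupp.single_apply

lemma content_comp_perm (s : J → ι) (σ : Equiv.Perm J) : content (s ∘ σ) = content s :=
  Equiv.sum_comp σ fun j ↦ Finsupp.single (s j) 1

lemma prod_X_eq_monomial_content {R : Type*} [CommSemiring R] (s : J → ι) :
    ∏ j, (X (s j) : MvPolynomial ι R) = monomial (content s) 1 := by
  simp only [X, content, ← monomial_sum_one]

variable {N : Type} [Group N] {B K : Type*} [Fintype B] [DecidableEq B] [CommSemiring K]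

/-- The action of `N ≀ S_n` on the `n`-th tensor power of a representation `R` of `N`, in the
basis of pure tensors of basis vectors. -/
def tensorPowerRep (R : N →* Matrix B B K) (n : ℕ) :
    Wreath N n →* Matrix (Fin n → B) (Fin n → B) K where
  toFun g := Matrix.of fun b b' ↦ ∏ j, R (g.left j) (b j) (b' (g.right⁻¹ j))
  map_one' := by
    ext b b'
    simp only [SemidirectProduct.one_left, Pi.one_apply, map_one, SemidirectProduct.one_right,
      inv_one, Equiv.Perm.coe_one, id_eq, Matrix.of_apply, Matrix.one_apply, funext_iff,
      Fintype.prod_boole]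
    congr
  map_mul' g g' := by
    ext b c
    have hleft (j) : (g * g').left j = g.left j * g'.left (g.right⁻¹ j) := rfl
    have hright (j) : (g * g').right⁻¹ j = g'.right⁻¹ (g.right⁻¹ j) := by
      simp [SemidirectProduct.mul_right]
    simp only [Matrix.of_apply, Matrix.mul_apply, hleft, hright, map_mul]
    rw [← Equiv.sum_comp (Equiv.arrowCongr g.right.symm (Equiv.refl B)), Finset.prod_univ_sum,
      Fintype.piFinset_univ]
    refine Finset.sum_congr rfl fun b' _ ↦ ?_
    rw [← Equiv.prod_comp g.right⁻¹ fun j ↦ R (g'.left j) _ _, ← Finset.prod_mul_distrib]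
    simp [Equiv.arrowCongr]

lemma tensorPowerRep_apply (R : N →* Matrix B B K) (n : ℕ) (g : Wreath N n) (b b' : Fin n → B) :
    tensorPowerRep R n g b b' = ∏ j, R (g.left j) (b j) (b' (g.right⁻¹ j)) := rfl

lemma tensorPowerRep_inv_apply (R : N →* Matrix B B K) {n : ℕ} (f : Fin n → N)
    (σ : Equiv.Perm (Fin n)) (b b' : Fin n → B) :
    tensorPowerRep R n (⟨f, σ⟩ : Wreath N n)⁻¹ b b' =
      ∏ j, R (f j)⁻¹ (b (σ⁻¹ j)) (b' j) := by
  rw [tensorPowerRep_apply, ← Equiv.prod_comp σ⁻¹]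
  refine Finset.prod_congr rfl fun j _ ↦ ?_
  have hleft : (⟨f, σ⟩ : Wreath N n)⁻¹.left (σ⁻¹ j) = (f j)⁻¹ := by
    change (f (σ (σ⁻¹ j)))⁻¹ = _
    simp
  have hright : (⟨f, σ⟩ : Wreath N n)⁻¹.right⁻¹ (σ⁻¹ j) = j := by simp
  rw [hleft, hright]

/-- The trace of `g` on the tensor power of `R`, the `b`-th basis vector of `R` being given
weight `x b`. -/
def weightedTrace {A : Type*} [CommSemiring A] [Algebra K A] (R : N →* Matrix B B K) {n : ℕ}
    (x : B → A) (g : Wreath N n) : A :=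
  ∑ b : Fin n → B, (∏ j, x (b j)) * algebraMap K A (tensorPowerRep R n g b b)

lemma map_weightedTrace {A A' : Type*} [CommSemiring A] [Algebra K A] [CommSemiring A']
    [Algebra K A'] (f : A →ₐ[K] A') (R : N →* Matrix B B K) {n : ℕ} (x : B → A)
    (g : Wreath N n) : f (weightedTrace R x g) = weightedTrace R (f ∘ x) g := by
  simp [weightedTrace, map_sum, map_prod]

lemma weightedTrace_one {A : Type*} [CommSemiring A] [Algebra K A] (R : N →* Matrix B B K)
    {n : ℕ} (x : B → A) : weightedTrace R x (1 : Wreath N n) = (∑ b, x b) ^ n := by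
  rw [← Fin.prod_const, Finset.prod_univ_sum, Fintype.piFinset_univ]
  simp [weightedTrace]

lemma weightedTrace_comp_equiv {A : Type*} [CommSemiring A] [Algebra K A]
    (R : N →* Matrix B B K) (e : Equiv.Perm B) (he : ∀ t b b', R t (e b) (e b') = R t b b')
    {n : ℕ} (x : B → A) (g : Wreath N n) :
    weightedTrace R (x ∘ e) g = weightedTrace R x g := by
  rw [weightedTrace, weightedTrace]
  conv_rhs => rw [← (Equiv.piCongrRight fun _ : Fin n ↦ e).sum_comp]
  simp [tensorPowerRep_apply, he]

lemma isHomogeneous_weightedTrace (R : N →* Matrix B B K) (label : B → ι) {n : ℕ}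
    (g : Wreath N n) :
    (weightedTrace R (fun b ↦ (X (label b) : MvPolynomial ι K)) g).IsHomogeneous n := by
  refine IsHomogeneous.sum _ _ _ fun b _ ↦ ?_
  rw [mul_comm]
  refine IsHomogeneous.C_mul ?_ _
  simpa using IsHomogeneous.prod Finset.univ (fun j ↦ (X (label (b j)) : MvPolynomial ι K))
    (fun _ ↦ 1) fun _ _ ↦ isHomogeneous_X _ _

lemma coeff_weightedTrace [DecidableEq ι] (R : N →* Matrix B B K) (label : B → ι) {n : ℕ}
    (g : Wreath N n) (γ : ι →₀ ℕ) :
    coeff γ (weightedTrace R (fun b ↦ (X (label b) : MvPolynomial ι K)) g) =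
      ∑ b with content (label ∘ b) = γ, tensorPowerRep R n g b b := by
  rw [weightedTrace, coeff_sum, Finset.sum_filter]
  refine Finset.sum_congr rfl fun b _ ↦ ?_
  rw [prod_X_eq_monomial_content fun j ↦ label (b j), algebraMap_eq, mul_comm, C_mul_monomial,
    coeff_monomial, mul_one]
  rfl

lemma tensorPowerRep_eq_zero_of_content_ne (R : N →* Matrix B B K) {label : B → ι}
    (hR : ∀ t b b', label b ≠ label b' → R t b b' = 0) {n : ℕ} (g : Wreath N n)
    {b b' : Fin n → B} (h : content (label ∘ b) ≠ content (label ∘ b')) :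
    tensorPowerRep R n g b b' = 0 := by
  rw [tensorPowerRep_apply]
  by_contra hne
  apply h
  rw [← content_comp_perm (label ∘ b') g.right⁻¹]
  congr 1
  ext j
  by_contra hj
  exact hne (Finset.prod_eq_zero (Finset.mem_univ j) (hR _ _ _ hj))

open scoped Classical in
/-- The subrepresentation of the tensor power spanned by the basis vectors of content `γ`, for a
representation that is block diagonal with respect to `label`. -/
noncomputable def contentBlockRep (R : N →* Matrix B B K) {label : B → ι}
    (hR : ∀ t b b', label b ≠ label b' → R t b b' = 0) (n : ℕ) (γ : ι →₀ ℕ) :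
    Wreath N n →* Matrix {b : Fin n → B // content (label ∘ b) = γ}
      {b : Fin n → B // content (label ∘ b) = γ} K where
  toFun g := (tensorPowerRep R n g).submatrix Subtype.val Subtype.val
  map_one' := by rw [map_one, Matrix.submatrix_one _ Subtype.val_injective]
  map_mul' g g' := by
    ext b c
    rw [map_mul, Matrix.submatrix_apply, Matrix.mul_apply, Matrix.mul_apply]
    simp only [Matrix.submatrix_apply]
    refine Eq.trans ?_ (Finset.sum_subtype {b' | content (label ∘ b') = γ} (by simp)
      fun b' ↦ tensorPowerRep R n g b b' * tensorPowerRep R n g' b' c)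
    refine (Finset.sum_subset (Finset.filter_subset _ _) fun b' _ hb' ↦ ?_).symm
    rw [tensorPowerRep_eq_zero_of_content_ne R hR, zero_mul]
    rw [b.2]
    exact fun h ↦ hb' (by simp [h])

end TensorPower

section WreathCharacters

open MvPolynomial

variable {N : Type} [Group N] {n : ℕ}

instance [Finite N] : Finite (Wreath N n) := Finite.of_equiv _ SemidirectProduct.equivProd.symm

noncomputable instance [Finite N] : Fintype (Wreath N n) := Fintype.ofFinite _

lemma card_wreath : Nat.card (Wreath N n) = Nat.card N ^ n * n.factorial := by
  rw [SemidirectProduct.card]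
  simp [Fintype.card_perm, Nat.card_fun]

lemma sum_wreath [Fintype N] {M : Type*} [AddCommMonoid M] (f : Wreath N n → M) :
    ∑ g, f g = ∑ σ : Equiv.Perm (Fin n), ∑ h : Fin n → N, f ⟨h, σ⟩ := by
  classical
  rw [← (SemidirectProduct.equivProd (φ := wreathAct n N)).symm.sum_comp,
    Fintype.sum_prod_type_right]
  rfl

variable [Finite N] {B ι : Type} [Fintype B] [DecidableEq B]

lemma coeff_weightedTrace_mem_virtualChars (R : N →* Matrix B B ℂ) {label : B → ι}
    (hR : ∀ t b b', label b ≠ label b' → R t b b' = 0) (γ : ι →₀ ℕ) :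
    (fun g : Wreath N n ↦ coeff γ (weightedTrace R (fun b ↦ X (label b)) g)) ∈
      virtualChars (Wreath N n) := by
  classical
  convert trace_mem_virtualChars (contentBlockRep R hR n γ) using 2 with g
  rw [coeff_weightedTrace, Matrix.trace,
    Finset.sum_subtype (p := fun b : Fin n → B ↦ content (label ∘ b) = γ) _ (by simp)]
  rfl

lemma coeff_mul_weightedTrace_mem_virtualChars (R : N →* Matrix B B ℂ) {label : B → ι}
    (hR : ∀ t b b', label b ≠ label b' → R t b b' = 0) (Q : MvPolynomial ι ℤ) (α : ι →₀ ℕ) :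
    (fun g : Wreath N n ↦ coeff α (map (Int.castRingHom ℂ) Q *
      weightedTrace R (fun b ↦ X (label b)) g)) ∈ virtualChars (Wreath N n) := by
  classical
  convert AddSubgroup.sum_mem _ fun x (_ : x ∈ Finset.HasAntidiagonal.antidiagonal α) ↦
    AddSubgroup.zsmul_mem _ (coeff_weightedTrace_mem_virtualChars (n := n) R hR x.2)
      (coeff x.1 Q) using 1
  ext g
  simp [coeff_mul, coeff_map]

end WreathCharacters

/-! ### Sums over tuples fixed by a permutation -/

section TupleSums

open MvPolynomial

lemma sum_prod_mul_comp {J E A R : Type*} [Fintype J] [DecidableEq J] [Fintype E] [Fintype A]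
    [DecidableEq A] [CommSemiring R] (π : E → A) (w : E → R) (H : (J → A) → R) :
    ∑ e : J → E, (∏ j, w (e j)) * H (π ∘ e) =
      ∑ a : J → A, (∏ j, ∑ e with π e = a j, w e) * H a := by
  classical
  rw [← Finset.sum_fiberwise Finset.univ fun e : J → E ↦ π ∘ e]
  refine Finset.sum_congr rfl fun a _ ↦ ?_
  rw [Finset.prod_univ_sum, Finset.sum_mul]
  refine Finset.sum_congr (by ext e; simp [funext_iff]) fun e he ↦ ?_
  simp only [Fintype.mem_piFinset, Finset.mem_filter_univ] at he
  rw [show π ∘ e = a from funext he]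

variable {J A R : Type*} [Fintype J] [Fintype A] [CommSemiring R]

lemma prod_eq_prod_pow_content (a : J → A) (t : A → R) :
    ∏ j, t (a j) = ∏ s, t s ^ content a s := by
  classical
  rw [← Finset.prod_fiberwise Finset.univ a]
  refine Finset.prod_congr rfl fun s _ ↦ ?_
  rw [content_apply, Fintype.card_subtype]
  exact Finset.prod_eq_pow_card fun j hj ↦ by rw [(Finset.mem_filter.mp hj).2]

lemma sum_content (a : J → A) : ∑ s, content a s = Fintype.card J := by
  classical
  simp only [content, Finsupp.finsetSum_apply]
  rw [Finset.sum_comm]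
  simp [Finsupp.single_apply]

lemma prod_factorial_mul_card_content_eq [DecidableEq A] {n : ℕ} {l : A →₀ ℕ}
    (hl : ∑ s, l s = n) :
    (∏ s, (l s).factorial) * Finset.card {a : Fin n → A | content a = l} = n.factorial := by
  have hmul : Finset.card {a : Fin n → A | content a = l} = l.multinomial := by
    have h := coeff_linearCombination_X_pow_of_fintype (R := ℕ) (fun _ : A ↦ 1) l n
    rw [if_pos (by rwa [Finsupp.sum_fintype _ _ (by simp)])] at h
    simpa [Fintype.sum_pow, prod_X_eq_monomial_content, coeff_sum, coeff_monomial,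
      Finsupp.prod] using h
  rw [hmul, ← Finsupp.multinomial_of_support_subset (Finset.subset_univ _),
    Nat.multinomial_spec, hl]

end TupleSums

/-! ### Complete homogeneous symmetric functions -/

section CompleteHomogeneous

/-- The geometric series `∑ tᵐ Tᵐ`. -/
noncomputable def geomSeries {R : Type*} [CommSemiring R] (t : R) : PowerSeries R :=
  PowerSeries.mk fun m ↦ t ^ m

/-- The value at `y` of the complete homogeneous symmetric polynomial of degree `m`, defined by its
generating function `∏ 1 / (1 - y r T)`. -/
noncomputable def completeHomogeneous {R ι : Type*} [CommSemiring R] [Fintype ι] (y : ι → R)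
    (m : ℕ) : R :=
  PowerSeries.coeff m (∏ r, geomSeries (y r))

section Semiring

variable {R ι : Type*} [CommSemiring R]

@[simp] lemma coeff_geomSeries (t : R) (m : ℕ) : PowerSeries.coeff m (geomSeries t) = t ^ m :=
  PowerSeries.coeff_mk _ _

lemma geomSeries_mul (x y : R) : geomSeries (x * y) = PowerSeries.rescale x (geomSeries y) := by
  ext m
  simp [mul_pow]

variable [Fintype ι]

lemma prod_geomSeries_mul (x : R) (y : ι → R) :
    ∏ r, geomSeries (x * y r) = PowerSeries.mk fun m ↦ completeHomogeneous y m * x ^ m := by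
  simp only [geomSeries_mul, ← map_prod]
  ext m
  rw [PowerSeries.coeff_rescale, PowerSeries.coeff_mk, completeHomogeneous, mul_comm]

lemma completeHomogeneous_map {S : Type*} [CommSemiring S] (f : R →+* S) (y : ι → R) (m : ℕ) :
    completeHomogeneous (fun r ↦ f (y r)) m = f (completeHomogeneous y m) := by
  have h (r) : geomSeries (f (y r)) = PowerSeries.map f (geomSeries (y r)) := by
    ext m
    simp
  simp only [completeHomogeneous, h, ← map_prod, PowerSeries.coeff_map]

/-- By orbit-stabilizer: a tuple with content `l` is fixed by `∏ (l s)!` permutations, and there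
are `n! / ∏ (l s)!` such tuples. -/
lemma sum_perm_sum_fixed_prod [DecidableEq ι] (n : ℕ) (t : ι → R) :
    ∑ σ : Equiv.Perm (Fin n), ∑ a : Fin n → ι, (if a ∘ σ = a then ∏ j, t (a j) else 0) =
      n.factorial * completeHomogeneous t n := by
  have hstab (a : Fin n → ι) :
      ∑ σ : Equiv.Perm (Fin n), (if a ∘ σ = a then ∏ j, t (a j) else 0) =
        (∏ s, (content a s).factorial : ℕ) * ∏ s, t s ^ content a s := by
    rw [← Finset.sum_filter, Finset.sum_const, ← Fintype.card_subtype,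
      DomMulAct.stabilizer_card, nsmul_eq_mul, prod_eq_prod_pow_content a t]
    simp only [content_apply]
  rw [Finset.sum_comm, completeHomogeneous, PowerSeries.coeff_prod]
  simp only [hstab]
  rw [← Finset.sum_fiberwise_of_maps_to (s := Finset.univ)
    (t := Finset.finsuppAntidiag (Finset.univ : Finset ι) n) (g := fun a : Fin n → ι ↦ content a)
    (by simp [sum_content]), Finset.mul_sum]
  refine Finset.sum_congr rfl fun l hl ↦ ?_
  have hsum : ∑ s, l s = n := by simpa using (Finset.mem_finsuppAntidiag.mp hl).1
  rw [Finset.sum_congr rfl fun a ha ↦ by rw [(Finset.mem_filter.mp ha).2], Finset.sum_const,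
    nsmul_eq_mul, ← mul_assoc, ← Nat.cast_mul, mul_comm (Finset.card _),
    prod_factorial_mul_card_content_eq hsum]
  simp

end Semiring

variable {R : Type*} [CommRing R] {k : ℕ}

lemma geomSeries_mul_one_sub (t : R) :
    geomSeries t * (1 - PowerSeries.C t * PowerSeries.X) = 1 := by
  rw [mul_sub, mul_one, mul_left_comm]
  ext m
  cases m with
  | zero => simp [geomSeries]
  | succ m => simp [PowerSeries.coeff_succ_mul_X, PowerSeries.coeff_one, pow_succ, mul_comm]

/-- The matrix `(y r ^ a i)`, whose determinant is the alternant with exponents `a`. -/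
def powerMatrix (y : Fin k → R) (a : Fin k → ℕ) : Matrix (Fin k) (Fin k) R :=
  Matrix.of fun i r ↦ y r ^ a i

/-- The matrix `(c i (a i - j))` of the Jacobi–Trudi identity, where `c i m` is read as `0` for
negative `m`. -/
def jacobiTrudiMatrix (c : Fin k → ℕ → R) (a : Fin k → ℕ) : Matrix (Fin k) (Fin k) R :=
  Matrix.of fun i j ↦ if j ≤ a i then c i (a i - j) else 0

/-- The product of the factors `1 - y r' T` with `r' ≠ r`. -/
noncomputable def cofactorPoly (y : Fin k → R) (r : Fin k) : Polynomial R :=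
  ∏ r' ∈ Finset.univ.erase r, (1 - Polynomial.C (y r') * Polynomial.X)

lemma coeff_cofactorPoly_eq_zero (y : Fin k → R) (r : Fin k) {j : ℕ} (hj : k ≤ j) :
    (cofactorPoly y r).coeff j = 0 := by
  refine Polynomial.coeff_eq_zero_of_natDegree_lt ?_
  calc (cofactorPoly y r).natDegree
      ≤ ∑ r' ∈ Finset.univ.erase r,
          (1 - Polynomial.C (y r') * Polynomial.X : Polynomial R).natDegree :=
        Polynomial.natDegree_prod_le _ _
    _ ≤ ∑ r' ∈ Finset.univ.erase r, 1 := Finset.sum_le_sum fun r' _ ↦ by compute_degree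
    _ < j := by
        have := r.pos
        simp
        omega

lemma prod_geomSeries_mul_cofactorPoly (y : Fin k → R) (r : Fin k) :
    (∏ r', geomSeries (y r')) * (cofactorPoly y r : PowerSeries R) = geomSeries (y r) := by
  have hcoe : (cofactorPoly y r : PowerSeries R) =
      ∏ r' ∈ Finset.univ.erase r, (1 - PowerSeries.C (y r') * PowerSeries.X) := by
    rw [cofactorPoly, ← Polynomial.coeToPowerSeries.ringHom_apply, map_prod]
    simp
  rw [hcoe, ← Finset.mul_prod_erase _ _ (Finset.mem_univ r), mul_assoc, ← Finset.prod_mul_distrib]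
  simp [geomSeries_mul_one_sub]

lemma powerMatrix_eq_jacobiTrudiMatrix_mul (y : Fin k → R) (a : Fin k → ℕ) :
    powerMatrix y a = jacobiTrudiMatrix (fun _ ↦ completeHomogeneous y) a *
      Matrix.of fun j r : Fin k ↦ (cofactorPoly y r).coeff j := by
  ext i r
  rw [powerMatrix, Matrix.of_apply, ← coeff_geomSeries, ← prod_geomSeries_mul_cofactorPoly,
    mul_comm, PowerSeries.coeff_mul, Finset.Nat.sum_antidiagonal_eq_sum_range_succ_mk,
    Matrix.mul_apply]
  simp only [Matrix.of_apply, Polynomial.coeff_coe, jacobiTrudiMatrix]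
  change ∑ j ∈ Finset.range (a i + 1),
    (cofactorPoly y r).coeff j * completeHomogeneous y (a i - j) = _
  rw [Fin.sum_univ_eq_sum_range (fun j ↦ (if j ≤ a i then completeHomogeneous y (a i - j) else 0) *
    (cofactorPoly y r).coeff j)]
  simp only [ite_mul, zero_mul, ← Finset.sum_filter]
  symm
  refine Finset.sum_subset_zero_on_sdiff (fun j ↦ by simp) (fun j hj ↦ ?_)
    fun j _ ↦ mul_comm _ _
  rw [coeff_cofactorPoly_eq_zero, zero_mul]
  simp only [Finset.mem_sdiff, Finset.mem_range, Finset.mem_filter] at hj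
  omega

lemma det_jacobiTrudiMatrix_completeHomogeneous_val (y : Fin k → R) :
    (jacobiTrudiMatrix (fun _ ↦ completeHomogeneous y) (Fin.val : Fin k → ℕ)).det = 1 := by
  rw [Matrix.det_of_isLowerTriangular]
  · simp [jacobiTrudiMatrix, completeHomogeneous, geomSeries]
  · intro i j hij
    exact if_neg (not_le.mpr hij)

theorem det_jacobiTrudiMatrix_mul_det_powerMatrix (y : Fin k → R) (a : Fin k → ℕ) :
    (jacobiTrudiMatrix (fun _ ↦ completeHomogeneous y) a).det * (powerMatrix y Fin.val).det =
      (powerMatrix y a).det := by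
  rw [powerMatrix_eq_jacobiTrudiMatrix_mul y a, powerMatrix_eq_jacobiTrudiMatrix_mul y Fin.val,
    Matrix.det_mul, Matrix.det_mul, det_jacobiTrudiMatrix_completeHomogeneous_val, one_mul]

end CompleteHomogeneous

/-! ### The Cauchy kernel of a wreath product -/

section CauchyKernel

lemma sum_prod_ite_comp_perm {J E A R : Type*} [Fintype J] [DecidableEq J] [Fintype E]
    [Fintype A] [DecidableEq A] [CommSemiring R] (p : E → Prop) [DecidablePred p] (π : E → A)
    (w : E → R) (τ : Equiv.Perm J) :
    ∑ e : J → E, ∏ j, (if p (e j) ∧ p (e (τ j)) ∧ π (e (τ j)) = π (e j) then w (e j) else 0) =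
      ∑ a : J → A, if a ∘ τ = a then ∏ j, ∑ e with π e = a j ∧ p e, w e else 0 := by
  have hprod (e : J → E) :
      ∏ j, (if p (e j) ∧ p (e (τ j)) ∧ π (e (τ j)) = π (e j) then w (e j) else 0) =
        (∏ j, if p (e j) then w (e j) else 0) * if (π ∘ e) ∘ τ = π ∘ e then 1 else 0 := by
    simp only [Finset.prod_ite_zero, funext_iff, Function.comp_apply, mul_ite, mul_one, mul_zero,
      Finset.mem_univ, true_imp_iff, ← ite_and, forall_and]
    have hτ := τ.forall_congr_right (q := fun j ↦ p (e j))
    exact if_congr (by tauto) rfl rfl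
  simp only [hprod]
  rw [sum_prod_mul_comp π (fun e ↦ if p e then w e else 0) fun a ↦ if a ∘ τ = a then 1 else 0]
  simp [Finset.sum_filter, ite_and]

variable {N : Type} [Group N] [Fintype N]

lemma sum_weightedTrace_mul_weightedTrace_inv {B K A : Type*} [Fintype B] [DecidableEq B]
    [CommSemiring K] [CommSemiring A] [Algebra K A] (R : N →* Matrix B B K) (x y : B → A) {n : ℕ}
    (σ : Equiv.Perm (Fin n)) :
    ∑ f : Fin n → N, weightedTrace R x (⟨f, σ⟩ : Wreath N n) *
        weightedTrace R y (⟨f, σ⟩ : Wreath N n)⁻¹ =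
      ∑ e : Fin n → B × B, ∏ j, (x (e j).1 * y (e j).2 * algebraMap K A
        (∑ t, R t (e j).1 (e (σ⁻¹ j)).1 * R t⁻¹ (e (σ⁻¹ j)).2 (e j).2)) := by
  rw [← (Equiv.arrowProdEquivProdArrow (Fin n) (fun _ ↦ B) fun _ ↦ B).symm.sum_comp,
    Fintype.sum_prod_type]
  simp only [weightedTrace, Finset.sum_mul_sum]
  rw [Finset.sum_comm]
  refine Finset.sum_congr rfl fun b _ ↦ ?_
  rw [Finset.sum_comm]
  refine Finset.sum_congr rfl fun c _ ↦ ?_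
  rw [Finset.prod_mul_distrib, ← map_prod, Finset.prod_univ_sum, Fintype.piFinset_univ,
    map_sum, Finset.mul_sum]
  refine Finset.sum_congr rfl fun f _ ↦ ?_
  rw [tensorPowerRep_inv_apply, tensorPowerRep_apply, mul_mul_mul_comm, ← map_mul,
    ← Finset.prod_mul_distrib, ← Finset.prod_mul_distrib]
  rfl

variable {k : ℕ}

open scoped Classical in
/-- The direct sum of `k` copies of each irreducible representation of `N`. -/
noncomputable def multSumRep (N : Type) [Group N] [Fintype N] (k : ℕ) :
    N →* Matrix (IrrIndex N × Fin k) (IrrIndex N × Fin k) ℂ where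
  toFun t := Matrix.blockDiagonal fun _ ↦ sumIrrRep N t
  map_one' := by simp [← Pi.one_def]
  map_mul' s t := by simp [← Matrix.blockDiagonal_mul]

lemma multSumRep_apply (t : N) (b b' : IrrIndex N × Fin k) :
    multSumRep N k t b b' = if b.2 = b'.2 then sumIrrRep N t b.1 b'.1 else 0 :=
  Matrix.blockDiagonal_apply (fun _ ↦ sumIrrRep N t) b b'

/-- The irreducible constituent of `multSumRep` containing a given basis vector, as a pair
consisting of an irreducible character and the number of the copy. -/
def blockLabel (b : IrrIndex N × Fin k) : Irr N × Fin k := (b.1.1, b.2)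

lemma multSumRep_apply_eq_zero (t : N) (b b' : IrrIndex N × Fin k)
    (h : blockLabel b ≠ blockLabel b') : multSumRep N k t b b' = 0 := by
  rw [multSumRep_apply]
  split_ifs with h2
  · exact sumIrrRep_apply_ne t fun h1 ↦ h (Prod.ext h1 h2)
  · rfl

open scoped Classical in
lemma sum_multSumRep_mul_multSumRep_inv (b b' c' c : IrrIndex N × Fin k) :
    ∑ t, multSumRep N k t b b' * multSumRep N k t⁻¹ c' c =
      if b.1 = c.1 ∧ b'.1 = c'.1 ∧ (b'.1.1, b'.2, c'.2) = (b.1.1, b.2, c.2) then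
        (Nat.card N : ℂ) / irrDeg b.1.1 else 0 := by
  simp only [multSumRep_apply, Prod.mk.injEq, ite_mul, mul_ite, zero_mul, mul_zero,
    Finset.sum_ite_irrel, Finset.sum_const_zero, sum_sumIrrRep_mul_sumIrrRep_inv, ← ite_and]
  exact if_congr (by tauto) rfl rfl

open scoped Classical in
lemma sum_diagonal_pairs {A : Type*} [CommSemiring A] [Algebra ℂ A] (x y : Irr N × Fin k → A)
    (s : Irr N × Fin k × Fin k) :
    ∑ e : (IrrIndex N × Fin k) × (IrrIndex N × Fin k)
        with (e.1.1.1, e.1.2, e.2.2) = s ∧ e.1.1 = e.2.1,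
      x (blockLabel e.1) * y (blockLabel e.2) *
        algebraMap ℂ A ((Nat.card N : ℂ) / irrDeg e.1.1.1) =
    Nat.card N * (x (s.1, s.2.1) * y (s.1, s.2.2)) := by
  obtain ⟨χ, i, i'⟩ := s
  have hd : (irrDeg χ : ℂ) ≠ 0 := Nat.cast_ne_zero.mpr (irrDeg_ne_zero χ)
  have himage : ({e | (e.1.1.1, e.1.2, e.2.2) = (χ, i, i') ∧ e.1.1 = e.2.1} :
      Finset ((IrrIndex N × Fin k) × (IrrIndex N × Fin k))) =
      Finset.univ.image fun a : Fin (irrDeg χ) ↦ ((⟨χ, a⟩, i), (⟨χ, a⟩, i')) := by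
    ext ⟨⟨⟨ψ, a⟩, j⟩, ⟨v, j'⟩⟩
    simp only [Finset.mem_filter_univ, Finset.mem_image, Finset.mem_univ, true_and, Prod.mk.injEq]
    constructor
    · rintro ⟨⟨rfl, rfl, rfl⟩, rfl⟩
      exact ⟨a, by simp⟩
    · rintro ⟨a', ⟨⟨h, rfl⟩, rfl, rfl⟩⟩
      cases h
      simp
  rw [himage, Finset.sum_image (by intro a _ a' _ h; simpa using h)]
  simp only [blockLabel, Finset.sum_const, Finset.card_univ, Fintype.card_fin, nsmul_eq_mul]
  rw [mul_comm, mul_assoc, ← map_natCast (algebraMap ℂ A) (irrDeg χ), ← map_mul,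
    div_mul_cancel₀ _ hd, map_natCast, mul_comm]

theorem sum_weightedTrace_multSumRep {A : Type*} [CommSemiring A] [Algebra ℂ A] {n : ℕ}
    (x y : Irr N × Fin k → A) :
    ∑ g : Wreath N n, weightedTrace (multSumRep N k) (x ∘ blockLabel) g *
        weightedTrace (multSumRep N k) (y ∘ blockLabel) g⁻¹ =
      Nat.card (Wreath N n) * completeHomogeneous
        (fun s : Irr N × Fin k × Fin k ↦ x (s.1, s.2.1) * y (s.1, s.2.2)) n := by
  classical
  have hperm (σ : Equiv.Perm (Fin n)) :
      ∑ f : Fin n → N, weightedTrace (multSumRep N k) (x ∘ blockLabel) (⟨f, σ⟩ : Wreath N n) *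
        weightedTrace (multSumRep N k) (y ∘ blockLabel) (⟨f, σ⟩ : Wreath N n)⁻¹ =
      ∑ a : Fin n → Irr N × Fin k × Fin k, if a ∘ ⇑σ⁻¹ = a then
        ∏ j, ((Nat.card N : A) * (x ((a j).1, (a j).2.1) * y ((a j).1, (a j).2.2))) else 0 := by
    simp only [sum_weightedTrace_mul_weightedTrace_inv, sum_multSumRep_mul_multSumRep_inv,
      Function.comp_apply, apply_ite (algebraMap ℂ A), map_zero, mul_ite, mul_zero]
    rw [sum_prod_ite_comp_perm (fun e : (IrrIndex N × Fin k) × (IrrIndex N × Fin k) ↦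
      e.1.1 = e.2.1) (fun e ↦ (e.1.1.1, e.1.2, e.2.2)) (fun e ↦ x (blockLabel e.1) *
        y (blockLabel e.2) * algebraMap ℂ A ((Nat.card N : ℂ) / irrDeg e.1.1.1)) σ⁻¹]
    simp only [sum_diagonal_pairs]
  rw [sum_wreath]
  simp only [hperm]
  rw [← Equiv.sum_comp (Equiv.inv _)]
  simp only [Equiv.inv_apply, inv_inv]
  rw [sum_perm_sum_fixed_prod n fun s : Irr N × Fin k × Fin k ↦
    (Nat.card N : A) * (x (s.1, s.2.1) * y (s.1, s.2.2)), card_wreath, completeHomogeneous,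
    prod_geomSeries_mul, PowerSeries.coeff_mk]
  push_cast
  ring

end CauchyKernel

/-! ### Products of alternants -/

section Alternants

open MvPolynomial

variable {Φ : Type*} [Fintype Φ] {k : ℕ}

/-- The exponent vector in the variables `X (φ, i)` given by the numbers `α φ i`. -/
noncomputable def exponentVec (α : Φ → Fin k → ℕ) : Φ × Fin k →₀ ℕ :=
  Finsupp.equivFunOnFinite.symm (Function.uncurry α)

@[simp] lemma exponentVec_apply (α : Φ → Fin k → ℕ) (s : Φ × Fin k) :
    exponentVec α s = α s.1 s.2 := rfl

lemma exponentVec_injective :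
    Function.Injective (exponentVec : (Φ → Fin k → ℕ) → Φ × Fin k →₀ ℕ) := fun _ _ h ↦
  funext₂ fun φ i ↦ DFunLike.congr_fun h (φ, i)

lemma degree_exponentVec (α : Φ → Fin k → ℕ) : (exponentVec α).degree = ∑ φ, ∑ i, α φ i := by
  simp [Finsupp.degree_eq_sum, Fintype.sum_prod_type]

lemma monomial_exponentVec {R : Type*} [CommSemiring R] (α : Φ → Fin k → ℕ) (c : R) :
    monomial (exponentVec α) c = C c * ∏ φ, ∏ i, X (φ, i) ^ α φ i := by
  rw [monomial_eq, Finsupp.prod_fintype _ _ (by simp), Fintype.prod_prod_type]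
  rfl

/-- The families of exponents `α` in which every `α φ` is strictly increasing, so that
`i ↦ α φ i - i` is a partition, these partitions having total size `n`. -/
def betaFamilies (Φ : Type*) [Fintype Φ] (k n : ℕ) : Set (Φ → Fin k → ℕ) :=
  {α | (∀ φ, StrictMono (α φ)) ∧
    ∑ φ, ∑ i, α φ i = n + Fintype.card Φ * ∑ i : Fin k, (i : ℕ)}

/-- The product over `φ` of the alternants in the variables `X (φ, ·)` with exponents `α φ`. -/
noncomputable def alternantProd (R : Type*) [CommRing R] (α : Φ → Fin k → ℕ) :
    MvPolynomial (Φ × Fin k) R :=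
  ∏ φ, (powerMatrix (fun r ↦ X (φ, r)) (α φ)).det

/-- The product over `φ` of the Vandermonde determinants in the variables `X (φ, ·)`. -/
noncomputable def vandermondeProd (Φ : Type*) [Fintype Φ] (k : ℕ) (R : Type*) [CommRing R] :
    MvPolynomial (Φ × Fin k) R :=
  alternantProd R fun _ ↦ Fin.val

variable {R : Type*} [CommRing R]

lemma map_alternantProd {S : Type*} [CommRing S] (f : R →+* S) (α : Φ → Fin k → ℕ) :
    map f (alternantProd R α) = alternantProd S α := by
  simp only [alternantProd, map_prod, RingHom.map_det]
  refine Finset.prod_congr rfl fun φ _ ↦ congrArg Matrix.det ?_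
  ext i r
  simp [powerMatrix]

lemma sum_exponentVec_sub {α : Φ → Fin k → ℕ} {n : ℕ}
    (hα : ∑ φ, ∑ i, α φ i = n + Fintype.card Φ * ∑ i : Fin k, (i : ℕ))
    (w : Φ → Equiv.Perm (Fin k)) (hw : ∀ φ i, (w φ i : ℕ) ≤ α φ i) :
    ∑ s, (exponentVec α - exponentVec fun φ i ↦ (w φ i : ℕ)) s = n := by
  have hrow (φ) : ∑ i, (α φ i - (w φ i : ℕ)) + ∑ i : Fin k, (i : ℕ) = ∑ i, α φ i := by
    rw [← Equiv.sum_comp (w φ) fun i : Fin k ↦ (i : ℕ), ← Finset.sum_add_distrib]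
    exact Finset.sum_congr rfl fun i _ ↦ Nat.sub_add_cancel (hw φ i)
  simp only [Finsupp.tsub_apply, exponentVec_apply, Fintype.sum_prod_type]
  have htotal := Finset.sum_congr (rfl : (Finset.univ : Finset Φ) = _) fun φ _ ↦ hrow φ
  rw [Finset.sum_add_distrib, hα] at htotal
  simp only [Finset.sum_const, Finset.card_univ, smul_eq_mul] at htotal
  exact Nat.add_right_cancel htotal

lemma alternantProd_eq_sum [DecidableEq Φ] (α : Φ → Fin k → ℕ) :
    alternantProd R α = ∑ w : Φ → Equiv.Perm (Fin k),
      monomial (exponentVec fun φ r ↦ α φ (w φ r))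
        (∏ φ, ((Equiv.Perm.sign (w φ) : ℤ) : R)) := by
  simp only [alternantProd, Matrix.det_apply]
  rw [Finset.prod_univ_sum, Fintype.piFinset_univ]
  refine Finset.sum_congr rfl fun w _ ↦ ?_
  rw [monomial_exponentVec, map_prod, ← Finset.prod_mul_distrib]
  refine Finset.prod_congr rfl fun φ _ ↦ ?_
  rw [Units.smul_def, zsmul_eq_mul]
  simp [powerMatrix]

lemma coeff_alternantProd [DecidableEq (Φ → Fin k → ℕ)] {α β : Φ → Fin k → ℕ}
    (hα : ∀ φ, StrictMono (α φ)) (hβ : ∀ φ, StrictMono (β φ)) :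
    coeff (exponentVec β) (alternantProd R α) = if α = β then 1 else 0 := by
  classical
  rw [alternantProd_eq_sum, coeff_sum, Finset.sum_eq_single 1]
  · simp [coeff_monomial, exponentVec_injective.eq_iff]
  · intro w _ hw
    rw [coeff_monomial, if_neg]
    refine fun h ↦ hw (funext fun φ ↦ Equiv.ext fun r ↦ congrFun ?_ r)
    have hval (r) : α φ (w φ r) = β φ r := congrFun₂ (exponentVec_injective h) φ r
    have hmono : StrictMono (w φ) := fun a b hab ↦ by
      rw [← (hα φ).lt_iff_lt, hval, hval]
      exact hβ φ hab
    exact (StrictMono.range_inj hmono strictMono_id).1 (by simp [(w φ).surjective.range_eq])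
  · simp

lemma coeff_vandermondeProd_mul {n : ℕ} (c : Φ × Fin k → ℕ → R)
    (P : MvPolynomial (Φ × Fin k) R)
    (hP : ∀ γ, coeff γ P = if ∑ s, γ s = n then ∏ s, c s (γ s) else 0) {α : Φ → Fin k → ℕ}
    (hα : ∑ φ, ∑ i, α φ i = n + Fintype.card Φ * ∑ i : Fin k, (i : ℕ)) :
    coeff (exponentVec α) (vandermondeProd Φ k R * P) =
      ∏ φ, (jacobiTrudiMatrix (fun i ↦ c (φ, i)) (α φ)).det := by
  classical
  have hdet (φ) : (jacobiTrudiMatrix (fun i ↦ c (φ, i)) (α φ)).det =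
      ∑ σ : Equiv.Perm (Fin k), ((Equiv.Perm.sign σ : ℤ) : R) * ∏ i,
        if σ i ≤ α φ i then c (φ, i) (α φ i - σ i) else 0 := by
    rw [← Matrix.det_transpose, Matrix.det_apply']
    rfl
  rw [vandermondeProd, alternantProd_eq_sum, Finset.sum_mul, coeff_sum]
  simp only [coeff_monomial_mul', hdet]
  rw [Finset.prod_univ_sum, Fintype.piFinset_univ]
  refine Finset.sum_congr rfl fun w _ ↦ ?_
  rw [Finset.prod_mul_distrib, ← Fintype.prod_prod_type']
  split_ifs with h
  · have hw (φ i) : (w φ i : ℕ) ≤ α φ i := h (φ, i)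
    rw [hP, if_pos (sum_exponentVec_sub hα w hw)]
    congr 1
    refine Finset.prod_congr rfl fun s _ ↦ ?_
    rw [if_pos (hw _ _)]
    rfl
  · obtain ⟨s, hs⟩ : ∃ s : Φ × Fin k, ¬ (w s.1 s.2 : ℕ) ≤ α s.1 s.2 := by
      by_contra! hc
      exact h hc
    rw [Finset.prod_eq_zero (Finset.mem_univ s) (if_neg hs), mul_zero]

lemma coeff_completeHomogeneous_X_mul_C {n : ℕ} (y : Φ → Fin k → R) (γ : Φ × Fin k →₀ ℕ) :
    coeff γ (completeHomogeneous (fun s : Φ × Fin k × Fin k ↦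
      (X (s.1, s.2.1) * C (y s.1 s.2.2) : MvPolynomial (Φ × Fin k) R)) n) =
    if ∑ s, γ s = n then ∏ s, completeHomogeneous (y s.1) (γ s) else 0 := by
  classical
  have hmonomial (l : Φ × Fin k →₀ ℕ) :
      ∏ s, (X s : MvPolynomial (Φ × Fin k) R) ^ l s = monomial l 1 := by
    rw [monomial_eq, Finsupp.prod_fintype _ _ (by simp), C_1, one_mul]
  have hprod : ∏ s : Φ × Fin k × Fin k,
      geomSeries (X (s.1, s.2.1) * C (y s.1 s.2.2) : MvPolynomial (Φ × Fin k) R) =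
      ∏ s : Φ × Fin k, PowerSeries.mk fun m ↦ C (completeHomogeneous (y s.1) m) * X s ^ m := by
    simp only [Fintype.prod_prod_type, prod_geomSeries_mul, completeHomogeneous_map]
  rw [completeHomogeneous, hprod, PowerSeries.coeff_prod]
  simp only [PowerSeries.coeff_mk, Finset.prod_mul_distrib, ← map_prod, hmonomial, C_mul_monomial,
    mul_one, coeff_sum, coeff_monomial]
  rw [Finset.sum_ite_eq']
  simp [Finset.mem_finsuppAntidiag]

/-- Cauchy's identity, in the form of an expansion of the Cauchy kernel into alternants. -/
theorem vandermondeProd_mul_coeff_cauchyKernel {n : ℕ} {α : Φ → Fin k → ℕ}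
    (hα : ∑ φ, ∑ i, α φ i = n + Fintype.card Φ * ∑ i : Fin k, (i : ℕ)) :
    vandermondeProd Φ k R * coeff (exponentVec α)
      (vandermondeProd Φ k (MvPolynomial (Φ × Fin k) R) *
        completeHomogeneous (fun s : Φ × Fin k × Fin k ↦ X (s.1, s.2.1) * C (X (s.1, s.2.2))) n) =
    alternantProd R α := by
  let y (φ : Φ) (r : Fin k) : MvPolynomial (Φ × Fin k) R := X (φ, r)
  have hcoeff := coeff_vandermondeProd_mul (fun s ↦ completeHomogeneous (y s.1)) _
    (coeff_completeHomogeneous_X_mul_C y) hα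
  rw [hcoeff, mul_comm, vandermondeProd, alternantProd, alternantProd, ← Finset.prod_mul_distrib]
  exact Finset.prod_congr rfl fun φ _ ↦ det_jacobiTrudiMatrix_mul_det_powerMatrix (y φ) (α φ)

end Alternants

/-! ### Frobenius characters of wreath products -/

section FrobeniusCharacters

open MvPolynomial

variable {N : Type} [Group N] [Fintype N] {k n : ℕ}

/-- The graded character of the `n`-th tensor power of `multSumRep N k`: its coefficients are the
characters of the parts on which the multiplicities of the constituents are prescribed. -/
noncomputable def gradedCharacter (k : ℕ) (g : Wreath N n) : MvPolynomial (Irr N × Fin k) ℂ :=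
  weightedTrace (multSumRep N k) (fun b ↦ X (blockLabel b)) g

/-- The analogue for `N ≀ S_n` of the virtual character given by Frobenius' formula: a
coefficient of the product of the graded character with Vandermonde determinants. -/
noncomputable def frobeniusChar (α : Irr N → Fin k → ℕ) (g : Wreath N n) : ℂ :=
  coeff (exponentVec α) (vandermondeProd (Irr N) k ℂ * gradedCharacter k g)

lemma frobeniusChar_mem_virtualChars (α : Irr N → Fin k → ℕ) :
    (frobeniusChar α : Wreath N n → ℂ) ∈ virtualChars (Wreath N n) := by
  have h := coeff_mul_weightedTrace_mem_virtualChars (n := n) (multSumRep N k)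
    multSumRep_apply_eq_zero (vandermondeProd (Irr N) k ℤ) (exponentVec α)
  rwa [vandermondeProd, map_alternantProd] at h

lemma sum_map_C_gradedCharacter_mul_C_gradedCharacter_inv :
    ∑ g : Wreath N n, map C (gradedCharacter k g) * C (gradedCharacter k g⁻¹) =
      Nat.card (Wreath N n) * completeHomogeneous
        (fun s : Irr N × Fin k × Fin k ↦ (X (s.1, s.2.1) * C (X (s.1, s.2.2)) :
          MvPolynomial (Irr N × Fin k) (MvPolynomial (Irr N × Fin k) ℂ))) n := by
  have hkernel := sum_weightedTrace_multSumRep (N := N) (n := n)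
    (X : Irr N × Fin k → MvPolynomial (Irr N × Fin k) (MvPolynomial (Irr N × Fin k) ℂ))
    (fun s ↦ C (X s))
  rw [← hkernel]
  refine Finset.sum_congr rfl fun g _ ↦ ?_
  congr 1
  · simp only [gradedCharacter, weightedTrace, map_sum, map_mul, map_prod, map_X]
    simp [algebraMap_eq, IsScalarTower.algebraMap_apply ℂ (MvPolynomial (Irr N × Fin k) ℂ)]
  · simp [gradedCharacter, weightedTrace, map_sum, map_mul, map_prod, algebraMap_eq,
      IsScalarTower.algebraMap_apply ℂ (MvPolynomial (Irr N × Fin k) ℂ)]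

lemma charPairing_frobeniusChar_eq_coeff (α β : Irr N → Fin k → ℕ) :
    charPairing (Wreath N n) (frobeniusChar α) (frobeniusChar β) =
      coeff (exponentVec β) (vandermondeProd (Irr N) k ℂ * coeff (exponentVec α)
        (vandermondeProd (Irr N) k (MvPolynomial (Irr N × Fin k) ℂ) *
          ∑ g : Wreath N n, map C (gradedCharacter k g) * C (gradedCharacter k g⁻¹))) := by
  have hcoeff (P Q : MvPolynomial (Irr N × Fin k) ℂ) : coeff (exponentVec α)
      (vandermondeProd (Irr N) k (MvPolynomial (Irr N × Fin k) ℂ) * (map C P * C Q)) =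
      C (coeff (exponentVec α) (vandermondeProd (Irr N) k ℂ * P)) * Q := by
    rw [vandermondeProd, ← map_alternantProd C, ← mul_assoc, ← map_mul, mul_comm, coeff_C_mul,
      coeff_map, mul_comm]
    rfl
  rw [charPairing_apply, Finset.mul_sum, coeff_sum, Finset.mul_sum, coeff_sum]
  simp only [hcoeff]
  refine Finset.sum_congr rfl fun g _ ↦ ?_
  rw [mul_left_comm, coeff_C_mul]
  rfl

open scoped Classical in
theorem charPairing_frobeniusChar {α β : Irr N → Fin k → ℕ}
    (hα : α ∈ betaFamilies (Irr N) k n) (hβ : ∀ φ, StrictMono (β φ)) :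
    charPairing (Wreath N n) (frobeniusChar α) (frobeniusChar β) =
      if α = β then (Nat.card (Wreath N n) : ℂ) else 0 := by
  rw [charPairing_frobeniusChar_eq_coeff, sum_map_C_gradedCharacter_mul_C_gradedCharacter_inv,
    mul_left_comm, ← map_natCast C, coeff_C_mul, mul_left_comm,
    vandermondeProd_mul_coeff_cauchyKernel hα.2, ← map_natCast C, coeff_C_mul,
    coeff_alternantProd hα.1 hβ, mul_ite, mul_one, mul_zero]

end FrobeniusCharacters

/-! ### Degrees -/

section Degrees

open MvPolynomial

lemma det_jacobiTrudiMatrix_pow_div_factorial {k : ℕ} (a : Fin k → ℕ) (d : ℂ) :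
    (jacobiTrudiMatrix (fun _ m ↦ d ^ m / (m.factorial : ℂ)) a).det *
      (d ^ (∑ i : Fin k, (i : ℕ)) * ∏ i, ((a i).factorial : ℂ)) =
    d ^ (∑ i, a i) * ∏ i, ∏ j ∈ Finset.Ioi i, ((a j : ℂ) - a i) := by
  -- Multiplied by `a i !`, the rows become falling factorials, which are monic polynomials.
  rw [← Matrix.det_vandermonde (fun i ↦ (a i : ℂ)),
    Matrix.det_eval_matrixOfPolynomials_eq_det_vandermonde (fun i ↦ (a i : ℂ))
      (fun i ↦ descPochhammer ℂ i) (fun i ↦ descPochhammer_natDegree ℂ i)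
      (fun i ↦ monic_descPochhammer ℂ i),
    ← Finset.prod_pow_eq_pow_sum, ← Finset.prod_pow_eq_pow_sum, ← Matrix.det_mul_column, mul_comm,
    mul_comm (∏ i : Fin k, d ^ (i : ℕ)), mul_assoc, ← Matrix.det_mul_row, ← Matrix.det_mul_column]
  congr 1
  ext i j
  simp only [Matrix.of_apply, descPochhammer_eval_eq_descFactorial, jacobiTrudiMatrix]
  split_ifs with h
  · have hfact : ((a i - j).factorial : ℂ) ≠ 0 := Nat.cast_ne_zero.mpr (Nat.factorial_ne_zero _)
    rw [← Nat.factorial_mul_descFactorial h, ← pow_mul_pow_sub d h]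
    push_cast
    field_simp
  · simp [Nat.descFactorial_of_lt (not_le.mp h)]

variable {N : Type} [Group N] [Fintype N] {k n : ℕ}

lemma gradedCharacter_one :
    gradedCharacter k (1 : Wreath N n) = (∑ s : Irr N × Fin k, (irrDeg s.1 : ℂ) • X s) ^ n := by
  rw [gradedCharacter, weightedTrace_one, Fintype.sum_prod_type, Fintype.sum_prod_type,
    Fintype.sum_sigma]
  simp [blockLabel, Finset.mul_sum, Nat.cast_smul_eq_nsmul]

lemma coeff_gradedCharacter_one (γ : Irr N × Fin k →₀ ℕ) :
    coeff γ (gradedCharacter k (1 : Wreath N n)) = (n.factorial : ℂ) *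
      if ∑ s, γ s = n then ∏ s, (irrDeg s.1 : ℂ) ^ γ s / ((γ s).factorial : ℂ) else 0 := by
  rw [gradedCharacter_one, coeff_linearCombination_X_pow_of_fintype,
    Finsupp.sum_fintype _ _ (by simp), Finsupp.prod_fintype _ _ (by simp)]
  split_ifs with h
  · have hmult : (∏ s, ((γ s).factorial : ℂ)) * γ.multinomial = n.factorial := by
      have hspec := Nat.multinomial_spec Finset.univ γ
      rw [h] at hspec
      rw [← hspec, Finsupp.multinomial_eq_of_support_subset (Finset.subset_univ γ.support)]
      push_cast
      rfl
    have hfact : ∏ s, ((γ s).factorial : ℂ) ≠ 0 :=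
      Finset.prod_ne_zero_iff.mpr fun s _ ↦ Nat.cast_ne_zero.mpr (Nat.factorial_ne_zero _)
    rw [Finset.prod_div_distrib, ← hmult]
    field_simp
  · simp

theorem frobeniusChar_one {α : Irr N → Fin k → ℕ} (hα : ∑ φ, ∑ i, α φ i =
      n + Fintype.card (Irr N) * ∑ i : Fin k, (i : ℕ)) :
    frobeniusChar α (1 : Wreath N n) * ∏ φ : Irr N,
        ((irrDeg φ : ℂ) ^ (∑ i : Fin k, (i : ℕ)) * ∏ i, ((α φ i).factorial : ℂ)) =
      n.factorial * ∏ φ : Irr N, ((irrDeg φ : ℂ) ^ (∑ i, α φ i) *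
        ∏ i, ∏ j ∈ Finset.Ioi i, ((α φ j : ℂ) - α φ i)) := by
  classical
  let c (s : Irr N × Fin k) (m : ℕ) : ℂ := (irrDeg s.1 : ℂ) ^ m / (m.factorial : ℂ)
  let P : MvPolynomial (Irr N × Fin k) ℂ :=
    C (n.factorial : ℂ)⁻¹ * gradedCharacter k (1 : Wreath N n)
  have hn : (n.factorial : ℂ) ≠ 0 := Nat.cast_ne_zero.mpr (Nat.factorial_ne_zero _)
  have hP (γ) : coeff γ P = if ∑ s, γ s = n then ∏ s, c s (γ s) else 0 := by
    rw [coeff_C_mul, coeff_gradedCharacter_one, inv_mul_cancel_left₀ hn]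
  have hchar : frobeniusChar α (1 : Wreath N n) =
      n.factorial * coeff (exponentVec α) (vandermondeProd (Irr N) k ℂ * P) := by
    rw [frobeniusChar, mul_left_comm, coeff_C_mul, mul_inv_cancel_left₀ hn]
  rw [hchar, coeff_vandermondeProd_mul c P hP hα, mul_assoc, ← Finset.prod_mul_distrib]
  exact congrArg _ (Finset.prod_congr rfl fun φ _ ↦
    det_jacobiTrudiMatrix_pow_div_factorial (α φ) (irrDeg φ))

end Degrees

/-! ### Completeness of the Frobenius characters -/

section RowAlternating

open MvPolynomial

variable {Φ : Type*} [Fintype Φ] {k : ℕ} {R : Type*} [CommRing R]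

/-- A polynomial in the variables `X (φ, i)` is row-alternating if it is alternating in the
variables `X (φ, ·)` for each `φ`. -/
def IsRowAlternating (P : MvPolynomial (Φ × Fin k) R) : Prop :=
  ∀ τ : Φ → Equiv.Perm (Fin k), rename (Equiv.prodCongrRight τ) P =
    (∏ φ, ((Equiv.Perm.sign (τ φ) : ℤ) : R)) • P

lemma isRowAlternating_alternantProd (α : Φ → Fin k → ℕ) :
    IsRowAlternating (alternantProd R α) := fun τ ↦ by
  rw [alternantProd, map_prod, smul_eq_C_mul, map_prod, ← Finset.prod_mul_distrib]
  refine Finset.prod_congr rfl fun φ _ ↦ ?_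
  rw [map_intCast (C : R →+* MvPolynomial (Φ × Fin k) R), ← Matrix.det_permute', AlgHom.map_det]
  congr 1
  ext i r
  simp [powerMatrix]

lemma IsRowAlternating.mul {P Q : MvPolynomial (Φ × Fin k) R} (hP : IsRowAlternating P)
    (hQ : ∀ τ : Φ → Equiv.Perm (Fin k), rename (Equiv.prodCongrRight τ) Q = Q) :
    IsRowAlternating (P * Q) := fun τ ↦ by
  rw [map_mul, hP τ, hQ τ, smul_mul_assoc]

lemma IsRowAlternating.coeff_exponentVec_comp {P : MvPolynomial (Φ × Fin k) R}
    (hP : IsRowAlternating P) (τ : Φ → Equiv.Perm (Fin k)) (α : Φ → Fin k → ℕ) :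
    coeff (exponentVec fun φ ↦ α φ ∘ τ φ) P =
      (∏ φ, ((Equiv.Perm.sign (τ φ) : ℤ) : R)) * coeff (exponentVec α) P := by
  let e : Equiv.Perm (Φ × Fin k) := Equiv.prodCongrRight τ
  have hmap : (exponentVec fun φ ↦ α φ ∘ τ φ).mapDomain e = exponentVec α := by
    ext s
    obtain ⟨s, rfl⟩ := e.surjective s
    rw [Finsupp.mapDomain_apply e.injective]
    rfl
  rw [← coeff_rename_mapDomain e e.injective, hmap, hP τ, coeff_smul, smul_eq_mul]

variable [CharZero R] [NoZeroDivisors R]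

lemma IsRowAlternating.coeff_eq_zero_of_not_injective {P : MvPolynomial (Φ × Fin k) R}
    (hP : IsRowAlternating P) {α : Φ → Fin k → ℕ} {φ : Φ} (hφ : ¬ Function.Injective (α φ)) :
    coeff (exponentVec α) P = 0 := by
  classical
  obtain ⟨i, j, hij, hne⟩ : ∃ i j, α φ i = α φ j ∧ i ≠ j := by
    simpa [Function.Injective] using hφ
  let τ : Φ → Equiv.Perm (Fin k) := Pi.mulSingle φ (Equiv.swap i j)
  have hα : (fun χ ↦ α χ ∘ τ χ) = α := by
    ext χ r
    rcases eq_or_ne χ φ with rfl | hχ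
    · simp only [τ, Pi.mulSingle_eq_same, Function.comp_apply, Equiv.swap_apply_def]
      split_ifs with h h <;> simp [h, hij]
    · simp [τ, Pi.mulSingle_eq_of_ne hχ]
  have hsign : ∏ χ, ((Equiv.Perm.sign (τ χ) : ℤ) : R) = -1 := by
    rw [Finset.prod_eq_single φ (fun χ _ hχ ↦ by simp [τ, Pi.mulSingle_eq_of_ne hχ]) (by simp)]
    simp [τ, Equiv.Perm.sign_swap hne]
  have hcoeff := hP.coeff_exponentVec_comp τ α
  rw [hα, hsign, neg_one_mul] at hcoeff
  exact self_eq_neg.mp hcoeff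

lemma IsRowAlternating.eq_zero {P : MvPolynomial (Φ × Fin k) R} (hP : IsRowAlternating P)
    (h : ∀ α : Φ → Fin k → ℕ, (∀ φ, StrictMono (α φ)) → coeff (exponentVec α) P = 0) :
    P = 0 := by
  ext γ
  obtain ⟨α, rfl⟩ : ∃ α, exponentVec α = γ := ⟨fun φ i ↦ γ (φ, i), by ext s; rfl⟩
  rw [coeff_zero]
  by_cases hα : ∀ φ, Function.Injective (α φ)
  · have hsort := hP.coeff_exponentVec_comp (fun φ ↦ Tuple.sort (α φ)) α
    rw [h _ fun φ ↦ (Tuple.monotone_sort (α φ)).strictMono_of_injective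
      ((hα φ).comp (Tuple.sort (α φ)).injective), ← Int.cast_prod] at hsort
    refine (mul_eq_zero.mp hsort.symm).resolve_left (Int.cast_ne_zero.mpr ?_)
    exact Finset.prod_ne_zero_iff.mpr fun φ _ ↦ Units.ne_zero _
  · obtain ⟨φ, hφ⟩ := not_forall.mp hα
    exact hP.coeff_eq_zero_of_not_injective hφ

end RowAlternating

section Completeness

open MvPolynomial

lemma isHomogeneous_vandermondeProd (Φ : Type*) [Fintype Φ] (k : ℕ) (R : Type*) [CommRing R] :
    (vandermondeProd Φ k R).IsHomogeneous (Fintype.card Φ * ∑ i : Fin k, (i : ℕ)) := by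
  classical
  rw [vandermondeProd, alternantProd_eq_sum]
  refine IsHomogeneous.sum _ _ _ fun w _ ↦ isHomogeneous_monomial _ ?_
  rw [degree_exponentVec,
    Finset.sum_congr rfl fun φ _ ↦ Equiv.sum_comp (w φ) fun i : Fin k ↦ (i : ℕ)]
  simp

lemma vandermondeProd_ne_zero (Φ : Type*) [Fintype Φ] (k : ℕ) (R : Type*) [CommRing R]
    [Nontrivial R] : vandermondeProd Φ k R ≠ 0 := fun h ↦ by
  classical
  have hcoeff := coeff_alternantProd (R := R) (Φ := Φ) (α := fun _ ↦ (Fin.val : Fin k → ℕ))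
    (fun _ ↦ Fin.val_strictMono) fun _ ↦ Fin.val_strictMono
  rw [← vandermondeProd, h] at hcoeff
  simp at hcoeff

variable {N : Type} [Group N] [Fintype N] {k n : ℕ}

lemma rename_gradedCharacter (τ : Irr N → Equiv.Perm (Fin k)) (g : Wreath N n) :
    rename (Equiv.prodCongrRight τ) (gradedCharacter k g) = gradedCharacter k g := by
  let e : Equiv.Perm (IrrIndex N × Fin k) := Equiv.prodCongrRight fun u ↦ τ u.1
  have he (t b b') : multSumRep N k t (e b) (e b') = multSumRep N k t b b' := by
    rw [multSumRep_apply, multSumRep_apply]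
    by_cases hb : b.1.1 = b'.1.1
    · simp [e, hb]
    · simp [e, sumIrrRep_apply_ne t hb]
  rw [gradedCharacter, map_weightedTrace,
    ← weightedTrace_comp_equiv _ e he fun b ↦ X (blockLabel b)]
  congr 1
  ext b : 1
  simp [e, blockLabel]

lemma isHomogeneous_gradedCharacter (g : Wreath N n) :
    (gradedCharacter k g).IsHomogeneous n :=
  isHomogeneous_weightedTrace _ blockLabel g

lemma charPairing_frobeniusChar_eq_coeff_sum (α : Irr N → Fin k → ℕ) (ψ : Wreath N n → ℂ) :
    charPairing (Wreath N n) (frobeniusChar α) ψ = coeff (exponentVec α)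
      (vandermondeProd (Irr N) k ℂ * ∑ g : Wreath N n, ψ g⁻¹ • gradedCharacter k g) := by
  rw [Finset.mul_sum, coeff_sum, charPairing_apply]
  refine Finset.sum_congr rfl fun g _ ↦ ?_
  rw [mul_smul_comm, coeff_smul, smul_eq_mul, mul_comm]
  rfl

lemma sum_smul_gradedCharacter_eq_zero {ψ : Wreath N n → ℂ}
    (h : ∀ α ∈ betaFamilies (Irr N) k n, charPairing (Wreath N n) (frobeniusChar α) ψ = 0) :
    ∑ g : Wreath N n, ψ g⁻¹ • gradedCharacter k g = 0 := by
  have halt : IsRowAlternating (vandermondeProd (Irr N) k ℂ *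
      ∑ g : Wreath N n, ψ g⁻¹ • gradedCharacter k g) :=
    (isRowAlternating_alternantProd _).mul fun τ ↦ by
      simp only [map_sum, map_smul, rename_gradedCharacter]
  have hhom : (vandermondeProd (Irr N) k ℂ *
      ∑ g : Wreath N n, ψ g⁻¹ • gradedCharacter k g).IsHomogeneous
        (Fintype.card (Irr N) * ∑ i : Fin k, (i : ℕ) + n) :=
    (isHomogeneous_vandermondeProd _ _ _).mul <| IsHomogeneous.sum _ _ _ fun g _ ↦ by
      rw [smul_eq_C_mul]
      exact (isHomogeneous_gradedCharacter g).C_mul _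
  refine (mul_eq_zero.mp (halt.eq_zero fun α hα ↦ ?_)).resolve_left
    (vandermondeProd_ne_zero _ _ _)
  by_contra hcoeff
  have hdeg := not_imp_comm.mp hhom.coeff_eq_zero hcoeff
  rw [← charPairing_frobeniusChar_eq_coeff_sum] at hcoeff
  exact hcoeff <| h α ⟨hα, by rw [← degree_exponentVec, hdeg, add_comm]⟩

lemma sum_irrDeg_mul_tensorPowerRep {i : Fin n → Fin k} (hi : Function.Injective i)
    (g : Wreath N n) [Decidable (g = 1)] :
    ∑ u : Fin n → IrrIndex N, (∏ j, (irrDeg (u j).1 : ℂ)) *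
        tensorPowerRep (multSumRep N k) n g (fun j ↦ (u j, i j)) (fun j ↦ (u j, i j)) =
      if g = 1 then (Nat.card N : ℂ) ^ n else 0 := by
  obtain ⟨f, σ⟩ := g
  simp only [tensorPowerRep_apply, multSumRep_apply, hi.eq_iff, ← Finset.prod_mul_distrib]
  by_cases hσ : σ = 1
  · subst hσ
    have hprod := Finset.prod_univ_sum (fun _ : Fin n ↦ (Finset.univ : Finset (IrrIndex N)))
      fun j u ↦ (irrDeg u.1 : ℂ) * sumIrrRep N (f j) u u
    simp only [inv_one, Equiv.Perm.coe_one, id_eq, if_true]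
    rw [← Fintype.piFinset_univ, ← hprod]
    have hf : (⟨f, 1⟩ : Wreath N n) = 1 ↔ ∀ j, f j = 1 := by
      simp [SemidirectProduct.ext_iff, funext_iff]
    simp only [sum_irrDeg_mul_sumIrrRep_diag]
    classical
    rw [Finset.prod_ite_zero]
    split_ifs <;> simp_all
  · obtain ⟨j, hj⟩ : ∃ j, j ≠ σ⁻¹ j := by
      by_contra! h
      exact hσ (inv_eq_one.mp (Equiv.ext fun j ↦ (h j).symm))
    rw [if_neg fun h ↦ hσ (congrArg SemidirectProduct.right h)]
    refine Finset.sum_eq_zero fun u _ ↦ Finset.prod_eq_zero (Finset.mem_univ j) ?_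
    rw [if_neg hj, mul_zero]

lemma content_eq_content_id_iff {i : Fin n → Fin n} :
    content i = content id ↔ Function.Injective i := by
  constructor
  · intro h
    refine Finite.injective_iff_surjective.mpr fun r ↦ ?_
    have hr := DFunLike.congr_fun h r
    simp only [content_apply, id_eq, Fintype.card_unique] at hr
    obtain ⟨⟨j, hj⟩⟩ := Fintype.card_pos_iff.mp (hr ▸ one_pos)
    exact ⟨j, hj⟩
  · exact fun h ↦ content_comp_perm id (Equiv.ofBijective i (Finite.injective_iff_bijective.mp h))

open scoped Classical in
lemma coeff_content_id_aeval_gradedCharacter (g : Wreath N n) :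
    coeff (content id) (aeval (fun s ↦ (C (irrDeg s.1 : ℂ) * X s.2 : MvPolynomial (Fin n) ℂ))
        (gradedCharacter n g)) =
      ({i | Function.Injective i} : Finset (Fin n → Fin n)).card *
        if g = 1 then (Nat.card N : ℂ) ^ n else 0 := by
  have hterm (b : Fin n → IrrIndex N × Fin n) : coeff (content id)
      ((∏ j, (C (irrDeg (b j).1.1 : ℂ) * X (b j).2 : MvPolynomial (Fin n) ℂ)) *
        algebraMap ℂ _ (tensorPowerRep (multSumRep N n) n g b b)) =
      if Function.Injective fun j ↦ (b j).2 then (∏ j, (irrDeg (b j).1.1 : ℂ)) *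
        tensorPowerRep (multSumRep N n) n g b b else 0 := by
    rw [Finset.prod_mul_distrib, prod_X_eq_monomial_content, ← map_prod, algebraMap_eq, mul_comm,
      C_mul_monomial, C_mul_monomial, coeff_monomial]
    simp only [content_eq_content_id_iff, mul_one,
      mul_comm (tensorPowerRep (multSumRep N n) n g b b)]
  rw [gradedCharacter, map_weightedTrace, weightedTrace, coeff_sum]
  simp only [Function.comp_apply, aeval_X, blockLabel, hterm]
  rw [← (Equiv.arrowProdEquivProdArrow _ _ _).symm.sum_comp, Fintype.sum_prod_type_right,
    Finset.card_filter, Nat.cast_sum, Finset.sum_mul]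
  refine Finset.sum_congr rfl fun i _ ↦ ?_
  change ∑ u : Fin n → IrrIndex N, (if Function.Injective i then _ else _) = _
  by_cases hi : Function.Injective i
  · simp only [if_pos hi, Nat.cast_one, one_mul]
    exact sum_irrDeg_mul_tensorPowerRep hi g
  · simp only [if_neg hi, Finset.sum_const_zero, Nat.cast_zero, zero_mul]

lemma sum_smul_gradedCharacter_ne_zero {ψ : Wreath N n → ℂ} (hψ : ψ 1 ≠ 0) :
    ∑ g : Wreath N n, ψ g⁻¹ • gradedCharacter n g ≠ 0 := fun h ↦ by
  classical
  have hcoeff := congrArg (fun P ↦ coeff (content id)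
    (aeval (fun s ↦ (C (irrDeg s.1 : ℂ) * X s.2 : MvPolynomial (Fin n) ℂ)) P)) h
  simp only [map_sum, map_smul, coeff_sum, coeff_smul, coeff_content_id_aeval_gradedCharacter,
    smul_eq_mul, mul_ite, mul_zero, Finset.sum_ite_eq', Finset.mem_univ, if_true, inv_one,
    map_zero, coeff_zero] at hcoeff
  have hcard : ({i | Function.Injective i} : Finset (Fin n → Fin n)).card ≠ 0 :=
    Finset.card_ne_zero_of_mem (a := id) (by simp [Function.injective_id])
  exact mul_ne_zero hψ (mul_ne_zero (Nat.cast_ne_zero.mpr hcard)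
    (pow_ne_zero _ (Nat.cast_ne_zero.mpr Nat.card_pos.ne'))) hcoeff

theorem exists_charPairing_frobeniusChar_ne_zero {ψ : Wreath N n → ℂ} (hψ : ψ 1 ≠ 0) :
    ∃ α ∈ betaFamilies (Irr N) n n, charPairing (Wreath N n) (frobeniusChar α) ψ ≠ 0 := by
  by_contra! h
  exact sum_smul_gradedCharacter_ne_zero hψ (sum_smul_gradedCharacter_eq_zero h)

end Completeness

/-! ### Beta-numbers and hook lengths -/

section BetaNumber

lemma lt_rowLen_iff_lt_colLen (Y : YoungDiagram) (i j : ℕ) : j < Y.rowLen i ↔ i < Y.colLen j := by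
  rw [← YoungDiagram.mem_iff_lt_rowLen, ← YoungDiagram.mem_iff_lt_colLen]

lemma colLen_zero_le_card (Y : YoungDiagram) : Y.colLen 0 ≤ Y.card := by
  rw [YoungDiagram.colLen_eq_card]
  exact Finset.card_le_card (Finset.filter_subset _ _)

lemma rowLen_eq_zero_of_colLen_zero_le {Y : YoungDiagram} {i : ℕ} (hi : Y.colLen 0 ≤ i) :
    Y.rowLen i = 0 := by
  have := lt_rowLen_iff_lt_colLen Y i 0
  lia

lemma card_eq_zero_iff_eq_bot (Y : YoungDiagram) : Y.card = 0 ↔ Y = ⊥ := by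
  rw [YoungDiagram.ext_iff, YoungDiagram.cells_bot]
  exact Finset.card_eq_zero

@[to_additive]
lemma prod_cells_eq_prod_rows {M : Type*} [CommMonoid M] {k : ℕ} {Y : YoungDiagram}
    (hY : Y.colLen 0 ≤ k) (f : ℕ → ℕ → M) :
    ∏ c ∈ Y.cells, f c.1 c.2 = ∏ i : Fin k, ∏ j ∈ Finset.range (Y.rowLen i), f i j := by
  rw [Fin.prod_univ_eq_prod_range fun i ↦ ∏ j ∈ Finset.range (Y.rowLen i), f i j]
  refine Finset.prod_finset_product' _ _ _ fun c ↦ ?_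
  rw [YoungDiagram.mem_cells, YoungDiagram.mem_iff_lt_rowLen, Finset.mem_range, Finset.mem_range]
  refine ⟨fun hc ↦ ⟨?_, hc⟩, And.right⟩
  by_contra hk
  rw [rowLen_eq_zero_of_colLen_zero_le (by lia)] at hc
  exact absurd hc (Nat.not_lt_zero _)

/-- The beta-numbers of a Young diagram `Y`, regarded as having `k` rows: its row lengths, listed
in increasing order, plus the staircase `0, 1, …, k - 1`. -/
def betaNumber (k : ℕ) (Y : YoungDiagram) (i : Fin k) : ℕ :=
  Y.rowLen i.rev + i

lemma betaNumber_strictMono (k : ℕ) (Y : YoungDiagram) : StrictMono (betaNumber k Y) :=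
  fun _ _ hij ↦ Nat.add_lt_add_of_le_of_lt (Y.rowLen_anti _ _ (Fin.rev_le_rev.2 hij.le)) hij

lemma sum_betaNumber {k : ℕ} {Y : YoungDiagram} (hY : Y.colLen 0 ≤ k) :
    ∑ i, betaNumber k Y i = Y.card + ∑ i : Fin k, (i : ℕ) := by
  have hcard : Y.card = ∑ i : Fin k, Y.rowLen i := by
    simpa using sum_cells_eq_sum_rows hY fun _ _ ↦ (1 : ℕ)
  simp only [betaNumber]
  rw [Finset.sum_add_distrib, hcard, ← Equiv.sum_comp Fin.revPerm fun i : Fin k ↦ Y.rowLen i]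
  simp only [Fin.revPerm_apply]

lemma betaNumber_injOn (k : ℕ) :
    Set.InjOn (betaNumber k) {Y : YoungDiagram | Y.colLen 0 ≤ k} := by
  intro Y hY Z hZ h
  have hrow (i : ℕ) : Y.rowLen i = Z.rowLen i := by
    rcases lt_or_ge i k with hi | hi
    · simpa [betaNumber] using congrFun h (Fin.rev ⟨i, hi⟩)
    · rw [rowLen_eq_zero_of_colLen_zero_le (le_trans hY hi),
        rowLen_eq_zero_of_colLen_zero_le (le_trans hZ hi)]
  ext ⟨i, j⟩
  simp only [YoungDiagram.mem_cells, YoungDiagram.mem_iff_lt_rowLen, hrow]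

lemma sub_le_sub_of_strictMono {k : ℕ} {β : Fin k → ℕ} (hβ : StrictMono β) {i j : Fin k}
    (hij : i ≤ j) : β i - i ≤ β j - j := by
  have h := Finset.card_le_card_of_injOn (s := Finset.Ico i j) (t := Finset.Ico (β i) (β j)) β
    (fun a ha ↦ by simpa [hβ.le_iff_le, hβ.lt_iff_lt] using ha) hβ.injective.injOn
  rw [Fin.card_Ico, Nat.card_Ico] at h
  have := hβ.monotone hij
  lia

lemma le_apply_of_strictMono {k : ℕ} {β : Fin k → ℕ} (hβ : StrictMono β) (i : Fin k) :
    (i : ℕ) ≤ β i := by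
  have h := Finset.card_le_card_of_injOn (s := Finset.Iio i) (t := Finset.range (β i)) β
    (fun a ha ↦ by simpa [hβ.lt_iff_lt] using ha) hβ.injective.injOn
  rwa [Fin.card_Iio, Finset.card_range] at h

lemma exists_betaNumber_eq {k : ℕ} {β : Fin k → ℕ} (hβ : StrictMono β) :
    ∃ Y : YoungDiagram, Y.colLen 0 ≤ k ∧ betaNumber k Y = β := by
  let rows : List ℕ := List.ofFn fun i : Fin k ↦ β i.rev - i.rev
  have hlen : rows.length = k := List.length_ofFn
  have hrows : rows.SortedGE := List.sortedGE_ofFn_iff.2 fun i j hij ↦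
    sub_le_sub_of_strictMono hβ (Fin.rev_le_rev.2 hij)
  refine ⟨YoungDiagram.ofRowLens rows hrows, ?_, funext fun i ↦ ?_⟩
  · by_contra! hk
    obtain ⟨h, -⟩ := YoungDiagram.mem_ofRowLens.1 (YoungDiagram.mem_iff_lt_colLen.2 hk)
    exact h.ne hlen.symm
  · have hrow : (YoungDiagram.ofRowLens rows hrows).rowLen i.rev = β i - i := by
      rw [YoungDiagram.rowLen_ofRowLens (i := ⟨i.rev, hlen.symm ▸ i.rev.2⟩)]
      simp only [rows, Fin.getElem_fin, List.getElem_ofFn, Fin.eta, Fin.rev_rev]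
    rw [betaNumber, hrow, Nat.sub_add_cancel (le_apply_of_strictMono hβ i)]

/-- The set of hook lengths of the cells in row `i`. -/
def rowHooks (Y : YoungDiagram) (i : ℕ) : Finset ℕ :=
  (Finset.range (Y.rowLen i)).image (hookLength Y i)

/-- The set of differences between the `i`-th beta-number and the smaller ones; it is the
complement of the hook lengths in the corresponding row, by `rowHooks_union_betaGaps`. -/
def betaGaps (k : ℕ) (Y : YoungDiagram) (i : Fin k) : Finset ℕ :=
  (Finset.Iio i).image fun j ↦ betaNumber k Y i - betaNumber k Y j

lemma injOn_hookLength (Y : YoungDiagram) (i : ℕ) :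
    Set.InjOn (hookLength Y i) (Finset.range (Y.rowLen i)) := by
  refine StrictAntiOn.injOn fun a _ b hb hab ↦ ?_
  have := (lt_rowLen_iff_lt_colLen Y i b).1 (Finset.mem_range.1 hb)
  have := Y.colLen_anti a b hab.le
  have := Finset.mem_range.1 hb
  simp only [hookLength]
  lia

lemma injOn_betaNumber_sub (k : ℕ) (Y : YoungDiagram) (i : Fin k) :
    Set.InjOn (fun j ↦ betaNumber k Y i - betaNumber k Y j) (Finset.Iio i) := by
  refine StrictAntiOn.injOn fun a _ b hb hab ↦ ?_
  have := betaNumber_strictMono k Y hab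
  have := betaNumber_strictMono k Y (Finset.mem_Iio.1 hb)
  lia

lemma disjoint_rowHooks_betaGaps (k : ℕ) (Y : YoungDiagram) (i : Fin k) :
    Disjoint (rowHooks Y i.rev) (betaGaps k Y i) := by
  simp only [Finset.disjoint_left, rowHooks, betaGaps, Finset.mem_image, Finset.mem_range,
    Finset.mem_Iio]
  rintro _ ⟨c, hc, rfl⟩ ⟨j, hj, heq⟩
  have hlt := betaNumber_strictMono k Y hj
  have hi := lt_rowLen_iff_lt_colLen Y i.rev c
  have hj' := lt_rowLen_iff_lt_colLen Y j.rev c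
  simp only [hookLength, betaNumber, Fin.val_rev] at *
  lia

lemma rowHooks_union_betaGaps {k : ℕ} {Y : YoungDiagram} (hY : Y.colLen 0 ≤ k) (i : Fin k) :
    rowHooks Y i.rev ∪ betaGaps k Y i = Finset.Icc 1 (betaNumber k Y i) := by
  refine Finset.eq_of_subset_of_card_le (Finset.union_subset ?_ ?_) ?_
  · simp only [rowHooks, Finset.image_subset_iff, Finset.mem_range, Finset.mem_Icc]
    intro c hc
    have := (lt_rowLen_iff_lt_colLen Y i.rev c).1 hc
    have := Y.colLen_anti 0 c c.zero_le
    simp only [hookLength, betaNumber, Fin.val_rev] at *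
    lia
  · simp only [betaGaps, Finset.image_subset_iff, Finset.mem_Iio, Finset.mem_Icc]
    intro j hj
    have := betaNumber_strictMono k Y hj
    lia
  · rw [Finset.card_union_of_disjoint (disjoint_rowHooks_betaGaps k Y i), rowHooks, betaGaps,
      Finset.card_image_of_injOn (injOn_hookLength Y _),
      Finset.card_image_of_injOn (injOn_betaNumber_sub k Y i)]
    simp [betaNumber]

lemma mem_rowHooks_iff {k : ℕ} {Y : YoungDiagram} (hY : Y.colLen 0 ≤ k) (i : Fin k) (x : ℕ) :
    x ∈ rowHooks Y i.rev ↔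
      0 < x ∧ x ≤ betaNumber k Y i ∧ ∀ j, betaNumber k Y i ≠ betaNumber k Y j + x := by
  have hgaps : x ∈ betaGaps k Y i ↔ 0 < x ∧ ∃ j, betaNumber k Y i = betaNumber k Y j + x := by
    simp only [betaGaps, Finset.mem_image, Finset.mem_Iio,
      ← (betaNumber_strictMono k Y).lt_iff_lt (b := i)]
    grind
  have hunion := Finset.ext_iff.1 (rowHooks_union_betaGaps hY i) x
  rw [Finset.mem_union, Finset.mem_Icc] at hunion
  have hdisj : x ∈ rowHooks Y i.rev → x ∉ betaGaps k Y i :=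
    fun h ↦ Finset.disjoint_left.1 (disjoint_rowHooks_betaGaps k Y i) h
  grind

lemma factorial_betaNumber {k : ℕ} {Y : YoungDiagram} (hY : Y.colLen 0 ≤ k) (i : Fin k) :
    (betaNumber k Y i).factorial = (∏ c ∈ Finset.range (Y.rowLen i.rev), hookLength Y i.rev c) *
      ∏ j ∈ Finset.Iio i, (betaNumber k Y i - betaNumber k Y j) := by
  rw [← Finset.prod_Ico_id_eq_factorial, Finset.Ico_add_one_right_eq_Icc,
    ← rowHooks_union_betaGaps hY, Finset.prod_union (disjoint_rowHooks_betaGaps k Y i), rowHooks,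
    betaGaps, Finset.prod_image (injOn_hookLength Y _),
    Finset.prod_image (injOn_betaNumber_sub k Y i)]

/-- The product of all hook lengths of a Young diagram, which is the denominator in the hook length
formula. -/
def hookProduct (Y : YoungDiagram) : ℕ :=
  ∏ c ∈ Y.cells, hookLength Y c.1 c.2

lemma hookLength_pos {Y : YoungDiagram} {c : ℕ × ℕ} (hc : c ∈ Y) : 0 < hookLength Y c.1 c.2 := by
  have := YoungDiagram.mem_iff_lt_rowLen.1 hc
  have := YoungDiagram.mem_iff_lt_colLen.1 hc
  simp only [hookLength]
  lia

lemma hookProduct_pos (Y : YoungDiagram) : 0 < hookProduct Y :=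
  Finset.prod_pos fun _ hc ↦ hookLength_pos ((Y.mem_cells _).1 hc)

lemma prod_factorial_betaNumber {R : Type*} [CommRing R] {k : ℕ} {Y : YoungDiagram}
    (hY : Y.colLen 0 ≤ k) :
    ∏ i, ((betaNumber k Y i).factorial : R) = hookProduct Y *
      ∏ i, ∏ j ∈ Finset.Ioi i, ((betaNumber k Y j : R) - betaNumber k Y i) := by
  have hgaps (i : Fin k) : ((∏ j ∈ Finset.Iio i, (betaNumber k Y i - betaNumber k Y j) : ℕ) : R) =
      ∏ j ∈ Finset.Iio i, ((betaNumber k Y i : R) - betaNumber k Y j) := by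
    rw [Nat.cast_prod]
    exact Finset.prod_congr rfl fun j hj ↦
      Nat.cast_sub (betaNumber_strictMono k Y (Finset.mem_Iio.1 hj)).le
  have hhooks : hookProduct Y =
      ∏ i : Fin k, ∏ c ∈ Finset.range (Y.rowLen i.rev), hookLength Y i.rev c := by
    rw [hookProduct, prod_cells_eq_prod_rows hY, ← Equiv.prod_comp Fin.revPerm]
    simp only [Fin.revPerm_apply]
  simp only [factorial_betaNumber hY, Nat.cast_mul, hgaps, Finset.prod_mul_distrib]
  rw [hhooks, Nat.cast_prod]
  exact congrArg _ (Finset.prod_comm' (by simp))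

lemma prod_betaNumber_sub_ne_zero {R : Type*} [CommRing R] [IsDomain R] [CharZero R]
    (k : ℕ) (Y : YoungDiagram) :
    ∏ i, ∏ j ∈ Finset.Ioi i, ((betaNumber k Y j : R) - betaNumber k Y i) ≠ 0 :=
  Finset.prod_ne_zero_iff.2 fun _ _ ↦ Finset.prod_ne_zero_iff.2 fun _ hj ↦
    sub_ne_zero.2 (Nat.cast_injective.ne (betaNumber_strictMono k Y (Finset.mem_Ioi.1 hj)).ne')

end BetaNumber

section Core

lemma isLCore_iff_forall_notMem_rowHooks {ℓ : ℕ} {Y : YoungDiagram} :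
    IsLCore ℓ Y ↔ ∀ i, ℓ ∉ rowHooks Y i := by
  simp [IsLCore, rowHooks, YoungDiagram.mem_iff_lt_rowLen]

-- The positions of the beta-numbers of a core are closed under moving down by `ℓ`.
lemma IsLCore.exists_betaNumber_eq_add_mul {ℓ k : ℕ} {Y : YoungDiagram} (hc : IsLCore ℓ Y)
    (hℓ : 0 < ℓ) (hY : Y.colLen 0 ≤ k) (i : Fin k) (m : ℕ) (hm : m * ℓ ≤ betaNumber k Y i) :
    ∃ j, betaNumber k Y i = betaNumber k Y j + m * ℓ := by
  induction m with
  | zero => exact ⟨i, by simp⟩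
  | succ m ih =>
    rw [add_one_mul] at hm ⊢
    obtain ⟨j, hj⟩ := ih (by lia)
    have hnot := isLCore_iff_forall_notMem_rowHooks.1 hc j.rev
    rw [mem_rowHooks_iff hY] at hnot
    push Not at hnot
    obtain ⟨j', hj'⟩ := hnot hℓ (by lia)
    exact ⟨j', by lia⟩

lemma IsLCore.not_dvd_hookLength {ℓ : ℕ} {Y : YoungDiagram} (hc : IsLCore ℓ Y) (hℓ : 0 < ℓ)
    {c : ℕ × ℕ} (hcY : c ∈ Y) : ¬ ℓ ∣ hookLength Y c.1 c.2 := by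
  rintro ⟨m, hm⟩
  have hrow : c.1 < Y.colLen 0 :=
    (YoungDiagram.mem_iff_lt_colLen.1 hcY).trans_le (Y.colLen_anti 0 c.2 c.2.zero_le)
  have hmem : hookLength Y c.1 c.2 ∈ rowHooks Y (Fin.rev (Fin.rev ⟨c.1, hrow⟩)) := by
    rw [Fin.rev_rev]
    exact Finset.mem_image_of_mem _ (Finset.mem_range.2 (YoungDiagram.mem_iff_lt_rowLen.1 hcY))
  rw [mem_rowHooks_iff le_rfl, hm, mul_comm] at hmem
  obtain ⟨-, hle, hne⟩ := hmem
  obtain ⟨j, hj⟩ := hc.exists_betaNumber_eq_add_mul hℓ le_rfl _ m hle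
  exact hne j hj

lemma isLCore_iff_not_dvd_hookProduct {ℓ : ℕ} (hℓ : ℓ.Prime) (Y : YoungDiagram) :
    IsLCore ℓ Y ↔ ¬ ℓ ∣ hookProduct Y := by
  rw [hookProduct, hℓ.prime.dvd_finsetProd_iff]
  push Not
  exact ⟨fun hc c hcY ↦ hc.not_dvd_hookLength hℓ.pos ((Y.mem_cells _).1 hcY),
    fun h c hcY heq ↦ h c hcY heq.symm.dvd⟩

lemma isLCore_bot (ℓ : ℕ) : IsLCore ℓ ⊥ := fun c hc ↦ by
  simp at hc

end Core

/-! ### The irreducible characters of the wreath product -/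

lemma irrDeg_eq_of_apply_one {G : Type} [Group G] [Fintype G] {χ : Irr G} {d : ℕ}
    (hd : χ.1 1 = d) : irrDeg χ = d := by
  rw [irr_apply_one] at hd
  exact_mod_cast hd

lemma isDefectZeroChar_iff_not_dvd_card_div_irrDeg {G : Type} [Group G] [Fintype G] {ℓ : ℕ}
    (χ : Irr G) : IsDefectZeroChar ℓ G χ ↔ ¬ ℓ ∣ Nat.card G / irrDeg χ := by
  refine ⟨fun ⟨_, d, hd, hdvd⟩ ↦ ?_, fun h ↦ ⟨χ.2, irrDeg χ, irr_apply_one χ, h⟩⟩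
  rwa [irrDeg_eq_of_apply_one hd]

lemma exists_int_apply_one_of_mem_virtualChars {G : Type} [Group G] [Finite G] {f : G → ℂ}
    (hf : f ∈ virtualChars G) : ∃ z : ℤ, f 1 = z := by
  obtain ⟨c, rfl⟩ := exists_int_eq_sum_of_mem_virtualChars hf
  cases nonempty_fintype G
  exact ⟨∑ χ, c χ * irrDeg χ, by simp [irr_apply_one]⟩

section DiagramFamilies

variable {Φ : Type*} [Fintype Φ] {w : Φ → YoungDiagram} {n : ℕ}

lemma colLen_zero_le_of_sum_card_eq (hw : ∑ φ, (w φ).card = n) (φ : Φ) :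
    (w φ).colLen 0 ≤ n :=
  (colLen_zero_le_card _).trans <| hw ▸ Finset.single_le_sum
    (f := fun φ ↦ (w φ).card) (fun _ _ ↦ Nat.zero_le _) (Finset.mem_univ φ)

lemma betaNumber_mem_betaFamilies_iff {k : ℕ} (hw : ∀ φ, (w φ).colLen 0 ≤ k) :
    (fun φ ↦ betaNumber k (w φ)) ∈ betaFamilies Φ k n ↔ ∑ φ, (w φ).card = n := by
  simp [betaFamilies, betaNumber_strictMono, sum_betaNumber (hw _), Finset.sum_add_distrib]

end DiagramFamilies

section WreathChar

variable {N : Type} [Group N] [Fintype N] {n : ℕ}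

/-- The irreducible character of `N ≀ S_n` labelled by a family `w` of partitions of total size
`n`, one for each irreducible character of `N`. -/
noncomputable def wreathChar (n : ℕ) (w : Irr N → YoungDiagram) : Wreath N n → ℂ :=
  frobeniusChar fun φ ↦ betaNumber n (w φ)

lemma wreathChar_one_mul_prod_hookProduct {w : Irr N → YoungDiagram}
    (hw : ∑ φ, (w φ).card = n) :
    wreathChar n w 1 * ∏ φ, (hookProduct (w φ) : ℂ) =
      n.factorial * ∏ φ, (irrDeg φ : ℂ) ^ (w φ).card := by
  have hrows := colLen_zero_le_of_sum_card_eq hw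
  have hone := frobeniusChar_one ((betaNumber_mem_betaFamilies_iff hrows).2 hw).2
  simp only [prod_factorial_betaNumber (hrows _), sum_betaNumber (hrows _), pow_add,
    Finset.prod_mul_distrib] at hone
  have hdeg : ∏ φ : Irr N, (irrDeg φ : ℂ) ^ (∑ i : Fin n, (i : ℕ)) ≠ 0 :=
    Finset.prod_ne_zero_iff.2 fun φ _ ↦ pow_ne_zero _ (Nat.cast_ne_zero.2 (irrDeg_ne_zero φ))
  have hdiff := Finset.prod_ne_zero_iff.2 fun φ (_ : φ ∈ Finset.univ) ↦
    prod_betaNumber_sub_ne_zero (R := ℂ) n (w φ)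
  refine mul_right_cancel₀ (mul_ne_zero hdeg hdiff) ?_
  rw [wreathChar]
  linear_combination hone

lemma exists_nat_wreathChar_one {w : Irr N → YoungDiagram} (hw : ∑ φ, (w φ).card = n) :
    ∃ d : ℕ, wreathChar n w 1 = d := by
  obtain ⟨z, hz⟩ := exists_int_apply_one_of_mem_virtualChars
    (frobeniusChar_mem_virtualChars (n := n) fun φ ↦ betaNumber n (w φ))
  have hone := wreathChar_one_mul_prod_hookProduct hw
  rw [wreathChar, hz] at hone
  have hpos : (0 : ℤ) < ∏ φ, (hookProduct (w φ) : ℤ) :=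
    Finset.prod_pos fun φ _ ↦ Int.natCast_pos.2 (hookProduct_pos _)
  have hz_nonneg : 0 ≤ z := by
    refine nonneg_of_mul_nonneg_left (b := ∏ φ, (hookProduct (w φ) : ℤ)) ?_ hpos
    have : z * ∏ φ, (hookProduct (w φ) : ℤ) = n.factorial * ∏ φ, (irrDeg φ : ℤ) ^ (w φ).card := by
      exact_mod_cast hone
    rw [this]
    positivity
  lift z to ℕ using hz_nonneg
  exact ⟨z, by exact_mod_cast hz⟩

lemma isIrrChar_wreathChar {w : Irr N → YoungDiagram} (hw : ∑ φ, (w φ).card = n) :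
    IsIrrChar (Wreath N n) (wreathChar n w) := by
  obtain ⟨d, hd⟩ := exists_nat_wreathChar_one hw
  refine isIrrChar_of_mem_virtualChars (frobeniusChar_mem_virtualChars _) ?_ hd
  rw [wreathChar, charPairing_frobeniusChar
    ((betaNumber_mem_betaFamilies_iff (colLen_zero_le_of_sum_card_eq hw)).2 hw)
    fun φ ↦ betaNumber_strictMono n (w φ), if_pos rfl]

lemma wreathChar_injOn :
    Set.InjOn (wreathChar n) {w : Irr N → YoungDiagram | ∑ φ, (w φ).card = n} := by
  intro v hv w hw h
  have hrows := colLen_zero_le_of_sum_card_eq hv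
  have hpair := (isIrrChar_wreathChar hv).charPairing_eq_ite (isIrrChar_wreathChar hw)
  rw [if_pos h, wreathChar, wreathChar, charPairing_frobeniusChar
    ((betaNumber_mem_betaFamilies_iff hrows).2 hv) fun φ ↦ betaNumber_strictMono n (w φ)] at hpair
  have hbeta := (ite_ne_right_iff.1 (hpair.trans_ne (Nat.cast_ne_zero.2 Nat.card_pos.ne'))).1
  exact funext fun φ ↦ betaNumber_injOn n (hrows φ) (colLen_zero_le_of_sum_card_eq hw φ)
    (congrFun hbeta φ)

lemma exists_wreathChar_eq {ψ : Wreath N n → ℂ} (hψ : IsIrrChar (Wreath N n) ψ) :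
    ∃ w : Irr N → YoungDiagram, ∑ φ, (w φ).card = n ∧ wreathChar n w = ψ := by
  obtain ⟨d, hd, hψ_one⟩ := hψ.exists_nat_apply_one
  obtain ⟨α, hα, hne⟩ := exists_charPairing_frobeniusChar_ne_zero
    (hψ_one.trans_ne (Nat.cast_ne_zero.2 hd.ne'))
  choose w hrows hbeta using fun φ ↦ exists_betaNumber_eq (hα.1 φ)
  obtain rfl : (fun φ ↦ betaNumber n (w φ)) = α := funext hbeta
  have hw := (betaNumber_mem_betaFamilies_iff hrows).1 hα
  have hpair := (isIrrChar_wreathChar hw).charPairing_eq_ite hψ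
  exact ⟨w, hw, (ite_ne_right_iff.1 (hpair.symm.trans_ne hne)).1⟩

/-- The classification of the irreducible characters of `N ≀ S_n` by families of partitions of
total size `n` indexed by `Irr N`. -/
noncomputable def irrWreathEquiv (N : Type) [Group N] [Fintype N] (n : ℕ) :
    {w : Irr N → YoungDiagram // ∑ φ, (w φ).card = n} ≃ Irr (Wreath N n) :=
  Equiv.ofBijective (fun w ↦ ⟨wreathChar n w, isIrrChar_wreathChar w.2⟩)
    ⟨fun v w h ↦ Subtype.ext (wreathChar_injOn v.2 w.2 (congrArg Subtype.val h)), fun ψ ↦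
      let ⟨w, hw, h⟩ := exists_wreathChar_eq ψ.2
      ⟨⟨w, hw⟩, Subtype.ext h⟩⟩

lemma irrDeg_irrWreathEquiv_mul_prod_hookProduct
    (w : {w : Irr N → YoungDiagram // ∑ φ, (w φ).card = n}) :
    irrDeg (irrWreathEquiv N n w) * ∏ φ, hookProduct (w.1 φ) =
      n.factorial * ∏ φ, irrDeg φ ^ (w.1 φ).card := by
  have hone := wreathChar_one_mul_prod_hookProduct w.2
  have hdeg : wreathChar n w.1 1 = irrDeg (irrWreathEquiv N n w) :=
    irr_apply_one (irrWreathEquiv N n w)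
  rw [hdeg] at hone
  exact_mod_cast hone

lemma card_wreath_div_irrDeg (w : {w : Irr N → YoungDiagram // ∑ φ, (w φ).card = n}) :
    Nat.card (Wreath N n) / irrDeg (irrWreathEquiv N n w) =
      ∏ φ, ((Nat.card N / irrDeg φ) ^ (w.1 φ).card * hookProduct (w.1 φ)) := by
  have hbase : (∏ φ : Irr N, (Nat.card N / irrDeg φ) ^ (w.1 φ).card) *
      ∏ φ, irrDeg φ ^ (w.1 φ).card = Nat.card N ^ n := by
    simp only [← Finset.prod_mul_distrib, ← mul_pow, Nat.div_mul_cancel (irrDeg_dvd_card _)]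
    rw [Finset.prod_pow_eq_pow_sum, w.2]
  refine Nat.div_eq_of_eq_mul_right (Nat.pos_of_ne_zero (irrDeg_ne_zero _)) ?_
  rw [card_wreath, ← hbase, Finset.prod_mul_distrib, mul_left_comm,
    irrDeg_irrWreathEquiv_mul_prod_hookProduct]
  ring

theorem isDefectZeroChar_irrWreathEquiv_iff {ℓ : ℕ} (hℓ : ℓ.Prime)
    (w : {w : Irr N → YoungDiagram // ∑ φ, (w φ).card = n}) :
    IsDefectZeroChar ℓ (Wreath N n) (irrWreathEquiv N n w) ↔
      ∀ φ, IsLCore ℓ (w.1 φ) ∧ (IsDefectZeroChar ℓ N φ ∨ w.1 φ = ⊥) := by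
  rw [isDefectZeroChar_iff_not_dvd_card_div_irrDeg, card_wreath_div_irrDeg,
    hℓ.prime.dvd_finsetProd_iff]
  push Not
  refine forall_congr' fun φ ↦ ?_
  have hpow : ℓ ∣ (Nat.card N / irrDeg φ) ^ (w.1 φ).card ↔
      ℓ ∣ Nat.card N / irrDeg φ ∧ w.1 φ ≠ ⊥ := by
    rcases eq_or_ne (w.1 φ) ⊥ with hbot | hbot
    · simp [hbot, (card_eq_zero_iff_eq_bot _).2, hℓ.ne_one]
    · simp [hbot, hℓ.prime.dvd_pow_iff_dvd (mt (card_eq_zero_iff_eq_bot _).1 hbot)]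
  simp only [Finset.mem_univ, true_imp_iff, hℓ.dvd_mul, hpow, not_or,
    isLCore_iff_not_dvd_hookProduct hℓ, isDefectZeroChar_iff_not_dvd_card_div_irrDeg]
  tauto

end WreathChar

section ExtendByBot

variable {ι κ α : Type*} [Bot α] {e : κ → ι} {q : α → Prop}

/-- Families indexed by `κ` correspond to the families indexed by `ι` that are `⊥` outside the
image of an injection `e : κ → ι`. -/
noncomputable def extendByBotEquiv (he : Function.Injective e) (hq : q ⊥) :
    (κ → {a // q a}) ≃ {w : ι → α // ∀ i, q (w i) ∧ (i ∈ Set.range e ∨ w i = ⊥)} where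
  toFun w := ⟨Function.extend e (fun j ↦ w j) ⊥, fun i ↦ by
    by_cases hi : i ∈ Set.range e
    · obtain ⟨j, rfl⟩ := hi
      rw [he.extend_apply]
      exact ⟨(w j).2, Or.inl ⟨j, rfl⟩⟩
    · rw [Function.extend_apply' _ _ _ hi]
      exact ⟨hq, Or.inr rfl⟩⟩
  invFun w j := ⟨w.1 (e j), (w.2 _).1⟩
  left_inv w := by
    ext j
    simp [he.extend_apply]
  right_inv w := by
    ext i
    by_cases hi : i ∈ Set.range e
    · obtain ⟨j, rfl⟩ := hi
      simp [he.extend_apply]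
    · simpa [Function.extend_apply' _ _ _ hi] using ((w.2 i).2.resolve_left hi).symm

lemma sum_extendByBotEquiv [Fintype ι] {M : Type*} [AddCommMonoid M] {f : α → M} (hf : f ⊥ = 0)
    (he : Function.Injective e) (hq : q ⊥) (w : κ → {a // q a}) :
    ∑ i, f ((extendByBotEquiv he hq w).1 i) = ∑ᶠ j, f (w j) := by
  have := Fintype.ofInjective e he
  rw [finsum_eq_sum_of_fintype]
  refine (Fintype.sum_of_injective e he _ _ (fun i hi ↦ ?_) fun j ↦ ?_).symm
  · simp [extendByBotEquiv, Function.extend_apply' _ _ _ hi, hf]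
  · simp [extendByBotEquiv, he.extend_apply]

end ExtendByBot

/-- For a wreath product `G = N ≀ S_n` and a prime `ℓ`, there is a bijection between
the `ℓ`-defect-zero irreducible characters of `G` and the functions
`w : Irr⁰(N) → {ℓ-cores}` with `∑_{φ ∈ Irr⁰(N)} |w(φ)| = n`. -/
theorem wreath_defect_zero_bijection (ℓ : ℕ) (hℓ : ℓ.Prime)
    (N : Type) [Group N] [Finite N] (n : ℕ) :
    Nonempty
      ({χ : Wreath N n → ℂ // IsDefectZeroChar ℓ (Wreath N n) χ} ≃
        {w : {χ : N → ℂ // IsDefectZeroChar ℓ N χ} →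
            {Y : YoungDiagram // IsLCore ℓ Y} //
          ∑ᶠ φ, ((w φ : YoungDiagram)).card = n}) := by
  have := Fintype.ofFinite N
  let incl : {χ : N → ℂ // IsDefectZeroChar ℓ N χ} → Irr N := Subtype.map id fun _ hχ ↦ hχ.1
  have hincl : Function.Injective incl := Subtype.map_injective _ Function.injective_id
  have hrange (φ : Irr N) : φ ∈ Set.range incl ↔ IsDefectZeroChar ℓ N φ :=
    ⟨fun ⟨χ, hχ⟩ ↦ hχ ▸ χ.2, fun hφ ↦ ⟨⟨φ, hφ⟩, rfl⟩⟩
  let extend := extendByBotEquiv hincl (isLCore_bot ℓ)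
  refine ⟨(Equiv.subtypeSubtypeEquivSubtype fun hχ ↦ hχ.1).symm.trans <|
    ((irrWreathEquiv N n).subtypeEquiv fun w ↦ ?_).symm.trans <|
    (Equiv.subtypeSubtypeEquivSubtypeInter _ _).trans <|
    (Equiv.subtypeEquivRight fun w ↦ and_comm).trans <|
    (Equiv.subtypeSubtypeEquivSubtypeInter _ _).symm.trans <|
    (extend.subtypeEquiv fun w ↦ ?_).symm⟩
  · simp only [hrange]
    exact (isDefectZeroChar_irrWreathEquiv_iff hℓ w).symm
  · exact (sum_extendByBotEquiv rfl hincl (isLCore_bot ℓ) w).congr_left.symm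
end
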